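/- arXiv:1510.00329 — 4 statements merged into one kernel-verified Lean document; each statement's English description precedes it below -/
import Mathlib

section
/- Let q, q̃ : [0,1] → ℂ be continuous, let h, h̃ ∈ ℂ, and fix δ ∈ (0, π/2). Let φ(·,λ), S(·,λ) be the solutions of −y″ + q y = λ y on [0,1] with φ(0,λ) = 1, φ′(0,λ) = −h and S(0,λ) = 0, S′(0,λ) = 1, and let φ̃(·,λ), S̃(·,λ) be the analogous solutions for q̃, h̃. Let M : ℂ → ℂ be an arbitrary function and set ψ(x,λ) := S(x,λ) + M(λ)φ(x,λ) and ψ̃(x,λ) := S̃(x,λ) + M(λ)φ̃(x,λ). Assume that for every x ∈ (0,1] there exist constants C > 0 and R > 0 such that for all ρ ∈ Λ_δ with |ρ| ≥ R one has |iρ e^{−iρx} ψ(x,ρ²) − 1| ≤ C/|ρ| and |e^{−iρx} ∂ψ/∂x(x,ρ²) − 1| ≤ C/|ρ|, and the same two bounds hold with ψ replaced by ψ̃. Then q(x) = q̃(x) for all x ∈ [0,1] and h = h̃. -/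
open MeasureTheory Set Complex

/-- `y` (with derivative `y'`) is a solution of `-y'' + q y = λ y` on the set `s`
(containing the basepoint `0`): `y`, `y'` are absolutely continuous on `s` and
`y'' = (q - λ) y` almost everywhere, encoded via integral representations. -/
def SLSol (q : ℝ → ℂ) (lam : ℂ) (y y' : ℝ → ℂ) (s : Set ℝ) : Prop :=
  (∀ x ∈ s, IntervalIntegrable y' volume 0 x) ∧
  (∀ x ∈ s, IntervalIntegrable (fun t => (q t - lam) * y t) volume 0 x) ∧
  (∀ x ∈ s, y x = y 0 + ∫ t in (0:ℝ)..x, y' t) ∧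
  (∀ x ∈ s, y' x = y' 0 + ∫ t in (0:ℝ)..x, (q t - lam) * y t)


structure Reg (q : ℝ → ℂ) (lam : ℂ) (y y' : ℝ → ℂ) : Prop where
  c : ContinuousOn y (Icc 0 1)
  c' : ContinuousOn y' (Icc 0 1)
  d : ∀ x ∈ Ioo (0:ℝ) 1, HasDerivAt y (y' x) x
  d' : ∀ x ∈ Ioo (0:ℝ) 1, HasDerivAt y' ((q x - lam) * y x) x

lemma contOn_of_int {y f : ℝ → ℂ} {c : ℂ}
    (hi : IntervalIntegrable f volume 0 1)
    (he : ∀ x ∈ Icc (0:ℝ) 1, y x = c + ∫ t in (0:ℝ)..x, f t) :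
    ContinuousOn y (Icc 0 1) := by
  have h1 : ContinuousOn (fun x => ∫ t in (0:ℝ)..x, f t) (Icc 0 1) := by
    have := intervalIntegral.continuousOn_primitive_interval' hi (left_mem_uIcc)
    rwa [uIcc_of_le zero_le_one] at this
  exact (continuousOn_const.add h1).congr he

lemma deriv_of_int {y f : ℝ → ℂ} {c : ℂ}
    (hi : IntervalIntegrable f volume 0 1) (hf : ContinuousOn f (Icc 0 1))
    (he : ∀ x ∈ Icc (0:ℝ) 1, y x = c + ∫ t in (0:ℝ)..x, f t) (x : ℝ) (hx : x ∈ Ioo (0:ℝ) 1) :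
    HasDerivAt y (f x) x := by
  have hn : Icc (0:ℝ) 1 ∈ nhds x := Icc_mem_nhds hx.1 hx.2
  have hix : IntervalIntegrable f volume 0 x := by
    apply hi.mono_set
    rw [uIcc_of_le zero_le_one, uIcc_of_le hx.1.le]
    exact Icc_subset_Icc_right hx.2.le
  have hm : StronglyMeasurableAtFilter f (nhds x) :=
    ContinuousOn.stronglyMeasurableAtFilter isOpen_Ioo
      (hf.mono Ioo_subset_Icc_self) x hx
  have h1 := intervalIntegral.integral_hasDerivAt_right hix hm (hf.continuousAt hn)
  refine (h1.const_add c).congr_of_eventuallyEq ?_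
  filter_upwards [hn] with z hz using he z hz

lemma SLSol.reg {q : ℝ → ℂ} {lam : ℂ} {y y' : ℝ → ℂ} (hq : ContinuousOn q (Icc 0 1))
    (h : SLSol q lam y y' (Icc 0 1)) : Reg q lam y y' := by
  obtain ⟨h1, h2, h3, h4⟩ := h
  have m1 : (1:ℝ) ∈ Icc (0:ℝ) 1 := by simp
  have c := contOn_of_int (h1 1 m1) h3
  have c' := contOn_of_int (h2 1 m1) h4
  exact ⟨c, c', deriv_of_int (h1 1 m1) c' h3,
    deriv_of_int (f := fun t => (q t - lam) * y t) (h2 1 m1) ((hq.sub continuousOn_const).mul c) h4⟩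

lemma wronsk {q : ℝ → ℂ} {l m : ℂ} {y y' z z' : ℝ → ℂ} (hy : Reg q l y y') (hz : Reg q m z z')
    (x : ℝ) (hx : x ∈ Icc (0:ℝ) 1) :
    (y x * z' x - y' x * z x) - (y 0 * z' 0 - y' 0 * z 0)
      = (l - m) * ∫ t in (0:ℝ)..x, y t * z t := by
  have hs : Icc (0:ℝ) x ⊆ Icc 0 1 := Icc_subset_Icc_right hx.2
  have := intervalIntegral.integral_eq_sub_of_hasDerivAt_of_le hx.1
    (f := fun t => y t * z' t - y' t * z t) (f' := fun t => (l - m) * (y t * z t))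
    (((hy.c.mul hz.c').sub (hy.c'.mul hz.c)).mono hs) (fun t ht => by
      have ht' : t ∈ Ioo (0:ℝ) 1 := ⟨ht.1, ht.2.trans_le hx.2⟩
      exact (((hy.d t ht').mul (hz.d' t ht')).sub ((hy.d' t ht').mul (hz.d t ht'))).congr_deriv
        (by ring))
    (by
      apply ContinuousOn.intervalIntegrable
      rw [uIcc_of_le hx.1]
      exact (continuousOn_const.mul (hy.c.mul hz.c)).mono hs)
  rw [← this, intervalIntegral.integral_const_mul]

lemma gron {f f' : ℝ → ℝ} {K : ℝ} (hc : ContinuousOn f (Icc 0 1))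
    (hd : ∀ x ∈ Ioo (0:ℝ) 1, HasDerivAt f (f' x) x) (hle : ∀ x ∈ Ioo (0:ℝ) 1, f' x ≤ K * f x)
    (x : ℝ) (hx : x ∈ Icc (0:ℝ) 1) : f x ≤ f 0 * Real.exp (K * x) := by
  have hD : ∀ t ∈ Ioo (0:ℝ) 1, HasDerivAt (fun t => f t * Real.exp (-(K * t)))
      (f' t * Real.exp (-(K * t)) + f t * (Real.exp (-(K * t)) * -(K * 1))) t := fun t ht =>
    (hd t ht).mul (((hasDerivAt_id t).const_mul K).neg.exp)
  have ha : AntitoneOn (fun t => f t * Real.exp (-(K * t))) (Icc 0 1) := by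
    apply antitoneOn_of_deriv_nonpos (convex_Icc 0 1)
    · exact hc.mul (by fun_prop)
    · rw [interior_Icc]
      exact fun t ht => (hD t ht).differentiableAt.differentiableWithinAt
    · rw [interior_Icc]
      intro t ht
      rw [(hD t ht).deriv]
      have := mul_le_mul_of_nonneg_right (hle t ht) (Real.exp_pos (-(K * t))).le
      linarith
  have := ha (by simp : (0:ℝ) ∈ Icc (0:ℝ) 1) hx hx.1
  simp only [mul_zero, neg_zero, Real.exp_zero, mul_one] at this
  calc f x = f x * Real.exp (-(K * x)) * Real.exp (K * x) := by
        rw [mul_assoc, ← Real.exp_add]; simp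
    _ ≤ _ := mul_le_mul_of_nonneg_right this (Real.exp_pos _).le

lemma crude {q : ℝ → ℂ} {l : ℂ} {y y' : ℝ → ℂ} (hy : Reg q l y y') {Q L : ℝ}
    (hQ : ∀ x ∈ Icc (0:ℝ) 1, ‖q x‖ ≤ Q) (hL : ‖l‖ ≤ L) (x : ℝ) (hx : x ∈ Icc (0:ℝ) 1) :
    ‖y x‖ ^ 2 ≤ (‖y 0‖ ^ 2 + ‖y' 0‖ ^ 2) * Real.exp (1 + Q + L) := by
  have hQ0 : 0 ≤ Q := (norm_nonneg _).trans (hQ x hx)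
  have hL0 : 0 ≤ L := (norm_nonneg _).trans hL
  have := gron (f := fun t => ‖y t‖ ^ 2 + ‖y' t‖ ^ 2) (K := 1 + Q + L)
    ((hy.c.norm.pow 2).add (hy.c'.norm.pow 2))
    (fun t ht => ((hy.d t ht).norm_sq).add ((hy.d' t ht).norm_sq)) (fun t ht => by
      have h1 := real_inner_le_norm (y t) (y' t)
      have h2 := real_inner_le_norm (y' t) ((q t - l) * y t)
      have h3 : ‖(q t - l) * y t‖ ≤ (Q + L) * ‖y t‖ := by
        rw [norm_mul]
        gcongr
        exact (norm_sub_le _ _).trans (add_le_add (hQ t (Ioo_subset_Icc_self ht)) hL)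
      have h4 := mul_le_mul_of_nonneg_left h3 (norm_nonneg (y' t))
      nlinarith [mul_nonneg (by positivity : 0 ≤ 1 + Q + L) (sq_nonneg (‖y t‖ - ‖y' t‖))]) x hx
  have h5 : Real.exp ((1 + Q + L) * x) ≤ Real.exp (1 + Q + L) := by
    apply Real.exp_le_exp.2
    nlinarith [hx.2]
  have h6 := mul_le_mul_of_nonneg_left h5 (by positivity : 0 ≤ ‖y 0‖ ^ 2 + ‖y' 0‖ ^ 2)
  have h7 := sq_nonneg ‖y' x‖
  linarith

lemma sharp {q : ℝ → ℂ} {r : ℂ} {y y' : ℝ → ℂ} (hy : Reg q (r ^ 2) y y') {Q : ℝ}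
    (hQ : ∀ x ∈ Icc (0:ℝ) 1, ‖q x‖ ≤ Q) (hr : 0 ≤ r.im) (hr1 : 1 ≤ ‖r‖)
    (x : ℝ) (hx : x ∈ Icc (0:ℝ) 1) :
    ‖cexp (I * r * x) * y x‖ ^ 2 ≤ (‖y 0‖ ^ 2 + ‖y' 0‖ ^ 2) * Real.exp (2 * Q) := by
  have hQ0 : 0 ≤ Q := (norm_nonneg _).trans (hQ x hx)
  set E : ℝ → ℂ := fun t => cexp (I * r * t) with hE
  have hEd : ∀ t : ℝ, HasDerivAt E (E t * (I * r)) t := fun t => by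
    have h1 : HasDerivAt (fun t : ℝ => I * r * (t:ℂ)) (I * r * 1) t :=
      ((hasDerivAt_id t).ofReal_comp).const_mul (I * r)
    simpa using h1.cexp
  have hEc : ContinuousOn E (Icc 0 1) := fun t _ => (hEd t).continuousAt.continuousWithinAt
  set A : ℝ → ℂ := fun t => E t * (y' t + I * r * y t) with hA
  set B : ℝ → ℂ := fun t => E t * (y' t - I * r * y t) with hB
  have hAd : ∀ t ∈ Ioo (0:ℝ) 1, HasDerivAt A (2 * I * r * A t + E t * (q t * y t)) t := by
    intro t ht
    refine ((hEd t).mul ((hy.d' t ht).add ((hy.d t ht).const_mul (I * r)))).congr_deriv ?_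
    simp only [hA, Pi.add_apply]
    linear_combination (-E t * r ^ 2 * y t) * I_sq
  have hBd : ∀ t ∈ Ioo (0:ℝ) 1, HasDerivAt B (E t * (q t * y t)) t := by
    intro t ht
    refine ((hEd t).mul ((hy.d' t ht).sub ((hy.d t ht).const_mul (I * r)))).congr_deriv ?_
    simp only [Pi.sub_apply]
    linear_combination (-E t * r ^ 2 * y t) * I_sq
  have key : ∀ t, 2 * ‖r‖ * ‖E t * y t‖ ≤ ‖A t‖ + ‖B t‖ := by
    intro t
    have : A t - B t = 2 * I * r * (E t * y t) := by simp only [hA, hB]; ring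
    have h2 := norm_sub_le (A t) (B t)
    rw [this] at h2
    simpa using h2
  have key2 : ∀ t, ‖E t * y t‖ ≤ (‖A t‖ + ‖B t‖) / 2 := by
    intro t
    have := key t
    nlinarith [norm_nonneg (E t * y t)]
  have G := gron (f := fun t => ‖A t‖ ^ 2 + ‖B t‖ ^ 2) (K := 2 * Q)
    (((hEc.mul (hy.c'.add (continuousOn_const.mul hy.c))).norm.pow 2).add
      ((hEc.mul (hy.c'.sub (continuousOn_const.mul hy.c))).norm.pow 2))
    (fun t ht => ((hAd t ht).norm_sq).add ((hBd t ht).norm_sq)) (fun t ht => by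
      rw [inner_add_right]
      have h0 : inner ℝ (A t) (2 * I * r * A t) ≤ 0 := by
        have : inner ℝ (A t) (2 * I * r * A t) = - (2 * r.im) * ((A t).re ^ 2 + (A t).im ^ 2) := by
          rw [Complex.inner]
          simp
          ring
        rw [this]
        have : 0 ≤ r.im * ((A t).re ^ 2 + (A t).im ^ 2) := by positivity
        linarith
      have h1 := real_inner_le_norm (A t) (E t * (q t * y t))
      have h2 := real_inner_le_norm (B t) (E t * (q t * y t))
      have h3 : ‖E t * (q t * y t)‖ ≤ Q * ((‖A t‖ + ‖B t‖) / 2) := by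
        have : E t * (q t * y t) = q t * (E t * y t) := by ring
        rw [this, norm_mul]
        exact mul_le_mul (hQ t (Ioo_subset_Icc_self ht)) (key2 t) (norm_nonneg _) hQ0
      have h4 := mul_le_mul_of_nonneg_left h3 (norm_nonneg (A t))
      have h5 := mul_le_mul_of_nonneg_left h3 (norm_nonneg (B t))
      nlinarith [mul_nonneg hQ0 (sq_nonneg (‖A t‖ - ‖B t‖))]) x hx
  have h5 : Real.exp (2 * Q * x) ≤ Real.exp (2 * Q) := by
    apply Real.exp_le_exp.2
    nlinarith [hx.2]
  have hN0 : ‖A 0‖ ^ 2 + ‖B 0‖ ^ 2 ≤ 2 * ‖r‖ ^ 2 * (‖y 0‖ ^ 2 + ‖y' 0‖ ^ 2) := by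
    have hE0 : E 0 = 1 := by simp [hE]
    have hp := parallelogram_law_with_norm ℝ (y' 0) (I * r * y 0)
    have hn : ‖I * r * y 0‖ = ‖r‖ * ‖y 0‖ := by simp
    simp only [hA, hB, hE0, one_mul]
    rw [hn] at hp
    have : 1 ≤ ‖r‖ ^ 2 := by nlinarith
    nlinarith [mul_le_mul_of_nonneg_right this (sq_nonneg ‖y' 0‖)]
  have h6 : ‖A x‖ ^ 2 + ‖B x‖ ^ 2 ≤
      2 * ‖r‖ ^ 2 * (‖y 0‖ ^ 2 + ‖y' 0‖ ^ 2) * Real.exp (2 * Q) :=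
    G.trans (mul_le_mul hN0 h5 (Real.exp_pos _).le (by positivity))
  have h7 := key x
  have h8 : (2 * ‖r‖ * ‖E x * y x‖) ^ 2 ≤ (‖A x‖ + ‖B x‖) ^ 2 := by gcongr
  have h9 : 4 * ‖r‖ ^ 2 * ‖E x * y x‖ ^ 2 ≤
      4 * ‖r‖ ^ 2 * ((‖y 0‖ ^ 2 + ‖y' 0‖ ^ 2) * Real.exp (2 * Q)) := by
    nlinarith [sq_nonneg (‖A x‖ - ‖B x‖)]
  exact le_of_mul_le_mul_left h9 (by positivity)

lemma sqrt_bd {a b : ℝ} (h : a ^ 2 ≤ b) : a ≤ Real.sqrt b := Real.le_sqrt_of_sq_le h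

lemma exists_bd {q : ℝ → ℂ} (hq : ContinuousOn q (Icc 0 1)) :
    ∃ Q, ∀ x ∈ Icc (0:ℝ) 1, ‖q x‖ ≤ Q :=
  isCompact_Icc.exists_bound_of_continuousOn hq

lemma entire_of {q : ℝ → ℂ} (hq : ContinuousOn q (Icc 0 1)) {φ φ' S S' y y' : ℂ → ℝ → ℂ}
    (hφ : ∀ l, Reg q l (φ l) (φ' l)) (hS : ∀ l, Reg q l (S l) (S' l))
    (hW : ∀ l, φ l 0 * S' l 0 - φ' l 0 * S l 0 = 1)
    (hy : ∀ l, Reg q l (y l) (y' l)) {a b : ℂ} (ha : ∀ l, y l 0 = a) (hb : ∀ l, y' l 0 = b)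
    (x : ℝ) (hx : x ∈ Icc (0:ℝ) 1) : Differentiable ℂ (fun l => y l x) := by
  obtain ⟨Q, hQ⟩ := exists_bd hq
  intro l
  obtain ⟨F, hF⟩ := exists_bd (hφ l).c
  obtain ⟨T, hT⟩ := exists_bd (hS l).c
  have hF0 : 0 ≤ F := (norm_nonneg _).trans (hF x hx)
  have hT0 : 0 ≤ T := (norm_nonneg _).trans (hT x hx)
  set K := Real.sqrt ((‖a‖ ^ 2 + ‖b‖ ^ 2) * Real.exp (1 + Q + (‖l‖ + 1))) with hK
  have hK0 : 0 ≤ K := Real.sqrt_nonneg _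
  have hyK : ∀ m ∈ Metric.ball l 1, ∀ t ∈ Icc (0:ℝ) 1, ‖y m t‖ ≤ K := by
    intro m hm t ht
    apply sqrt_bd
    rw [← ha m, ← hb m]
    refine crude (hy m) hQ ?_ t ht
    have := norm_sub_norm_le m l
    rw [Metric.mem_ball, dist_eq_norm] at hm
    linarith
  set G : ℂ → ℝ → ℂ := fun m t =>
    φ l t * (∫ s in (0:ℝ)..t, S l s * y m s) - S l t * ∫ s in (0:ℝ)..t, φ l s * y m s with hG
  have form : ∀ m, ∀ t ∈ Icc (0:ℝ) 1, y m t - y l t = (m - l) * G m t := by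
    intro m t ht
    have w1 := wronsk (hφ l) (hy m) t ht
    have w2 := wronsk (hφ l) (hy l) t ht
    have w3 := wronsk (hS l) (hy m) t ht
    have w4 := wronsk (hS l) (hy l) t ht
    have w5 := wronsk (hφ l) (hS l) t ht
    rw [ha, hb] at w1 w2 w3 w4
    rw [hW] at w5
    simp only [hG]
    linear_combination (S l t) * (w1 - w2) - (φ l t) * (w3 - w4) - (y m t - y l t) * w5
  have intb : ∀ (u : ℝ → ℂ) (U : ℝ), 0 ≤ U → (∀ s ∈ Icc (0:ℝ) 1, ‖u s‖ ≤ U) → ∀ m ∈ Metric.ball l 1,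
      ∀ t ∈ Icc (0:ℝ) 1, ‖∫ s in (0:ℝ)..t, u s * y m s‖ ≤ U * K := by
    intro u U hU0 hU m hm t ht
    have : ‖∫ s in (0:ℝ)..t, u s * y m s‖ ≤ U * K * |t - 0| := by
      apply intervalIntegral.norm_integral_le_of_norm_le_const
      intro s hs
      rw [uIoc_of_le ht.1] at hs
      have hs' : s ∈ Icc (0:ℝ) 1 := ⟨hs.1.le, hs.2.trans ht.2⟩
      rw [norm_mul]
      exact mul_le_mul (hU s hs') (hyK m hm s hs') (norm_nonneg _) hU0
    refine this.trans ?_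
    rw [sub_zero, abs_of_nonneg ht.1]
    exact mul_le_of_le_one_right (by positivity) ht.2
  have lip : ∀ m ∈ Metric.ball l 1, ∀ t ∈ Icc (0:ℝ) 1,
      ‖y m t - y l t‖ ≤ ‖m - l‖ * (F * (T * K) + T * (F * K)) := by
    intro m hm t ht
    rw [form m t ht, norm_mul]
    gcongr
    refine (norm_sub_le _ _).trans ?_
    rw [norm_mul, norm_mul]
    exact add_le_add
      (mul_le_mul (hF t ht) (intb _ T hT0 hT m hm t ht) (norm_nonneg _) hF0)
      (mul_le_mul (hT t ht) (intb _ F hF0 hF m hm t ht) (norm_nonneg _) hT0)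
  have hball : Metric.ball l 1 ∈ nhds l := Metric.ball_mem_nhds l one_pos
  have lim : ∀ t ∈ Icc (0:ℝ) 1, Filter.Tendsto (fun m => y m t) (nhds l) (nhds (y l t)) := by
    intro t ht
    rw [tendsto_iff_norm_sub_tendsto_zero]
    have h0 : Filter.Tendsto (fun m => ‖m - l‖ * (F * (T * K) + T * (F * K))) (nhds l) (nhds 0) := by
      have : Continuous (fun m => ‖m - l‖ * (F * (T * K) + T * (F * K))) := by fun_prop
      simpa using this.tendsto l
    refine squeeze_zero' (Filter.Eventually.of_forall fun _ => norm_nonneg _) ?_ h0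
    filter_upwards [hball] with m hm using lip m hm t ht
  have limint : ∀ (u : ℝ → ℂ) (U : ℝ), 0 ≤ U → ContinuousOn u (Icc 0 1) →
      (∀ s ∈ Icc (0:ℝ) 1, ‖u s‖ ≤ U) →
      Filter.Tendsto (fun m => ∫ s in (0:ℝ)..x, u s * y m s) (nhds l)
        (nhds (∫ s in (0:ℝ)..x, u s * y l s)) := by
    intro u U hU0 huc hU
    have hsub : uIoc (0:ℝ) x ⊆ Icc 0 1 := by
      rw [uIoc_of_le hx.1]
      exact fun s hs => ⟨hs.1.le, hs.2.trans hx.2⟩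
    apply intervalIntegral.tendsto_integral_filter_of_dominated_convergence (fun _ => U * K)
    · exact Filter.Eventually.of_forall fun m =>
        ((huc.mul (hy m).c).mono hsub).aestronglyMeasurable measurableSet_uIoc
    · filter_upwards [hball] with m hm
      refine Filter.Eventually.of_forall fun s hs => ?_
      rw [norm_mul]
      exact mul_le_mul (hU s (hsub hs)) (hyK m hm s (hsub hs)) (norm_nonneg _) hU0
    · exact intervalIntegrable_const
    · exact Filter.Eventually.of_forall fun s hs => (lim s (hsub hs)).const_mul (u s)
  have limG : Filter.Tendsto (fun m => G m x) (nhds l) (nhds (G l x)) :=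
    ((limint _ T hT0 (hS l).c hT).const_mul _).sub ((limint _ F hF0 (hφ l).c hF).const_mul _)
  have : HasDerivAt (fun m => y m x) (G l x) l := by
    rw [hasDerivAt_iff_tendsto_slope]
    refine (limG.mono_left nhdsWithin_le_nhds).congr' ?_
    filter_upwards [self_mem_nhdsWithin] with m hm
    have hne : m - l ≠ 0 := sub_ne_zero.2 hm
    rw [slope_def_field, form m x hx]
    field_simp
  exact this.differentiableAt

lemma PL {g : ℂ → ℂ} (hg : Differentiable ℂ g) {δ C B C' R : ℝ} (hδ0 : 0 < δ)
    (hδ2 : δ < Real.pi / 2) (hC' : 0 ≤ C') (hR : 0 < R)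
    (h1 : ∀ r : ℂ, 1 ≤ ‖r‖ → ‖g (r ^ 2)‖ ≤ C * Real.exp (B * ‖r‖))
    (h2 : ∀ r : ℂ, δ ≤ r.arg → r.arg ≤ Real.pi - δ → R ≤ ‖r‖ → ‖g (r ^ 2)‖ ≤ C' / ‖r‖) :
    g 0 = 0 := by
  set f : ℂ → ℂ := fun r => g (r ^ 2) with hf
  have hfd : Differentiable ℂ f := hg.comp (by fun_prop)
  have hev : ∀ r, f (-r) = f r := fun r => by simp [hf]
  obtain ⟨D1, hD1⟩ := (isCompact_closedBall (0:ℂ) 1).exists_bound_of_continuousOn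
    hfd.continuous.continuousOn
  obtain ⟨D2, hD2⟩ := (isCompact_closedBall (0:ℂ) R).exists_bound_of_continuousOn
    hfd.continuous.continuousOn
  set K := max D2 (C' / R) with hK
  have hsec : ∀ r : ℂ, δ ≤ r.arg → r.arg ≤ Real.pi - δ → ‖f r‖ ≤ K := by
    intro r ha hb
    rcases le_total R ‖r‖ with h | h
    · exact ((h2 r ha hb h).trans (by gcongr)).trans (le_max_right _ _)
    · exact (hD2 r (by simpa using h)).trans (le_max_left _ _)
  have hpi := Real.pi_pos
  have hstrip : ∀ w : ℂ, -δ ≤ w.im → w.im ≤ δ → ‖f (cexp w)‖ ≤ K := by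
    intro w ha hb
    refine PhragmenLindelof.horizontal_strip (f := fun w => f (cexp w)) (a := -δ) (b := δ)
      (hfd.comp Complex.differentiable_exp).diffContOnCl ?_ ?_ ?_ ha hb
    · refine ⟨1, ?_, |B|, Asymptotics.IsBigO.of_bound (max D1 C) (Filter.Eventually.of_forall ?_)⟩
      · rw [lt_div_iff₀ (by linarith)]
        linarith
      · intro z
        have hexp : ‖cexp z‖ ≤ Real.exp (1 * |z.re|) := by
          rw [Complex.norm_exp, one_mul]
          exact Real.exp_le_exp.2 (le_abs_self _)
        rw [Real.norm_eq_abs, abs_of_pos (Real.exp_pos _)]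
        have hD10 : 0 ≤ D1 := (norm_nonneg _).trans (hD1 0 (by simp))
        rcases le_total 1 ‖cexp z‖ with h | h
        · refine (h1 _ h).trans ?_
          refine mul_le_mul (le_max_right _ _) (Real.exp_le_exp.2 ?_) (Real.exp_pos _).le
            (hD10.trans (le_max_left _ _))
          exact (mul_le_mul_of_nonneg_right (le_abs_self B) (norm_nonneg _)).trans
            (mul_le_mul_of_nonneg_left hexp (abs_nonneg B))
        · refine ((hD1 _ (by simpa using h)).trans (le_max_left _ C)).trans ?_
          refine le_mul_of_one_le_right (hD10.trans (le_max_left _ _)) (Real.one_le_exp ?_)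
          positivity
    · intro z hz
      rw [← hev]
      have : -cexp z = cexp (z + Real.pi * I) := by
        rw [Complex.exp_add, Complex.exp_pi_mul_I]; ring
      have harg : (-cexp z).arg = Real.pi - δ := by
        rw [this, Complex.arg_exp]
        have : (z + Real.pi * I).im = Real.pi - δ := by simp [hz]; ring
        rw [this, toIocMod_eq_self]
        constructor <;> linarith
      exact hsec _ (by rw [harg]; linarith) harg.le
    · intro z hz
      have harg : (cexp z).arg = δ := by
        rw [Complex.arg_exp, hz, toIocMod_eq_self]
        constructor <;> linarith
      exact hsec _ harg.ge (by rw [harg]; linarith)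
  have hup : ∀ r : ℂ, 0 ≤ r.im → ‖f r‖ ≤ K := by
    intro r hr
    rcases eq_or_ne r 0 with rfl | hr0
    · exact (hD2 0 (by simp [hR.le])).trans (le_max_left _ _)
    have ha := Complex.arg_nonneg_iff.2 hr
    have hb := Complex.arg_le_pi r
    rcases le_total r.arg δ with h | h
    · have := hstrip (Complex.log r) (by rw [Complex.log_im]; linarith) (by rwa [Complex.log_im])
      rwa [Complex.exp_log hr0] at this
    rcases le_total r.arg (Real.pi - δ) with h' | h'
    · exact hsec r h h'
    · have hi : (Complex.log r - Real.pi * I).im = r.arg - Real.pi := by simp [Complex.log_im]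
      have := hstrip (Complex.log r - Real.pi * I) (by rw [hi]; linarith) (by rw [hi]; linarith)
      rw [Complex.exp_sub, Complex.exp_log hr0, Complex.exp_pi_mul_I, div_neg, div_one, hev] at this
      exact this
  have hall : ∀ r : ℂ, ‖f r‖ ≤ K := by
    intro r
    rcases le_total 0 r.im with h | h
    · exact hup r h
    · rw [← hev]; exact hup _ (by simpa using h)
  have hconst := fun z w => hfd.apply_eq_apply_of_bounded
    ((Metric.isBounded_closedBall (x := (0:ℂ)) (r := K)).subset
      (by rintro _ ⟨r, rfl⟩; simpa using hall r)) z w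
  have hsmall : ∀ t : ℝ, R ≤ t → ‖g 0‖ ≤ C' / t := by
    intro t ht
    have ht0 : 0 < t := hR.trans_le ht
    have harg : (t * I : ℂ).arg = Real.pi / 2 := by
      rw [Complex.arg_real_mul _ ht0, Complex.arg_I]
    have hn : ‖(t * I : ℂ)‖ = t := by simp [abs_of_pos ht0]
    have := h2 (t * I) (by rw [harg]; linarith) (by rw [harg]; linarith) (by rw [hn]; exact ht)
    rw [hn] at this
    have h3 : f (t * I) = f 0 := hconst _ _
    simp only [hf] at h3
    rw [h3] at this
    simpa using this
  have hlim : Filter.Tendsto (fun t : ℝ => C' / t) Filter.atTop (nhds 0) :=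
    tendsto_const_nhds.div_atTop Filter.tendsto_id
  have : ‖g 0‖ ≤ 0 := ge_of_tendsto hlim (by
    filter_upwards [Filter.eventually_ge_atTop R] with t ht using hsmall t ht)
  exact norm_le_zero_iff.1 this

lemma sq_eq_conseq {q qt : ℝ → ℂ} {l : ℂ} {y y' z z' : ℝ → ℂ} (hy : Reg q l y y')
    (hz : Reg qt l z z') (hs : ∀ x ∈ Ioo (0:ℝ) 1, y x ^ 2 = z x ^ 2) :
    (∀ x ∈ Ioo (0:ℝ) 1, y x * y' x = z x * z' x) ∧
    (∀ x ∈ Ioo (0:ℝ) 1, (q x - qt x) * y x ^ 4 = 0) := by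
  have hn : ∀ x ∈ Ioo (0:ℝ) 1, Ioo (0:ℝ) 1 ∈ nhds x := fun x hx => Ioo_mem_nhds hx.1 hx.2
  have h1 : ∀ x ∈ Ioo (0:ℝ) 1, y x * y' x = z x * z' x := by
    intro x hx
    have e : (fun t => y t ^ 2) =ᶠ[nhds x] fun t => z t ^ 2 := by
      filter_upwards [hn x hx] with t ht using hs t ht
    have := (((hz.d x hx).pow 2).congr_of_eventuallyEq e).unique ((hy.d x hx).pow 2)
    norm_num at this
    linear_combination -this / 2
  refine ⟨h1, fun x hx => ?_⟩
  have e : (fun t => y t * y' t) =ᶠ[nhds x] fun t => z t * z' t := by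
    filter_upwards [hn x hx] with t ht using h1 t ht
  have h2 := (((hz.d x hx).mul (hz.d' x hx)).congr_of_eventuallyEq e).unique
    ((hy.d x hx).mul (hy.d' x hx))
  have h3 := hs x hx
  have h4 := h1 x hx
  linear_combination (-y x ^ 2) * h2 + (z' x ^ 2 - (qt x - l) * (y x ^ 2 )) * h3 - (y x * y' x + z x * z' x) * h4

lemma bdE {q : ℝ → ℂ} (hq : ContinuousOn q (Icc 0 1)) {y y' : ℂ → ℝ → ℂ}
    (hy : ∀ l, Reg q l (y l) (y' l)) {a b : ℂ} (ha : ∀ l, y l 0 = a) (hb : ∀ l, y' l 0 = b) :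
    ∃ K : ℝ, 0 ≤ K ∧ ∀ r : ℂ, 0 ≤ r.im → 1 ≤ ‖r‖ → ∀ x ∈ Icc (0:ℝ) 1,
      ‖cexp (I * r * x) * y (r ^ 2) x‖ ≤ K := by
  obtain ⟨Q, hQ⟩ := exists_bd hq
  refine ⟨Real.sqrt ((‖a‖ ^ 2 + ‖b‖ ^ 2) * Real.exp (2 * Q)), Real.sqrt_nonneg _, ?_⟩
  intro r hr hr1 x hx
  apply sqrt_bd
  have := sharp (hy (r ^ 2)) hQ hr hr1 x hx
  rwa [ha, hb] at this

/-- If the Weyl-type solutions `ψ = S + M·φ` and `ψ̃ = S̃ + M·φ̃`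
(with the same function `M`) both satisfy the sector asymptotics (2.10) in
`Λ_δ = {ρ : δ ≤ arg ρ ≤ π - δ}`, then `q = q̃` on `[0,1]` and `h = h̃`. -/
theorem statement0
    (q qt : ℝ → ℂ) (h ht : ℂ) (δ : ℝ) (hδ0 : 0 < δ) (hδ2 : δ < Real.pi / 2)
    (hq : ContinuousOn q (Icc 0 1)) (hqt : ContinuousOn qt (Icc 0 1))
    (φ φ' S S' φt φt' St St' : ℂ → ℝ → ℂ)
    (hφ : ∀ lam : ℂ, SLSol q lam (φ lam) (φ' lam) (Icc 0 1) ∧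
      φ lam 0 = 1 ∧ φ' lam 0 = -h)
    (hS : ∀ lam : ℂ, SLSol q lam (S lam) (S' lam) (Icc 0 1) ∧
      S lam 0 = 0 ∧ S' lam 0 = 1)
    (hφt : ∀ lam : ℂ, SLSol qt lam (φt lam) (φt' lam) (Icc 0 1) ∧
      φt lam 0 = 1 ∧ φt' lam 0 = -ht)
    (hSt : ∀ lam : ℂ, SLSol qt lam (St lam) (St' lam) (Icc 0 1) ∧
      St lam 0 = 0 ∧ St' lam 0 = 1)
    (M : ℂ → ℂ)
    (hasym : ∀ x ∈ Ioc (0:ℝ) 1, ∃ C > (0:ℝ), ∃ R > (0:ℝ), ∀ ρ : ℂ,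
      δ ≤ ρ.arg → ρ.arg ≤ Real.pi - δ → R ≤ ‖ρ‖ →
      ‖Complex.I * ρ * Complex.exp (-(Complex.I * ρ * x)) *
          (S (ρ^2) x + M (ρ^2) * φ (ρ^2) x) - 1‖ ≤ C / ‖ρ‖ ∧
      ‖Complex.exp (-(Complex.I * ρ * x)) *
          (S' (ρ^2) x + M (ρ^2) * φ' (ρ^2) x) - 1‖ ≤ C / ‖ρ‖)
    (hasymt : ∀ x ∈ Ioc (0:ℝ) 1, ∃ C > (0:ℝ), ∃ R > (0:ℝ), ∀ ρ : ℂ,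
      δ ≤ ρ.arg → ρ.arg ≤ Real.pi - δ → R ≤ ‖ρ‖ →
      ‖Complex.I * ρ * Complex.exp (-(Complex.I * ρ * x)) *
          (St (ρ^2) x + M (ρ^2) * φt (ρ^2) x) - 1‖ ≤ C / ‖ρ‖ ∧
      ‖Complex.exp (-(Complex.I * ρ * x)) *
          (St' (ρ^2) x + M (ρ^2) * φt' (ρ^2) x) - 1‖ ≤ C / ‖ρ‖) :
    (∀ x ∈ Icc (0:ℝ) 1, q x = qt x) ∧ h = ht := by
  have rφ := fun l => (hφ l).1.reg hq
  have rS := fun l => (hS l).1.reg hq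
  have rφt := fun l => (hφt l).1.reg hqt
  have rSt := fun l => (hSt l).1.reg hqt
  have iφ := fun l => (hφ l).2.1
  have iφ' := fun l => (hφ l).2.2
  have iS := fun l => (hS l).2.1
  have iS' := fun l => (hS l).2.2
  have iφt := fun l => (hφt l).2.1
  have iφt' := fun l => (hφt l).2.2
  have iSt := fun l => (hSt l).2.1
  have iSt' := fun l => (hSt l).2.2
  have W0 : ∀ l, φ l 0 * S' l 0 - φ' l 0 * S l 0 = 1 := fun l => by
    rw [iφ, iφ', iS, iS']; ring
  have Wt0 : ∀ l, φt l 0 * St' l 0 - φt' l 0 * St l 0 = 1 := fun l => by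
    rw [iφt, iφt', iSt, iSt']; ring
  obtain ⟨K1, hK1, b1⟩ := bdE hq rφ iφ iφ'
  obtain ⟨K2, hK2, b2⟩ := bdE hq rS iS iS'
  obtain ⟨K3, hK3, b3⟩ := bdE hqt rφt iφt iφt'
  obtain ⟨K4, hK4, b4⟩ := bdE hqt rSt iSt iSt'
  have key : ∀ x ∈ Ioc (0:ℝ) 1, S 0 x * φt 0 x - φ 0 x * St 0 x = 0 := by
    intro x hx
    have hx' : x ∈ Icc (0:ℝ) 1 := ⟨hx.1.le, hx.2⟩
    obtain ⟨C, hC, R, hR, hA⟩ := hasym x hx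
    obtain ⟨Ct, hCt, Rt, hRt, hAt⟩ := hasymt x hx
    have hinv : ∀ r : ℂ, cexp (-(I * r * x)) * cexp (I * r * x) = 1 := fun r => by
      rw [← Complex.exp_add]; simp
    have hge : ∀ r : ℂ, 0 ≤ r.im → 1 ≤ ‖r‖ → ‖S (r ^ 2) x * φt (r ^ 2) x - φ (r ^ 2) x * St (r ^ 2) x‖
        ≤ (K2 * K3 + K1 * K4) * Real.exp (2 * ‖r‖) := by
      intro r hr hr1
      have e : S (r ^ 2) x * φt (r ^ 2) x - φ (r ^ 2) x * St (r ^ 2) x =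
          ((cexp (I * r * x) * S (r ^ 2) x) * (cexp (I * r * x) * φt (r ^ 2) x) -
          (cexp (I * r * x) * φ (r ^ 2) x) * (cexp (I * r * x) * St (r ^ 2) x)) *
          cexp (-(I * r * x)) ^ 2 := by
        linear_combination (-(S (r ^ 2) x * φt (r ^ 2) x - φ (r ^ 2) x * St (r ^ 2) x)) *
          (cexp (-(I * r * x)) * cexp (I * r * x) + 1) * hinv r
      rw [e, norm_mul, norm_pow]
      apply mul_le_mul _ _ (by positivity) (by positivity)
      · refine (norm_sub_le _ _).trans ?_
        rw [norm_mul, norm_mul (cexp (I * r * x) * φ (r ^ 2) x)]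
        exact add_le_add (mul_le_mul (b2 r hr hr1 x hx') (b3 r hr hr1 x hx') (norm_nonneg _) hK2)
          (mul_le_mul (b1 r hr hr1 x hx') (b4 r hr hr1 x hx') (norm_nonneg _) hK1)
      · rw [Complex.norm_exp, ← Real.exp_nat_mul]
        apply Real.exp_le_exp.2
        have h1 : (-(I * r * x)).re = r.im * x := by simp
        rw [h1]
        have h2 : r.im ≤ ‖r‖ := (le_abs_self _).trans (Complex.abs_im_le_norm r)
        have h3 : r.im * x ≤ r.im := mul_le_of_le_one_right hr hx.2
        push_cast
        linarith
    refine PL (g := fun l => S l x * φt l x - φ l x * St l x) (δ := δ) (C := K2 * K3 + K1 * K4)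
      (B := 2) (C' := (1 + C / R) * K3 + K1 * (1 + Ct / Rt)) (R := max 1 (max R Rt))
      ?_ hδ0 hδ2 (by positivity) (by positivity) ?_ ?_
    · exact ((entire_of hq rφ rS W0 rS iS iS' x hx').mul
          (entire_of hqt rφt rSt Wt0 rφt iφt iφt' x hx')).sub
        ((entire_of hq rφ rS W0 rφ iφ iφ' x hx').mul
          (entire_of hqt rφt rSt Wt0 rSt iSt iSt' x hx'))
    · intro r hr1
      rcases le_total 0 r.im with h | h
      · exact hge r h hr1
      · have := hge (-r) (by simpa using h) (by simpa using hr1)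
        simpa using this
    · intro r ha hb hr
      have hr1 : 1 ≤ ‖r‖ := (le_max_left _ _).trans hr
      have hrR : R ≤ ‖r‖ := ((le_max_left _ _).trans (le_max_right _ _)).trans hr
      have hrRt : Rt ≤ ‖r‖ := ((le_max_right _ _).trans (le_max_right _ _)).trans hr
      have him : 0 ≤ r.im := Complex.arg_nonneg_iff.1 (hδ0.le.trans ha)
      have a1 := (hA r ha hb hrR).1
      have a2 := (hAt r ha hb hrRt).1
      have near : ∀ (u : ℂ) (c : ℝ), ‖u - 1‖ ≤ c → ‖u‖ ≤ 1 + c := by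
        intro u c hu
        have := norm_sub_norm_le u 1
        rw [norm_one] at this
        linarith
      have a1' := near _ (C / R) (a1.trans (by gcongr))
      have a2' := near _ (Ct / Rt) (a2.trans (by gcongr))
      have e : I * r * (S (r ^ 2) x * φt (r ^ 2) x - φ (r ^ 2) x * St (r ^ 2) x) =
          (I * r * cexp (-(I * r * x)) * (S (r ^ 2) x + M (r ^ 2) * φ (r ^ 2) x)) *
            (cexp (I * r * x) * φt (r ^ 2) x) -
          (cexp (I * r * x) * φ (r ^ 2) x) *
            (I * r * cexp (-(I * r * x)) * (St (r ^ 2) x + M (r ^ 2) * φt (r ^ 2) x)) := by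
        linear_combination (-(I * r * (S (r ^ 2) x * φt (r ^ 2) x - φ (r ^ 2) x * St (r ^ 2) x))) *
          hinv r
      rw [le_div_iff₀ (by linarith)]
      have e2 : ‖S (r ^ 2) x * φt (r ^ 2) x - φ (r ^ 2) x * St (r ^ 2) x‖ * ‖r‖ =
          ‖I * r * (S (r ^ 2) x * φt (r ^ 2) x - φ (r ^ 2) x * St (r ^ 2) x)‖ := by
        simp [mul_comm]
      rw [e2, e]
      refine (norm_sub_le _ _).trans ?_
      rw [norm_mul, norm_mul (cexp (I * r * x) * φ (r ^ 2) x)]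
      exact add_le_add (mul_le_mul a1' (b3 r him hr1 x hx') (norm_nonneg _) (by positivity))
        (mul_le_mul (b1 r him hr1 x hx') a2' (norm_nonneg _) hK1)
  have W : ∀ x ∈ Icc (0:ℝ) 1, φ 0 x * S' 0 x - φ' 0 x * S 0 x = 1 := fun x hx => by
    have := wronsk (rφ 0) (rS 0) x hx
    rw [W0] at this
    linear_combination this
  have Wt : ∀ x ∈ Icc (0:ℝ) 1, φt 0 x * St' 0 x - φt' 0 x * St 0 x = 1 := fun x hx => by
    have := wronsk (rφt 0) (rSt 0) x hx
    rw [Wt0] at this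
    linear_combination this
  have dkey : ∀ x ∈ Ioo (0:ℝ) 1,
      S' 0 x * φt 0 x + S 0 x * φt' 0 x = φ' 0 x * St 0 x + φ 0 x * St' 0 x := by
    intro x hx
    have e : (fun t => S 0 t * φt 0 t) =ᶠ[nhds x] fun t => φ 0 t * St 0 t := by
      filter_upwards [Ioo_mem_nhds hx.1 hx.2] with t ht
      exact sub_eq_zero.1 (key t ⟨ht.1, ht.2.le⟩)
    exact (((rS 0).d x hx).mul ((rφt 0).d x hx)).unique
      ((((rφ 0).d x hx).mul ((rSt 0).d x hx)).congr_of_eventuallyEq e)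
  have sqφ : ∀ x ∈ Ioo (0:ℝ) 1, φ 0 x ^ 2 = φt 0 x ^ 2 := by
    intro x hx
    have k := key x ⟨hx.1, hx.2.le⟩
    have d := dkey x hx
    have w := W x (Ioo_subset_Icc_self hx)
    have wt := Wt x (Ioo_subset_Icc_self hx)
    linear_combination (-φ 0 x ^ 2) * wt + φt 0 x ^ 2 * w - φ 0 x * φt 0 x * d +
      (φ 0 x * φt' 0 x + φ' 0 x * φt 0 x) * k
  have sqS : ∀ x ∈ Ioo (0:ℝ) 1, S 0 x ^ 2 = St 0 x ^ 2 := by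
    intro x hx
    have k := key x ⟨hx.1, hx.2.le⟩
    have d := dkey x hx
    have w := W x (Ioo_subset_Icc_self hx)
    have wt := Wt x (Ioo_subset_Icc_self hx)
    linear_combination (-S 0 x ^ 2) * wt + St 0 x ^ 2 * w - S 0 x * St 0 x * d +
      (S 0 x * St' 0 x + S' 0 x * St 0 x) * k
  obtain ⟨p1, p2⟩ := sq_eq_conseq (rφ 0) (rφt 0) sqφ
  obtain ⟨-, s2⟩ := sq_eq_conseq (rS 0) (rSt 0) sqS
  have hcl : closure (Ioo (0:ℝ) 1) = Icc 0 1 := closure_Ioo (by norm_num)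
  have ext : ∀ u v : ℝ → ℂ, ContinuousOn u (Icc 0 1) → ContinuousOn v (Icc 0 1) →
      (∀ x ∈ Ioo (0:ℝ) 1, u x = v x) → ∀ x ∈ Icc (0:ℝ) 1, u x = v x := by
    intro u v hu hv huv
    exact Set.EqOn.of_subset_closure (s := Ioo (0:ℝ) 1) huv hu hv Ioo_subset_Icc_self hcl.ge
  constructor
  · apply ext q qt hq hqt
    intro x hx
    by_contra hne
    have hne' : q x - qt x ≠ 0 := sub_ne_zero.2 hne
    have z1 : φ 0 x = 0 := by simpa [hne'] using p2 x hx
    have z2 : S 0 x = 0 := by simpa [hne'] using s2 x hx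
    have w := W x (Ioo_subset_Icc_self hx)
    rw [z1, z2] at w
    simp at w
  · have := ext _ _ ((rφ 0).c.mul (rφ 0).c') ((rφt 0).c.mul (rφt 0).c') p1 0 (by simp)
    simp only [Pi.mul_apply, iφ, iφ', iφt, iφt'] at this
    linear_combination -this
end

section
/- Let q : [0,∞) → ℝ be measurable with ∫₀^∞ (1+x)·|q(x)| dx < ∞, and let ρ ∈ ℂ with Im ρ ≥ 0. Then there exists a function e : [0,∞) → ℂ such that e and e′ are absolutely continuous on compact subintervals of [0,∞), −e″(x) + q(x)e(x) = ρ² e(x) for almost every x ∈ (0,∞), and e(x)·e^{−iρx} → 1 and e′(x)·e^{−iρx} → iρ as x → ∞. -/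
open MeasureTheory Set Complex Filter

theorem tail_ii {E : Type*} [NormedAddCommGroup E] {f : ℝ → E}
    (hf : ∀ a, IntegrableOn f (Ioi a)) (a b : ℝ) : IntervalIntegrable f volume a b := by
  rw [intervalIntegrable_iff]
  exact (hf (min a b)).mono_set (by intro x hx; exact hx.1)

theorem tail_eq {E : Type*} [NormedAddCommGroup E] [NormedSpace ℝ E] {f : ℝ → E}
    (hf : ∀ a, IntegrableOn f (Ioi a)) (x : ℝ) :
    ∫ t in Ioi x, f t = (∫ t in Ioi 0, f t) - ∫ t in (0:ℝ)..x, f t := by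
  rw [← intervalIntegral.integral_Ioi_sub_Ioi' (hf 0) (hf x)]
  abel

theorem tail_cont {E : Type*} [NormedAddCommGroup E] [NormedSpace ℝ E] {f : ℝ → E}
    (hf : ∀ a, IntegrableOn f (Ioi a)) : Continuous (fun x => ∫ t in Ioi x, f t) := by
  have : (fun x => ∫ t in Ioi x, f t) =
      fun x => (∫ t in Ioi 0, f t) - ∫ t in (0:ℝ)..x, f t := funext (tail_eq hf)
  rw [this]
  exact continuous_const.sub (intervalIntegral.continuous_primitive (tail_ii hf) 0)

theorem tail_deriv {E : Type*} [NormedAddCommGroup E] [NormedSpace ℝ E] [CompleteSpace E] {f : ℝ → E}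
    (hf : ∀ a, IntegrableOn f (Ioi a)) (hc : Continuous f) (x : ℝ) :
    HasDerivAt (fun x => ∫ t in Ioi x, f t) (-f x) x := by
  have : (fun x => ∫ t in Ioi x, f t) =
      fun x => (∫ t in Ioi 0, f t) - ∫ t in (0:ℝ)..x, f t := funext (tail_eq hf)
  rw [this]
  exact (intervalIntegral.integral_hasDerivAt_right (tail_ii hf _ _)
    (hc.stronglyMeasurableAtFilter _ _) hc.continuousAt).const_sub _

theorem tail_tendsto {E : Type*} [NormedAddCommGroup E] [NormedSpace ℝ E] [CompleteSpace E] {f : ℝ → E}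
    (hf : ∀ a, IntegrableOn f (Ioi a)) :
    Tendsto (fun x => ∫ t in Ioi x, f t) atTop (nhds 0) := by
  have : (fun x => ∫ t in Ioi x, f t) =
      fun x => (∫ t in Ioi 0, f t) - ∫ t in (0:ℝ)..x, f t := funext (tail_eq hf)
  rw [this]
  simpa using (tendsto_const_nhds (x := ∫ t in Ioi 0, f t)).sub
    (intervalIntegral_tendsto_integral_Ioi 0 (hf 0) tendsto_id)

theorem ac_integral {f : ℝ → ℂ} {a b c : ℝ} (h : IntervalIntegrable f volume a b)
    (hc : c ∈ uIcc a b) : AbsolutelyContinuousOnInterval (fun x => ∫ v in c..x, f v) a b := by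
  have hn := h.norm.absolutelyContinuousOnInterval_intervalIntegral hc
  have hsub : ∀ u ∈ uIcc a b, ∀ v ∈ uIcc a b, IntervalIntegrable f volume u v := fun u hu v hv =>
    h.mono_set (uIcc_subset_uIcc hu hv)
  unfold AbsolutelyContinuousOnInterval at hn ⊢
  refine squeeze_zero' ?_ ?_ hn
  · exact Eventually.of_forall fun _ => Finset.sum_nonneg fun i hi => dist_nonneg
  · rw [eventually_inf_principal]
    filter_upwards with (n, I) hnI
    refine Finset.sum_le_sum fun i hi => ?_
    have h1 := (hnI.left i hi).left
    have h2 := (hnI.left i hi).right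
    rw [dist_eq_norm, dist_eq_norm, 
      intervalIntegral.integral_interval_sub_left (hsub _ hc _ h1) (hsub _ hc _ h2),
      intervalIntegral.integral_interval_sub_left (hsub _ hc _ h1).norm (hsub _ hc _ h2).norm]
    exact intervalIntegral.norm_integral_le_abs_integral_norm

/-- product rule for a `C¹` function and an absolutely continuous one -/
theorem prod_rule {F F' c : ℝ → ℂ} (hF : ∀ x, HasDerivAt F (F' x) x) (hF' : Continuous F')
    (C0 : ℂ) {x : ℝ} (hc : IntervalIntegrable c volume 0 x) {C : ℝ → ℂ}
    (hC : ∀ y, C y = C0 + ∫ t in (0:ℝ)..y, c t) :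
    IntervalIntegrable (fun t => F' t * C t + F t * c t) volume 0 x ∧
    F x * C x = F 0 * C 0 + ∫ t in (0:ℝ)..x, (F' t * C t + F t * c t) := by
  have hFc : Continuous F := continuous_iff_continuousAt.2 fun x => (hF x).continuousAt
  have hF1 : ContDiff ℝ 1 F := by
    rw [contDiff_one_iff_deriv]
    refine ⟨fun x => (hF x).differentiableAt, ?_⟩
    rwa [show deriv F = F' from funext fun x => (hF x).deriv]
  have hCe : C = fun y => C0 + ∫ t in (0:ℝ)..y, c t := funext hC
  have hCac : AbsolutelyContinuousOnInterval C 0 x := by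
    have h1 := ac_integral hc (c := 0) (by simp)
    have h2 : AbsolutelyContinuousOnInterval (fun _ : ℝ => C0) 0 x :=
      (contDiff_const (𝕜 := ℝ) (n := 1)).contDiffOn.absolutelyContinuousOnInterval
    rw [hCe]
    exact h2.add h1
  have hInt : IntervalIntegrable (fun t => F' t * C t + F t * c t) volume 0 x := by
    refine IntervalIntegrable.add ?_ ?_
    · exact (hF'.continuousOn.mul hCac.continuousOn).intervalIntegrable
    · exact hc.continuousOn_mul hFc.continuousOn
  refine ⟨hInt, ?_⟩
  have hG := ac_integral hInt (c := 0) (by simp)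
  have hFac : AbsolutelyContinuousOnInterval F 0 x :=
    hF1.contDiffOn.absolutelyContinuousOnInterval
  have hD := (hFac.smul hCac).sub hG
  obtain ⟨K, hK⟩ := hD.const_of_ae_hasDerivAt_zero (by
    filter_upwards [hc.ae_hasDerivAt_integral, hInt.ae_hasDerivAt_integral] with y h1 h2 hy
    have h1 := h1 hy 0 (by simp)
    have h2 := h2 hy 0 (by simp)
    have h3 : HasDerivAt C (c y) y := by
      rw [hCe]; exact h1.const_add _
    have h4 := ((hF y).mul h3).sub h2
    simpa using h4)
  have e0 := hK 0 (by simp)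
  have ex := hK x (by simp)
  simp at e0 ex
  rw [← e0] at ex
  linear_combination ex

theorem Q_int {r : ℝ → ℝ} (hr : Integrable r) (hr0 : ∀ x, 0 ≤ r x)
    (hxr : Integrable fun x => x * r x) (hneg : ∀ x < 0, r x = 0) (a : ℝ) :
    IntegrableOn (fun t => ∫ s in Ioi t, r s) (Ioi a) := by
  have hm : AEStronglyMeasurable (fun z : ℝ × ℝ => {z : ℝ × ℝ | z.1 < z.2}.indicator (fun z => r z.2) z)
      ((volume.restrict (Ioi a)).prod volume) := by
    refine AEStronglyMeasurable.indicator ?_ (measurableSet_lt measurable_fst measurable_snd)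
    exact hr.aestronglyMeasurable.comp_snd
  have key : Integrable (fun z : ℝ × ℝ => {z : ℝ × ℝ | z.1 < z.2}.indicator (fun z => r z.2) z)
      ((volume.restrict (Ioi a)).prod volume) := by
    have e1 : ∀ s : ℝ, (fun t : ℝ => {z : ℝ × ℝ | z.1 < z.2}.indicator (fun z => r z.2) (t, s))
        = (Iio s).indicator (fun _ => r s) := by
      intro s; ext t; simp [indicator]
    have e2 : ∀ s : ℝ, (fun t : ℝ => ‖{z : ℝ × ℝ | z.1 < z.2}.indicator (fun z => r z.2) (t, s)‖)
        = (Iio s).indicator (fun _ => r s) := by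
      intro s; ext t; simp only [indicator, mem_ofPred_eq, mem_Iio]; split_ifs <;> simp [abs_of_nonneg, hr0]
    rw [integrable_prod_iff' hm]
    constructor
    · refine Eventually.of_forall fun s => ?_
      rw [e1, integrable_indicator_iff measurableSet_Iio, IntegrableOn,
        Measure.restrict_restrict measurableSet_Iio]
      have : IsFiniteMeasure (volume.restrict (Iio s ∩ Ioi a)) := 
        ⟨by rw [Measure.restrict_apply_univ, inter_comm, Ioi_inter_Iio]; simp⟩
      exact integrable_const _
    · have : (fun s : ℝ => ∫ t in Ioi a, ‖{z : ℝ × ℝ | z.1 < z.2}.indicator (fun z => r z.2) (t, s)‖)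
          = fun s => max (s - a) 0 * r s := by
        ext s
        rw [e2, integral_indicator measurableSet_Iio, Measure.restrict_restrict measurableSet_Iio,
          inter_comm, Ioi_inter_Iio]
        simp
      rw [this]
      refine Integrable.mono' (hxr.add (hr.const_mul |a|)) ?_ ?_
      · exact ((continuous_id.sub continuous_const).max continuous_const).aestronglyMeasurable.mul hr.aestronglyMeasurable
      · refine Eventually.of_forall fun s => ?_
        have hp : 0 ≤ max (s - a) 0 := le_max_right _ _
        rw [Real.norm_of_nonneg (mul_nonneg hp (hr0 s))]
        simp only [Pi.add_apply]
        rw [← add_mul]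
        rcases lt_or_ge s 0 with h | h
        · simp [hneg s h]
        · refine mul_le_mul_of_nonneg_right (max_le ?_ ?_) (hr0 s)
          · linarith [neg_le_abs a]
          · positivity
  have h := key.integral_prod_left
  refine h.congr (Eventually.of_forall fun t => ?_)
  simp only
  rw [← integral_indicator measurableSet_Ioi]
  congr 1

theorem weight_exists {Q : ℝ → ℝ} (hQ : ∀ a, IntegrableOn Q (Ioi a)) (hQc : Continuous Q)
    (hQ0 : ∀ x, 0 ≤ Q x) :
    ∃ w : ℝ → ℝ, Continuous w ∧ Antitone w ∧ (∀ x, 1 ≤ w x) ∧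
      (∀ a, IntegrableOn (fun t => Q t * w t) (Ioi a)) ∧
      ∀ x, ∫ t in Ioi x, Q t * w t ≤ w x / 2 := by
  have hder : ∀ x, HasDerivAt (fun x => Real.exp (2 * ∫ t in Ioi x, Q t))
      (-2 * (Q x * Real.exp (2 * ∫ t in Ioi x, Q t))) x := by
    intro x
    have := (((tail_deriv hQ hQc x).const_mul 2).exp)
    convert this using 1
    ring
  have hanti : Antitone (fun x => Real.exp (2 * ∫ t in Ioi x, Q t)) := by
    refine antitone_of_deriv_nonpos (fun x => (hder x).differentiableAt) fun x => ?_
    rw [(hder x).deriv]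
    have : 0 ≤ Q x * Real.exp (2 * ∫ t in Ioi x, Q t) := mul_nonneg (hQ0 x) (Real.exp_pos _).le
    linarith
  have hcont : Continuous (fun x => Real.exp (2 * ∫ t in Ioi x, Q t)) :=
    continuous_iff_continuousAt.2 fun x => (hder x).continuousAt
  have hInt : ∀ a, IntegrableOn (fun t => Q t * Real.exp (2 * ∫ s in Ioi t, Q s)) (Ioi a) := by
    intro a
    refine Integrable.mono' ((hQ a).mul_const (Real.exp (2 * ∫ s in Ioi a, Q s)))
      (hQc.mul hcont).aestronglyMeasurable ?_
    filter_upwards [ae_restrict_mem measurableSet_Ioi] with t ht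
    rw [Real.norm_of_nonneg (mul_nonneg (hQ0 t) (Real.exp_pos _).le)]
    exact mul_le_mul_of_nonneg_left (hanti (le_of_lt ht)) (hQ0 t)
  refine ⟨fun x => Real.exp (2 * ∫ t in Ioi x, Q t), hcont, hanti, fun x => ?_, hInt, fun x => ?_⟩
  · refine Real.one_le_exp (mul_nonneg zero_le_two ?_)
    exact setIntegral_nonneg measurableSet_Ioi fun t _ => hQ0 t
  · have hlim : Tendsto (fun x => Real.exp (2 * ∫ t in Ioi x, Q t)) atTop (nhds 1) := by
      have := ((tail_tendsto hQ).const_mul 2).rexp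
      simpa using this
    have h := integral_Ioi_of_hasDerivAt_of_tendsto' (fun y _ => hder y)
      ((hInt x).const_mul (-2)) hlim
    rw [integral_const_mul] at h
    linarith

/-- `e^{-2iρx} ∫_x^∞ e^{2iρt} p(t) f(t) dt` -/
noncomputable def Nop (ρ : ℂ) (p : ℝ → ℝ) (f : ℝ → ℂ) (x : ℝ) : ℂ :=
  Complex.exp (-(2 * Complex.I * ρ * x)) *
    ∫ t in Ioi x, Complex.exp (2 * Complex.I * ρ * t) * p t * f t

theorem exp_norm_le {ρ : ℂ} (hρ : 0 ≤ ρ.im) {s : ℝ} (hs : 0 ≤ s) :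
    ‖Complex.exp (2 * Complex.I * ρ * s)‖ ≤ 1 := by
  rw [Complex.norm_exp]
  refine Real.exp_le_one_iff.2 ?_
  have : (2 * Complex.I * ρ * s).re = -(2 * ρ.im * s) := by
    simp
  rw [this]
  have : 0 ≤ 2 * ρ.im * s := by positivity
  linarith

theorem g_int {ρ : ℂ} (hρ : 0 ≤ ρ.im) {p : ℝ → ℝ} (hp : Measurable p) (hpi : Integrable p)
    (hneg : ∀ x < 0, p x = 0) {w : ℝ → ℝ} (hw : Antitone w) {f : ℝ → ℂ} (hf : Continuous f)
    {K : ℝ} (hK : 0 ≤ K) (hfK : ∀ x, ‖f x‖ ≤ K * w x) (a : ℝ) :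
    IntegrableOn (fun t : ℝ => Complex.exp (2 * Complex.I * ρ * t) * p t * f t) (Ioi a) := by
  refine Integrable.integrableOn ?_
  refine Integrable.mono' (hpi.norm.mul_const (K * w 0)) ?_ ?_
  · have h1 : Continuous fun t : ℝ => Complex.exp (2 * Complex.I * ρ * t) := by fun_prop
    exact ((h1.measurable.mul (Complex.measurable_ofReal.comp hp)).mul hf.measurable).aestronglyMeasurable
  · refine Eventually.of_forall fun t => ?_
    rcases lt_or_ge t 0 with h | h
    · simp [hneg t h]
    · rw [norm_mul, norm_mul, Complex.norm_real]
      have h2 : ‖f t‖ ≤ K * w 0 := (hfK t).trans (mul_le_mul_of_nonneg_left (hw h) hK)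
      refine mul_le_mul ?_ h2 (norm_nonneg _) (norm_nonneg _)
      exact mul_le_of_le_one_left (norm_nonneg _) (exp_norm_le hρ h)

theorem Nop_cont {ρ : ℂ} {p : ℝ → ℝ} {f : ℝ → ℂ}
    (hg : ∀ a, IntegrableOn (fun t : ℝ => Complex.exp (2 * Complex.I * ρ * t) * p t * f t) (Ioi a)) :
    Continuous (Nop ρ p f) := by
  have h1 : Continuous fun t : ℝ => Complex.exp (-(2 * Complex.I * ρ * t)) := by fun_prop
  exact h1.mul (tail_cont hg)

theorem Nop_bound {ρ : ℂ} (hρ : 0 ≤ ρ.im) {p : ℝ → ℝ} (hpi : Integrable p)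
    {w : ℝ → ℝ} (hw : Antitone w) {f : ℝ → ℂ}
    {K : ℝ} (hK : 0 ≤ K) (hfK : ∀ x, ‖f x‖ ≤ K * w x) (x : ℝ) :
    ‖Nop ρ p f x‖ ≤ K * ((∫ t in Ioi x, ‖p t‖) * w x) := by
  unfold Nop
  rw [← integral_const_mul]
  have : K * ((∫ t in Ioi x, ‖p t‖) * w x) = ∫ t in Ioi x, ‖p t‖ * (K * w x) := by
    rw [integral_mul_const]; ring
  rw [this]
  refine norm_integral_le_of_norm_le (hpi.norm.integrableOn.mul_const _) ?_
  filter_upwards [ae_restrict_mem measurableSet_Ioi] with t ht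
  have ht' : x ≤ t := le_of_lt ht
  have e : Complex.exp (-(2 * Complex.I * ρ * x)) * (Complex.exp (2 * Complex.I * ρ * t) * p t * f t)
      = Complex.exp (2 * Complex.I * ρ * (t - x : ℝ)) * p t * f t := by
    rw [← mul_assoc, ← mul_assoc, ← Complex.exp_add]
    congr 3
    push_cast; ring
  rw [e, norm_mul, norm_mul, Complex.norm_real]
  have h2 : ‖f t‖ ≤ K * w x := (hfK t).trans (mul_le_mul_of_nonneg_left (hw ht') hK)
  refine mul_le_mul ?_ h2 (norm_nonneg _) (norm_nonneg _)
  exact mul_le_of_le_one_left (norm_nonneg _) (exp_norm_le hρ (by linarith))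

theorem exists_m {ρ : ℂ} (hρ : 0 ≤ ρ.im) {p : ℝ → ℝ} (hp : Measurable p) (hpi : Integrable p)
    (hxp : Integrable fun x => x * ‖p x‖) (hneg : ∀ x < 0, p x = 0) :
    ∃ m : ℝ → ℂ, Continuous m ∧
      (∀ a, IntegrableOn (fun t : ℝ => Complex.exp (2 * Complex.I * ρ * t) * p t * m t) (Ioi a)) ∧
      (∀ a, IntegrableOn (Nop ρ p m) (Ioi a)) ∧
      Tendsto (Nop ρ p m) atTop (nhds 0) ∧
      ∀ x, m x = 1 + ∫ t in Ioi x, Nop ρ p m t := by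
  have hQi := Q_int hpi.norm (fun x => norm_nonneg (p x)) hxp (fun x hx => by simp [hneg x hx])
  have hpn : ∀ a, IntegrableOn (fun t => ‖p t‖) (Ioi a) := fun a => hpi.norm.integrableOn
  have hQc := tail_cont hpn
  have hQ0 : ∀ x, 0 ≤ ∫ t in Ioi x, ‖p t‖ := fun x =>
    setIntegral_nonneg measurableSet_Ioi fun t _ => norm_nonneg _
  obtain ⟨w, hwc, hwa, hw1, hwi, hwb⟩ := weight_exists hQi hQc hQ0
  have hwpos : ∀ x, 0 < w x := fun x => lt_of_lt_of_le one_pos (hw1 x)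
  have hNi : ∀ {f : ℝ → ℂ} (_ : Continuous f) {K : ℝ} (_ : 0 ≤ K) (_ : ∀ x, ‖f x‖ ≤ K * w x) (a : ℝ),
      IntegrableOn (Nop ρ p f) (Ioi a) := by
    intro f hf K hK hfK a
    refine Integrable.mono' ((hwi a).const_mul K)
      (Nop_cont (g_int hρ hp hpi hneg hwa hf hK hfK)).aestronglyMeasurable ?_
    exact Eventually.of_forall (Nop_bound hρ hpi hwa hK hfK)
  have hNb : ∀ {f : ℝ → ℂ} {K : ℝ} (_ : 0 ≤ K) (_ : ∀ x, ‖f x‖ ≤ K * w x) (x : ℝ),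
      ‖∫ t in Ioi x, Nop ρ p f t‖ ≤ K * (w x / 2) := by
    intro f K hK hfK x
    refine (norm_integral_le_of_norm_le ((hwi x).const_mul K)
      (Eventually.of_forall (Nop_bound hρ hpi hwa hK hfK))).trans ?_
    rw [integral_const_mul]
    exact mul_le_mul_of_nonneg_left (hwb x) hK
  have hmul : ∀ u : BoundedContinuousFunction ℝ ℂ, Continuous (fun x => (w x : ℂ) * u x) := fun u =>
    (Complex.continuous_ofReal.comp hwc).mul u.continuous
  have hmulb : ∀ (u : BoundedContinuousFunction ℝ ℂ) (x : ℝ), ‖(w x : ℂ) * u x‖ ≤ ‖u‖ * w x := by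
    intro u x
    rw [norm_mul, Complex.norm_real, Real.norm_of_nonneg (hwpos x).le, mul_comm]
    exact mul_le_mul_of_nonneg_right (u.norm_coe_le_norm x) (hwpos x).le
  have hsub : ∀ (u v : BoundedContinuousFunction ℝ ℂ) (x : ℝ),
      (∫ t in Ioi x, Nop ρ p (fun x => (w x : ℂ) * u x) t) -
        (∫ t in Ioi x, Nop ρ p (fun x => (w x : ℂ) * v x) t) =
      ∫ t in Ioi x, Nop ρ p (fun x => (w x : ℂ) * (u - v) x) t := by
    intro u v x
    rw [← integral_sub (hNi (hmul u) (norm_nonneg u) (hmulb u) x)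
      (hNi (hmul v) (norm_nonneg v) (hmulb v) x)]
    congr 1
    ext t
    unfold Nop
    rw [← mul_sub, ← integral_sub (g_int hρ hp hpi hneg hwa (hmul u) (norm_nonneg u) (hmulb u) t)
      (g_int hρ hp hpi hneg hwa (hmul v) (norm_nonneg v) (hmulb v) t)]
    congr 2
    ext s
    simp only [BoundedContinuousFunction.coe_sub, Pi.sub_apply]
    ring
  let T : BoundedContinuousFunction ℝ ℂ → BoundedContinuousFunction ℝ ℂ := fun u =>
    BoundedContinuousFunction.ofNormedAddCommGroup
      (fun x => (1 + ∫ t in Ioi x, Nop ρ p (fun x => (w x : ℂ) * u x) t) / (w x : ℂ))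
      ((continuous_const.add (tail_cont (hNi (hmul u) (norm_nonneg u) (hmulb u)))).div
        (Complex.continuous_ofReal.comp hwc) (fun x => by
          simpa using (hwpos x).ne'))
      (1 + ‖u‖ / 2) (by
        intro x
        rw [norm_div, Complex.norm_real, Real.norm_of_nonneg (hwpos x).le, div_le_iff₀ (hwpos x)]
        refine (norm_add_le _ _).trans ?_
        have := hNb (norm_nonneg u) (hmulb u) x
        rw [norm_one]
        have := hw1 x
        nlinarith)
  have hT : ∀ u x, T u x = (1 + ∫ t in Ioi x, Nop ρ p (fun x => (w x : ℂ) * u x) t) / (w x : ℂ) :=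
    fun u x => rfl
  have hcontr : ContractingWith (1/2 : NNReal) T := by
    refine ⟨by
      rw [← NNReal.coe_lt_coe]; norm_num, LipschitzWith.of_dist_le_mul fun u v => ?_⟩
    rw [BoundedContinuousFunction.dist_le (by positivity)]
    intro x
    rw [dist_eq_norm, dist_eq_norm, hT, hT, ← sub_div, add_sub_add_left_eq_sub, hsub, norm_div,
      Complex.norm_real, Real.norm_of_nonneg (hwpos x).le, div_le_iff₀ (hwpos x)]
    refine (hNb (norm_nonneg (u - v)) (hmulb (u - v)) x).trans (le_of_eq ?_)
    push_cast
    ring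
  obtain ⟨u, hu⟩ : ∃ u, T u = u := ⟨_, hcontr.fixedPoint_isFixedPt⟩
  refine ⟨fun x => (w x : ℂ) * u x, hmul u,
    g_int hρ hp hpi hneg hwa (hmul u) (norm_nonneg u) (hmulb u),
    hNi (hmul u) (norm_nonneg u) (hmulb u), ?_, fun x => ?_⟩
  · have hlim : Tendsto (fun x => ‖u‖ * ((∫ t in Ioi x, ‖p t‖) * w 0)) atTop (nhds 0) := by
      simpa using ((tail_tendsto hpn).mul_const (w 0)).const_mul ‖u‖
    refine squeeze_zero_norm' ?_ hlim
    filter_upwards [eventually_ge_atTop 0] with x hx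
    refine (Nop_bound hρ hpi hwa (norm_nonneg u) (hmulb u) x).trans ?_
    exact mul_le_mul_of_nonneg_left (mul_le_mul_of_nonneg_left (hwa hx) (hQ0 x)) (norm_nonneg u)
  · have h := hT u x
    rw [hu] at h
    simp only
    have hne : (w x : ℂ) ≠ 0 := by simpa using (hwpos x).ne'
    conv_lhs => rw [h]
    field_simp

/-- existence of the Jost solution `e(x,ρ)` of `-y'' + q y = ρ² y`
on `[0,∞)` with `e(x) e^{-iρx} → 1` and `e'(x) e^{-iρx} → iρ` as `x → ∞`,
under `∫₀^∞ (1+x)|q(x)| dx < ∞` and `Im ρ ≥ 0`. -/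
theorem statement6
    (q : ℝ → ℝ) (hmeas : Measurable q)
    (hq : IntegrableOn (fun x => (1 + x) * |q x|) (Ici 0))
    (ρ : ℂ) (hρ : 0 ≤ ρ.im) :
    ∃ e e' : ℝ → ℂ,
      SLSol (fun x => (q x : ℂ)) (ρ ^ 2) e e' (Ici 0) ∧
      Tendsto (fun x : ℝ => e x * Complex.exp (-(Complex.I * ρ * x))) atTop (nhds 1) ∧
      Tendsto (fun x : ℝ => e' x * Complex.exp (-(Complex.I * ρ * x))) atTop
        (nhds (Complex.I * ρ)) := by
  set p : ℝ → ℝ := (Ici 0).indicator q with hpdef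
  have hpq : ∀ x, 0 ≤ x → p x = q x := fun x hx => indicator_of_mem hx q
  have hneg : ∀ x < 0, p x = 0 := fun x hx => indicator_of_notMem (by simpa using hx) q
  have hp : Measurable p := hmeas.indicator measurableSet_Ici
  have hbase : Integrable (fun x => (1 + x) * ‖p x‖) := by
    rw [← integrable_indicator_iff measurableSet_Ici] at hq
    refine hq.congr (Eventually.of_forall fun x => ?_)
    rcases lt_or_ge x 0 with h | h
    · simp [hneg x h, indicator_of_notMem, h]
    · simp [hpq x h, h]
  have hpi : Integrable p := by
    refine Integrable.mono' hbase hp.aestronglyMeasurable (Eventually.of_forall fun x => ?_)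
    rcases lt_or_ge x 0 with h | h
    · simp [hneg x h]
    · have := norm_nonneg (p x)
      nlinarith
  have hxp : Integrable (fun x => x * ‖p x‖) := by
    refine (hbase.sub hpi.norm).congr (Eventually.of_forall fun x => ?_)
    simp only [Pi.sub_apply]
    ring
  obtain ⟨m, hmc, hgi, hNi, hN0, hm⟩ := exists_m hρ hp hpi hxp hneg
  have hNc : Continuous (Nop ρ p m) := Nop_cont hgi
  have hmd : ∀ x, HasDerivAt m (-Nop ρ p m x) x := by
    intro x
    have : m = fun x => 1 + ∫ t in Ioi x, Nop ρ p m t := funext hm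
    have h := (tail_deriv hNi hNc x).const_add 1
    rw [← this] at h
    exact h
  have hE : ∀ (c : ℂ) (x : ℝ), HasDerivAt (fun x : ℝ => Complex.exp (c * x)) (c * Complex.exp (c * x)) x := by
    intro c x
    have h := ((Complex.ofRealCLM.hasDerivAt (x := x)).const_mul c).cexp
    simp only [Complex.ofRealCLM_apply, Complex.ofReal_one, mul_one] at h
    rw [mul_comm c]
    exact h
  have hEc : ∀ c : ℂ, Continuous (fun x : ℝ => Complex.exp (c * x)) := fun c => by fun_prop
  set e : ℝ → ℂ := fun x => Complex.exp (Complex.I * ρ * x) * m x with he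
  set e' : ℝ → ℂ := fun x => Complex.I * ρ * e x - Complex.exp (Complex.I * ρ * x) * Nop ρ p m x with he'
  have hec : Continuous e := (hEc _).mul hmc
  have he'c : Continuous e' := (continuous_const.mul hec).sub ((hEc _).mul hNc)
  have hed : ∀ x, HasDerivAt e (e' x) x := by
    intro x
    have h := (hE (Complex.I * ρ) x).mul (hmd x)
    refine h.congr_deriv ?_
    simp only [he', he]
    ring
  have hee : ∀ x : ℝ, e x = e 0 + ∫ t in (0:ℝ)..x, e' t := by
    intro x
    rw [intervalIntegral.integral_eq_sub_of_hasDerivAt (fun t _ => hed t)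
      (he'c.intervalIntegrable _ _)]
    ring
  have hFC : ∀ x : ℝ, Complex.exp (Complex.I * ρ * x) * Nop ρ p m x =
      Complex.exp (-(Complex.I * ρ) * x) *
        ∫ t in Ioi x, Complex.exp (2 * Complex.I * ρ * t) * p t * m t := by
    intro x
    unfold Nop
    rw [← mul_assoc, ← Complex.exp_add]
    congr 2
    ring
  have hFg : ∀ t : ℝ, Complex.exp (-(Complex.I * ρ) * t) *
      (Complex.exp (2 * Complex.I * ρ * t) * p t * m t) = p t * e t := by
    intro t
    have : Complex.exp (Complex.I * ρ * t) =
        Complex.exp (-(Complex.I * ρ) * t) * Complex.exp (2 * Complex.I * ρ * t) := by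
      rw [← Complex.exp_add]
      congr 1
      ring
    simp only [he]
    rw [this]
    ring
  have hcongr : ∀ x : ℝ, 0 ≤ x → EqOn (fun t => ((p t : ℂ) - ρ ^ 2) * e t)
      (fun t => ((q t : ℂ) - ρ ^ 2) * e t) (uIcc 0 x) := by
    intro x hx t ht
    rw [uIcc_of_le hx] at ht
    simp only [hpq t ht.1]
  have hInt : ∀ x : ℝ, IntervalIntegrable (fun t => ((p t : ℂ) - ρ ^ 2) * e t) volume 0 x := by
    intro x
    have h1 : IntervalIntegrable (fun t => (p t : ℂ)) volume 0 x :=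
      (Integrable.ofReal hpi).intervalIntegrable
    exact (h1.sub (intervalIntegrable_const)).mul_continuousOn hec.continuousOn
  have hrep : ∀ x : ℝ, e' x = e' 0 + ∫ t in (0:ℝ)..x, ((p t : ℂ) - ρ ^ 2) * e t := by
    intro x
    obtain ⟨h1, h2⟩ := prod_rule (hE (-(Complex.I * ρ))) (continuous_const.mul (hEc _))
      (∫ t in Ioi (0:ℝ), Complex.exp (2 * Complex.I * ρ * t) * p t * m t) (x := x)
      (c := fun t => -(Complex.exp (2 * Complex.I * ρ * t) * p t * m t)) (tail_ii hgi 0 x).neg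
      (C := fun y => ∫ t in Ioi y, Complex.exp (2 * Complex.I * ρ * t) * p t * m t)
      (fun y => by rw [tail_eq hgi y, intervalIntegral.integral_neg, sub_eq_add_neg])
    have h3 : (∫ t in (0:ℝ)..x, ((p t : ℂ) - ρ ^ 2) * e t) =
        Complex.I * ρ * (∫ t in (0:ℝ)..x, e' t) - ∫ t in (0:ℝ)..x,
          (-(Complex.I * ρ) * Complex.exp (-(Complex.I * ρ) * t) *
            (∫ s in Ioi t, Complex.exp (2 * Complex.I * ρ * s) * p s * m s) +
          Complex.exp (-(Complex.I * ρ) * t) *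
            -(Complex.exp (2 * Complex.I * ρ * t) * p t * m t)) := by
      rw [← intervalIntegral.integral_const_mul, ← intervalIntegral.integral_sub
        (f := fun t => Complex.I * ρ * e' t)
        ((continuous_const.mul he'c).intervalIntegrable _ _) h1]
      congr 1
      ext t
      rw [mul_neg, hFg, mul_assoc (-(Complex.I * ρ)) (Complex.exp _), ← hFC]
      simp only [he']
      linear_combination (-ρ ^ 2 * e t) * Complex.I_sq
    have h4 := hee x
    have h5 := hFC x
    have h6 := hFC 0
    rw [h3]
    simp only [he']
    rw [h5, h6, h2]
    linear_combination (Complex.I * ρ) * h4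
  have hcancel : ∀ x : ℝ, Complex.exp (Complex.I * ρ * x) * Complex.exp (-(Complex.I * ρ * x)) = 1 := by
    intro x
    rw [← Complex.exp_add, add_neg_cancel, Complex.exp_zero]
  have hm1 : Tendsto m atTop (nhds 1) := by
    have : m = fun x => 1 + ∫ t in Ioi x, Nop ρ p m t := funext hm
    rw [this]
    simpa [← this] using (tail_tendsto hNi).const_add 1
  refine ⟨e, e', ⟨fun x _ => he'c.intervalIntegrable _ _, fun x hx => ?_, fun x _ => hee x,
    fun x hx => ?_⟩, ?_, ?_⟩
  · exact (hInt x).congr ((hcongr x hx).mono uIoc_subset_uIcc)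
  · rw [hrep x, intervalIntegral.integral_congr (hcongr x hx)]
  · refine hm1.congr fun x => ?_
    simp only [he]
    linear_combination (-m x) * hcancel x
  · have : Tendsto (fun x => Complex.I * ρ * m x - Nop ρ p m x) atTop (nhds (Complex.I * ρ)) := by
      simpa using (hm1.const_mul (Complex.I * ρ)).sub hN0
    refine this.congr fun x => ?_
    simp only [he', he]
    linear_combination (-(Complex.I * ρ * m x - Nop ρ p m x)) * hcancel x
end

section
/- Let q : [0,∞) → ℝ be measurable with ∫₀^∞ (1+x)·|q(x)| dx < ∞, and let λ ∈ ℝ with λ ≥ 0. If y is a solution of −y″ + q y = λ y on [0,∞) (y, y′ locally absolutely continuous, equation a.e.) with ∫₀^∞ |y(x)|² dx < ∞, then y is identically zero. -/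
open MeasureTheory Set Complex

lemma aux_ident (p f u : ℝ → ℝ)
    (h1 : ∀ x, 0 ≤ x → IntervalIntegrable u volume 0 x)
    (h2 : ∀ x, 0 ≤ x → IntervalIntegrable (fun t => p t * f t) volume 0 x)
    (h3 : ∀ x, 0 ≤ x → f x = f 0 + ∫ t in (0:ℝ)..x, u t)
    (h4 : ∀ x, 0 ≤ x → u x = u 0 + ∫ t in (0:ℝ)..x, p t * f t)
    (φ φ1 φ2 : ℝ → ℝ) (d1 : ∀ x, HasDerivAt φ (φ1 x) x) (d2 : ∀ x, HasDerivAt φ1 (φ2 x) x)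
    (hc : Continuous φ2) (a b : ℝ) (ha : 0 ≤ a) (hab : a < b)
    (e1 : φ a = 0) (e2 : φ b = 0) (e3 : φ1 b = 0) (e4 : φ1 a = 1) :
    f a = ∫ t in a..b, (p t * f t * φ t - f t * φ2 t) := by
  have hb : 0 ≤ b := by linarith
  let F : ℝ → ℝ := fun x => ∫ t in (0:ℝ)..x, u t
  let U : ℝ → ℝ := fun x => ∫ t in (0:ℝ)..x, p t * f t
  have hF : AbsolutelyContinuousOnInterval F 0 b :=
    (h1 b hb).absolutelyContinuousOnInterval_intervalIntegral (by simp)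
  have hU : AbsolutelyContinuousOnInterval U 0 b :=
    (h2 b hb).absolutelyContinuousOnInterval_intervalIntegral (by simp)
  have hsub : uIcc a b ⊆ uIcc 0 b := by
    rw [uIcc_of_le hab.le, uIcc_of_le hb]; exact Icc_subset_Icc_left ha
  have cφ1 : Continuous φ1 := continuous_iff_continuousAt.2 fun x => (d2 x).continuousAt
  have cd1 : ContDiff ℝ 1 φ1 := by
    rw [contDiff_one_iff_deriv]
    refine ⟨fun x => (d2 x).differentiableAt, ?_⟩
    rw [show deriv φ1 = φ2 from funext fun x => (d2 x).deriv]; exact hc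
  have cd : ContDiff ℝ 1 φ := by
    rw [contDiff_one_iff_deriv]
    refine ⟨fun x => (d1 x).differentiableAt, ?_⟩
    rw [show deriv φ = φ1 from funext fun x => (d1 x).deriv]; exact cφ1
  have aφ : AbsolutelyContinuousOnInterval φ a b := cd.contDiffOn.absolutelyContinuousOnInterval
  have aφ1 : AbsolutelyContinuousOnInterval φ1 a b := cd1.contDiffOn.absolutelyContinuousOnInterval
  have ac : ∀ c : ℝ, AbsolutelyContinuousOnInterval (fun _ : ℝ => c) a b := fun c =>
    (contDiff_const (n := 1)).contDiffOn.absolutelyContinuousOnInterval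
  let W : ℝ → ℝ := fun x => (u 0 + U x) * φ x - (f 0 + F x) * φ1 x
  have hW : AbsolutelyContinuousOnInterval W a b :=
    (((ac _).fun_add (hU.mono hsub)).fun_mul aφ).fun_sub (((ac _).fun_add (hF.mono hsub)).fun_mul aφ1)
  have := hW.integral_deriv_eq_sub
  have hWb : W b = 0 := by simp [W, e2, e3]
  have hWa : W a = - f a := by simp [W, e1, e4, h3 a ha, F]
  rw [hWb, hWa, sub_neg_eq_add, zero_add] at this
  rw [← this]
  apply intervalIntegral.integral_congr_ae
  filter_upwards [(h1 b hb).ae_hasDerivAt_integral, (h2 b hb).ae_hasDerivAt_integral] with x hx1 hx2 hx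
  have hx' := hsub (uIoc_subset_uIcc hx)
  have hx0 : 0 ≤ x := by rw [uIcc_of_le hb] at hx'; exact hx'.1
  have g1 : HasDerivAt F (u x) x := hx1 hx' 0 (by simp)
  have g2 : HasDerivAt U (p x * f x) x := hx2 hx' 0 (by simp)
  have := ((g2.const_add (u 0)).mul (d1 x)).sub ((g1.const_add (f 0)).mul (d2 x))
  have e : deriv W x = _ := this.deriv
  rw [e]
  have q3 := h3 x hx0
  have q4 := h4 x hx0
  change f x = f 0 + F x at q3
  change u x = u 0 + U x at q4
  rw [← q3, ← q4]; ring

lemma aux_S (lam : ℝ) (hlam : 0 ≤ lam) : ∃ S S1 : ℝ → ℝ, (∀ x, HasDerivAt S (S1 x) x) ∧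
    (∀ x, HasDerivAt S1 (-lam * S x) x) ∧ S 0 = 0 ∧ S1 0 = 1 ∧ (∀ x, 0 ≤ x → |S x| ≤ x) ∧
    ∀ x, |S1 x| ≤ 1 := by
  rcases hlam.eq_or_lt with h | h
  · subst h
    refine ⟨fun x => x, fun _ => 1, fun x => hasDerivAt_id x, fun x => ?_, rfl, rfl, ?_, ?_⟩
    · simpa using hasDerivAt_const x (1:ℝ)
    · intro x hx; simp [abs_of_nonneg hx]
    · simp
  · obtain ⟨k, hk, rfl⟩ : ∃ k : ℝ, 0 < k ∧ lam = k ^ 2 :=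
      ⟨√lam, Real.sqrt_pos.2 h, (Real.sq_sqrt hlam).symm⟩
    have hl : ∀ x : ℝ, HasDerivAt (fun x => k * x) k x := fun x => by
      simpa using (hasDerivAt_id x).const_mul k
    refine ⟨fun x => Real.sin (k * x) / k, fun x => Real.cos (k * x), fun x => ?_, fun x => ?_,
      by simp, by simp, fun x hx => ?_, fun x => Real.abs_cos_le_one _⟩
    · refine ((hl x).sin.div_const k).congr_deriv ?_; field_simp
    · refine (hl x).cos.congr_deriv ?_; field_simp
    · rw [abs_div, abs_of_pos hk, div_le_iff₀ hk]
      have := Real.abs_sin_le_abs (x := k * x)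
      rw [abs_of_nonneg (a := k * x) (by positivity)] at this
      linarith

lemma aux_ineq (q f u : ℝ → ℝ) (lam : ℝ) (hlam : 0 ≤ lam) (cf : ContinuousOn f (Ici 0))
    (h1 : ∀ x, 0 ≤ x → IntervalIntegrable u volume 0 x)
    (h2 : ∀ x, 0 ≤ x → IntervalIntegrable (fun t => (q t - lam) * f t) volume 0 x)
    (h3 : ∀ x, 0 ≤ x → f x = f 0 + ∫ t in (0:ℝ)..x, u t)
    (h4 : ∀ x, 0 ≤ x → u x = u 0 + ∫ t in (0:ℝ)..x, (q t - lam) * f t)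
    (hL2 : IntegrableOn (fun x => f x ^ 2) (Ici 0))
    (a b : ℝ) (ha : 0 ≤ a) (hab : a < b) :
    √(b - a) * |f a| ≤ 3 * (1 + ∫ t in Ici (0:ℝ), f t ^ 2) +
      ∫ t in a..b, (1 + t) * |q t| * (√(b - t) * |f t|) := by
  obtain ⟨S, S1, dS, dS1, S0, S10, bS, bS1⟩ := aux_S lam hlam
  have hL : 0 < b - a := by linarith
  have hb : 0 ≤ b := by linarith
  have hsub : uIcc a b ⊆ Ici 0 := by
    rw [uIcc_of_le hab.le]; exact fun x hx => ha.trans hx.1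
  have hsub' : uIcc a b ⊆ uIcc 0 b := by
    rw [uIcc_of_le hab.le, uIcc_of_le hb]; exact Icc_subset_Icc_left ha
  let r : ℝ → ℝ := fun t => (b - t) / (b - a)
  have dr : ∀ x, HasDerivAt r (-1 / (b - a)) x := fun x =>
    ((hasDerivAt_id x).const_sub b).div_const _
  have da : ∀ x, HasDerivAt (fun t => t - a) 1 x := fun x => (hasDerivAt_id x).sub_const a
  have dSa : ∀ x, HasDerivAt (fun t => S (t - a)) (S1 (x - a)) x := fun x => 
    (dS (x - a)).comp_sub_const x a
  have dSa1 : ∀ x, HasDerivAt (fun t => S1 (t - a)) (-lam * S (x - a)) x := fun x => 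
    (dS1 (x - a)).comp_sub_const x a
  let φ : ℝ → ℝ := fun t => S (t - a) * (r t * r t)
  let φ1 : ℝ → ℝ := fun t => S1 (t - a) * (r t * r t) - 2 / (b - a) * (S (t - a) * r t)
  let ψ : ℝ → ℝ := fun t => - 4 / (b - a) * (S1 (t - a) * r t) + 2 / (b - a) ^ 2 * S (t - a)
  let φ2 : ℝ → ℝ := fun t => - lam * φ t + ψ t
  have d1 : ∀ x, HasDerivAt φ (φ1 x) x := fun x => by
    refine ((dSa x).mul ((dr x).mul (dr x))).congr_deriv ?_
    simp only [φ1, Pi.mul_apply]; ring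
  have d2 : ∀ x, HasDerivAt φ1 (φ2 x) x := fun x => by
    refine (((dSa1 x).mul ((dr x).mul (dr x))).sub
      (((dSa x).mul (dr x)).const_mul (2 / (b - a)))).congr_deriv ?_
    simp only [φ2, φ, ψ, Pi.mul_apply]; field_simp; ring
  have cr : Continuous r := continuous_iff_continuousAt.2 fun x => (dr x).continuousAt
  have cS : Continuous (fun t => S (t - a)) :=
    continuous_iff_continuousAt.2 fun x => (dSa x).continuousAt
  have cS1 : Continuous (fun t => S1 (t - a)) :=
    continuous_iff_continuousAt.2 fun x => (dSa1 x).continuousAt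
  have cφ : Continuous φ := cS.mul (cr.mul cr)
  have cψ : Continuous ψ := (continuous_const.mul (cS1.mul cr)).add (continuous_const.mul cS)
  have hra : r a = 1 := by simp [r, hL.ne']
  have hrb : r b = 0 := by simp [r]
  have key := aux_ident (fun t => q t - lam) f u h1 h2 h3 h4 φ φ1 φ2 d1 d2
    ((continuous_const.mul cφ).add cψ) a b ha hab (by simp [φ, S0]) (by simp [φ, hrb])
    (by simp [φ1, hrb]) (by simp [φ1, hra, S0, S10])
  have cf' : ContinuousOn f (uIcc a b) := cf.mono hsub
  have iqf : IntervalIntegrable (fun t => q t * f t) volume a b := by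
    have := ((h2 b hb).mono_set hsub').add
      ((continuousOn_const (c := lam)).mul cf').intervalIntegrable
    refine this.congr (fun t _ => ?_)
    simp only [Pi.add_apply, Pi.mul_apply]; ring
  have iK : IntervalIntegrable (fun t => (1 + t) * |q t| * (√(b - t) * |f t|)) volume a b := by
    have := iqf.abs.continuousOn_mul (g := fun t => (1 + t) * √(b - t))
      (by fun_prop)
    refine this.congr (fun t _ => ?_)
    simp only [abs_mul]; ring
  have if2 : IntervalIntegrable (fun t => f t ^ 2) volume a b :=
    (cf'.pow 2).intervalIntegrable
  set N := ∫ t in Ici (0:ℝ), f t ^ 2 with hN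
  have hN2 : ∫ t in a..b, f t ^ 2 ≤ N := by
    rw [intervalIntegral.integral_of_le hab.le]
    refine setIntegral_mono_set hL2 (ae_of_all _ fun t => sq_nonneg _) ?_
    exact LE.le.eventuallyLE (fun x hx => ha.trans hx.1.le)
  set s := √(b - a) with hs
  have hs0 : 0 < s := Real.sqrt_pos.2 hL
  have hs2 : b - a = s ^ 2 := (Real.sq_sqrt hL.le).symm
  have main : s * |f a| ≤ ∫ t in a..b, ((1 + t) * |q t| * (√(b - t) * |f t|) +
      (3 * f t ^ 2 + 3 / (b - a))) := by
    have : s * |f a| ≤ s * ∫ t in a..b, |(q t - lam) * f t * φ t - f t * φ2 t| := by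
      gcongr
      rw [key]
      exact intervalIntegral.abs_integral_le_integral_abs hab.le
    refine this.trans ?_
    rw [← intervalIntegral.integral_const_mul]
    have e : ∀ t, (q t - lam) * f t * φ t - f t * φ2 t = q t * f t * φ t - f t * ψ t := fun t => by
      simp only [φ2]; ring
    refine intervalIntegral.integral_mono_on hab.le ?_ (iK.add ((if2.const_mul 3).add
      intervalIntegrable_const)) ?_
    · simp only [e]
      exact ((iqf.mul_continuousOn cφ.continuousOn).sub
        (cf'.mul cψ.continuousOn).intervalIntegrable).abs.const_mul s
    · intro t ht
      rw [e]
      have hta : 0 ≤ t - a := by linarith [ht.1]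
      have hbt : 0 ≤ b - t := by linarith [ht.2]
      have r0 : 0 ≤ r t := by positivity
      have r1 : r t ≤ 1 := by simp only [r]; rw [div_le_one hL]; linarith
      have hr : b - t = s ^ 2 * r t := by simp only [r, ← hs2]; field_simp
      have hsr : s * (r t * r t) ≤ √(b - t) := by
        apply Real.le_sqrt_of_sq_le
        rw [hr]
        have : (r t) ^ 4 ≤ r t := by
          calc (r t) ^ 4 ≤ (r t) ^ 1 := pow_le_pow_of_le_one r0 r1 (by norm_num)
            _ = r t := pow_one _
        nlinarith [sq_nonneg s]
      have b1 : s * |φ t| ≤ (1 + t) * √(b - t) := by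
        calc s * |φ t| = |S (t - a)| * (s * (r t * r t)) := by
              simp only [φ, abs_mul, abs_of_nonneg r0]; ring
          _ ≤ (1 + t) * √(b - t) := by
              refine mul_le_mul ?_ hsr (by positivity) (by linarith)
              have := bS _ hta
              linarith
      have b2 : s * |ψ t| ≤ 6 / s := by
        have : |ψ t| ≤ 4 / (b - a) * (1 * 1) + 2 / (b - a) ^ 2 * (b - a) := by
          refine (abs_add_le _ _).trans ?_
          simp only [abs_mul, abs_div, abs_neg, abs_pow, abs_of_pos hL, abs_of_nonneg r0, Nat.abs_ofNat]
          gcongr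
          · exact bS1 _
          · exact (bS _ hta).trans (by linarith [ht.2])
        rw [le_div_iff₀ hs0]
        have e' : 4 / (b - a) * (1 * 1) + 2 / (b - a) ^ 2 * (b - a) = 6 / (b - a) := by
          field_simp; norm_num
        rw [e', le_div_iff₀ hL, hs2] at this
        nlinarith
      have b3 : s * |f t * ψ t| ≤ 3 * f t ^ 2 + 3 / (b - a) := by
        have h6 : s * |f t * ψ t| ≤ |f t| * (6 / s) := by
          rw [abs_mul]; nlinarith [abs_nonneg (f t)]
        refine h6.trans ?_
        rw [hs2]
        have := sq_nonneg (|f t| - 1 / s)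
        have e5 : (|f t| - 1 / s) ^ 2 = f t ^ 2 - 2 * (|f t| * (1 / s)) + 1 / s ^ 2 := by
          rw [← sq_abs (f t)]; field_simp; ring
        rw [e5] at this
        have e6 : |f t| * (6 / s) = 6 * (|f t| * (1 / s)) := by ring
        have e7 : 3 / s ^ 2 = 3 * (1 / s ^ 2) := by ring
        rw [e6, e7]; linarith
      calc s * |q t * f t * φ t - f t * ψ t| ≤ s * (|q t * f t * φ t| + |f t * ψ t|) := by
            gcongr; exact abs_sub _ _
        _ = |q t| * |f t| * (s * |φ t|) + s * |f t * ψ t| := by rw [abs_mul, abs_mul]; ring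
        _ ≤ |q t| * |f t| * ((1 + t) * √(b - t)) + (3 * f t ^ 2 + 3 / (b - a)) := by gcongr
        _ = _ := by ring
  rw [intervalIntegral.integral_add iK ((if2.const_mul 3).add intervalIntegrable_const),
    intervalIntegral.integral_add (if2.const_mul 3) intervalIntegrable_const,
    intervalIntegral.integral_const_mul, intervalIntegral.integral_const, smul_eq_mul,
    mul_div_cancel₀ _ hL.ne'] at main
  linarith

lemma aux_step (κ κ' f : ℝ → ℝ) (C X : ℝ) (hX : 0 ≤ X) (cf : ContinuousOn f (Ici 0))
    (hκ : IntegrableOn κ (Ici 0))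
    (ineq : ∀ a b : ℝ, 0 ≤ a → a < b →
      √(b - a) * |f a| ≤ C + ∫ t in a..b, κ t * (√(b - t) * |f t|))
    (hC : 0 ≤ C)
    (i' : Integrable κ') (p' : ∀ t, 0 ≤ κ' t) (hh : ∫ t in Ioi X, κ' t ≤ 1 / 2)
    (hle : ∀ t, X ≤ t → κ t * |f t| ≤ κ' t * |f t|) :
    ∀ a, X ≤ a → f a = 0 := by
  have bound : ∀ b a, X ≤ a → a < b → √(b - a) * |f a| ≤ 2 * C := by
    intro b a ha hab
    have cg : ContinuousOn (fun t => √(b - t) * |f t|) (Icc X b) :=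
      (by fun_prop : Continuous fun t => √(b - t)).continuousOn.mul
        (cf.mono fun x hx => hX.trans hx.1).abs
    obtain ⟨m, hm, hmax⟩ := isCompact_Icc.exists_isMaxOn ⟨a, ha, hab.le⟩ cg
    refine (hmax ⟨ha, hab.le⟩).trans ?_
    change √(b - m) * |f m| ≤ 2 * C
    rcases hm.2.eq_or_lt with e | hmb
    · simp [e]; exact hC
    have h := ineq m b (hX.trans hm.1) hmb
    set G := √(b - m) * |f m| with hG
    have hG0 : 0 ≤ G := by positivity
    have hsub : Icc m b ⊆ Icc X b := Icc_subset_Icc_left hm.1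
    have iκ : IntervalIntegrable κ volume m b := by
      rw [intervalIntegrable_iff_integrableOn_Icc_of_le hmb.le]
      exact hκ.mono_set fun x hx => hX.trans (hsub hx).1
    have h2 : ∫ t in m..b, κ t * (√(b - t) * |f t|) ≤ ∫ t in m..b, κ' t * G := by
      refine intervalIntegral.integral_mono_on hmb.le (iκ.mul_continuousOn ?_)
        (i'.intervalIntegrable.mul_const G) ?_
      · rw [uIcc_of_le hmb.le]; exact cg.mono hsub
      · intro t ht
        have h5 := hmax (hsub ht)
        change √(b - t) * |f t| ≤ G at h5
        calc κ t * (√(b - t) * |f t|) = √(b - t) * (κ t * |f t|) := by ring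
          _ ≤ √(b - t) * (κ' t * |f t|) := by
            gcongr √(b - t) * ?_
            exact hle t (hsub ht).1
          _ = κ' t * (√(b - t) * |f t|) := by ring
          _ ≤ κ' t * G := by
            have := p' t
            gcongr
    have h3 : ∫ t in m..b, κ' t ≤ 1 / 2 := by
      refine le_trans ?_ hh
      rw [intervalIntegral.integral_of_le hmb.le]
      exact setIntegral_mono_set i'.integrableOn (ae_of_all _ p')
        (LE.le.eventuallyLE (fun x hx => hm.1.trans_lt hx.1))
    rw [intervalIntegral.integral_mul_const] at h2
    nlinarith
  intro a ha
  by_contra hne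
  have hpos : 0 < |f a| := abs_pos.2 hne
  have := bound (a + ((2 * C + 1) / |f a|) ^ 2) a ha (by
    have : 0 < (2 * C + 1) / |f a| := by positivity
    nlinarith)
  rw [add_sub_cancel_left, Real.sqrt_sq (by positivity), div_mul_cancel₀ _ hpos.ne'] at this
  linarith

lemma aux_cont (f u : ℝ → ℝ)
    (h1 : ∀ x, 0 ≤ x → IntervalIntegrable u volume 0 x)
    (h3 : ∀ x, 0 ≤ x → f x = f 0 + ∫ t in (0:ℝ)..x, u t) : ContinuousOn f (Ici 0) := by
  intro x hx
  have hx0 : (0:ℝ) ≤ x := hx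
  have hx1 : (0:ℝ) ≤ x + 1 := by linarith
  have h := h1 (x + 1) hx1
  have c : ContinuousOn f (Icc 0 (x + 1)) := by
    have := intervalIntegral.continuousOn_primitive_interval
      (h.1.congr_set_ae (Ioc_ae_eq_Icc (a := (0:ℝ)) (b := x + 1)).symm |> fun h => (uIcc_of_le hx1).symm ▸ h)
    rw [uIcc_of_le hx1] at this
    refine (continuousOn_const.add this).congr fun t ht => h3 t ht.1
  refine (c x ⟨hx, by linarith⟩).mono_of_mem_nhdsWithin ?_
  rw [← Ici_inter_Iic]
  exact Filter.inter_mem self_mem_nhdsWithin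
    (mem_nhdsWithin_of_mem_nhds (Iic_mem_nhds (by linarith)))

lemma aux_real (q f u : ℝ → ℝ) (lam : ℝ) (hlam : 0 ≤ lam)
    (hq : IntegrableOn (fun x => (1 + x) * |q x|) (Ici 0))
    (h1 : ∀ x, 0 ≤ x → IntervalIntegrable u volume 0 x)
    (h2 : ∀ x, 0 ≤ x → IntervalIntegrable (fun t => (q t - lam) * f t) volume 0 x)
    (h3 : ∀ x, 0 ≤ x → f x = f 0 + ∫ t in (0:ℝ)..x, u t)
    (h4 : ∀ x, 0 ≤ x → u x = u 0 + ∫ t in (0:ℝ)..x, (q t - lam) * f t)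
    (hL2 : IntegrableOn (fun x => f x ^ 2) (Ici 0)) :
    ∀ x, 0 ≤ x → f x = 0 := by
  have cf := aux_cont f u h1 h3
  let κ : ℝ → ℝ := fun x => (1 + x) * |q x|
  let κ0 : ℝ → ℝ := (Ici 0).indicator κ
  have i0 : Integrable κ0 := hq.integrable_indicator measurableSet_Ici
  have p0 : ∀ t, 0 ≤ κ0 t := fun t => indicator_nonneg (fun x hx => by
    have : (0:ℝ) ≤ x := hx
    positivity) t
  have hC : 0 ≤ 3 * (1 + ∫ t in Ici (0:ℝ), f t ^ 2) := by
    have : 0 ≤ ∫ t in Ici (0:ℝ), f t ^ 2 := integral_nonneg fun t => sq_nonneg _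
    positivity
  have step := fun (κ' : ℝ → ℝ) (X : ℝ) (hX : 0 ≤ X) =>
    aux_step κ κ' f _ X hX cf hq
      (fun a b ha hab => aux_ineq q f u lam hlam cf h1 h2 h3 h4 hL2 a b ha hab) hC
  let A : Set ℝ := {a | 0 ≤ a ∧ ∀ x, a ≤ x → f x = 0}
  have hA : A.Nonempty := by
    have ht := tendsto_integral_Ioi_zero (μ := volume) (f := κ0) Filter.tendsto_id
    obtain ⟨X, hX, hX0⟩ := ((ht.eventually (Iic_mem_nhds (by norm_num : (0:ℝ) < 1 / 2))).and
      (Filter.eventually_ge_atTop 0)).exists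
    refine ⟨X, hX0, step κ0 X hX0 i0 p0 hX fun t ht => ?_⟩
    have : κ0 t = κ t := indicator_of_mem (show t ∈ Ici 0 from hX0.trans ht) κ
    rw [this]
  have bA : BddBelow A := ⟨0, fun a ha => ha.1⟩
  set Z := sInf A with hZ
  have hZ0 : 0 ≤ Z := le_csInf hA fun a ha => ha.1
  have fZ : ∀ t, Z < t → f t = 0 := fun t ht => by
    obtain ⟨a, ha, hat⟩ := exists_lt_of_csInf_lt hA ht
    exact ha.2 t hat.le
  have cP : Continuous (fun x => ∫ t in x..Z, κ0 t) := by
    have := (i0.continuous_primitive Z).neg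
    refine this.congr fun x => (intervalIntegral.integral_symm _ _).symm
  have hev : ∀ᶠ x in nhds Z, ∫ t in x..Z, κ0 t ≤ 1 / 2 := by
    refine cP.continuousAt.eventually (Iic_mem_nhds ?_)
    simp
  obtain ⟨δ, hδ, hball⟩ := Metric.eventually_nhds_iff.1 hev
  let X := max 0 (Z - δ / 2)
  have hX0 : 0 ≤ X := le_max_left _ _
  have hXZ : X ≤ Z := max_le hZ0 (by linarith)
  have hXd : dist X Z < δ := by
    rw [Real.dist_eq, abs_sub_comm, abs_of_nonneg (by linarith)]
    have : Z - δ / 2 ≤ X := le_max_right _ _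
    linarith
  have hint := hball hXd
  have hXA : ∀ a, X ≤ a → f a = 0 := by
    refine step ((Iic Z).indicator κ0) X hX0 (i0.indicator measurableSet_Iic)
      (fun t => indicator_nonneg (fun x _ => p0 x) t) ?_ fun t ht => ?_
    · rw [setIntegral_indicator measurableSet_Iic, Ioi_inter_Iic,
        ← intervalIntegral.integral_of_le hXZ]
      exact hint
    · rcases le_or_gt t Z with h | h
      · rw [indicator_of_mem (show t ∈ Iic Z from h)]
        have : κ0 t = κ t := indicator_of_mem (show t ∈ Ici 0 from hX0.trans ht) κ
        rw [this]
      · simp [fZ t h]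
  have hZX : Z ≤ X := csInf_le bA ⟨hX0, hXA⟩
  have : X = 0 := by
    rcases max_choice 0 (Z - δ / 2) with h | h
    · exact h
    · have : X = Z - δ / 2 := h
      linarith
  rw [this] at hXA
  exact hXA

lemma aux_proj (q : ℝ → ℝ)
    (hq : IntegrableOn (fun x => (1 + x) * |q x|) (Ici 0))
    (lam : ℝ) (hlam : 0 ≤ lam)
    (y y' : ℝ → ℂ)
    (hy : SLSol (fun x => (q x : ℂ)) (lam : ℂ) y y' (Ici 0))
    (hL2 : IntegrableOn (fun x => ‖y x‖ ^ 2) (Ici 0)) (L : ℂ →L[ℝ] ℝ)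
    (hL : ∀ z, |L z| ≤ ‖z‖) :
    ∀ x, 0 ≤ x → L (y x) = 0 := by
  obtain ⟨h1, h2, h3, h4⟩ := hy
  have hc : ∀ (c : ℝ) (z : ℂ), L ((c : ℂ) * z) = c * L z := fun c z => by
    rw [← Complex.real_smul, map_smul, smul_eq_mul]
  have e : (fun t => (q t - lam) * L (y t)) = fun t => L (((q t : ℂ) - (lam : ℂ)) * y t) := by
    ext t; rw [← hc]; push_cast; rfl
  have g1 : ∀ x, 0 ≤ x → IntervalIntegrable (fun t => L (y' t)) volume 0 x := fun x hx =>
    ⟨L.integrable_comp (h1 x hx).1, L.integrable_comp (h1 x hx).2⟩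
  have g3 : ∀ x, 0 ≤ x → L (y x) = L (y 0) + ∫ t in (0:ℝ)..x, L (y' t) := fun x hx => by
    rw [L.intervalIntegral_comp_comm (h1 x hx), ← map_add, ← h3 x hx]
  have cf := aux_cont (fun t => L (y t)) _ g1 g3
  refine aux_real q (fun t => L (y t)) (fun t => L (y' t)) lam hlam hq g1 ?_ g3 ?_ ?_
  · intro x hx
    rw [e]
    exact ⟨L.integrable_comp (h2 x hx).1, L.integrable_comp (h2 x hx).2⟩
  · intro x hx
    simp only [e]
    rw [L.intervalIntegral_comp_comm (h2 x hx), ← map_add, ← h4 x hx]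
  · refine Integrable.mono' hL2 ((cf.pow 2).aestronglyMeasurable measurableSet_Ici)
      (ae_of_all _ fun t => ?_)
    rw [Real.norm_eq_abs, abs_pow]
    exact pow_le_pow_left₀ (abs_nonneg _) (hL _) 2

/-- for real `λ ≥ 0` and `∫₀^∞(1+x)|q(x)|dx < ∞`, any
square-integrable solution of `-y'' + q y = λ y` on `[0,∞)` vanishes
identically. -/
theorem statement8
    (q : ℝ → ℝ) (hmeas : Measurable q)
    (hq : IntegrableOn (fun x => (1 + x) * |q x|) (Ici 0))
    (lam : ℝ) (hlam : 0 ≤ lam)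
    (y y' : ℝ → ℂ)
    (hy : SLSol (fun x => (q x : ℂ)) (lam : ℂ) y y' (Ici 0))
    (hL2 : IntegrableOn (fun x => ‖y x‖ ^ 2) (Ici 0)) :
    ∀ x ∈ Ici (0:ℝ), y x = 0 := by
  intro x hx
  apply Complex.ext
  · simpa using aux_proj q hq lam hlam y y' hy hL2 Complex.reCLM
      (fun z => by simpa using Complex.abs_re_le_norm z) x hx
  · simpa using aux_proj q hq lam hlam y y' hy hL2 Complex.imCLM
      (fun z => by simpa using Complex.abs_im_le_norm z) x hx
end

section
/- Let q, q̃ ∈ L¹((0,π);ℝ), and for each λ ∈ ℂ let S(·,λ) and S̃(·,λ) be the solutions of −y″ + q y = λ y and −y″ + q̃ y = λ y on [0,π], respectively, with S(0,λ) = S̃(0,λ) = 0 and S′(0,λ) = S̃′(0,λ) = 1. If {λ ∈ ℂ : S(π,λ) = 0} = {λ ∈ ℂ : S̃(π,λ) = 0} and {λ ∈ ℂ : S′(π,λ) = 0} = {λ ∈ ℂ : S̃′(π,λ) = 0}, then q(x) = q̃(x) for almost every x ∈ (0,π). -/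
open MeasureTheory Set Complex

/-! ## Primitives on `[0,π]` -/

/-- `u` is a primitive of the integrable function `u'` on `[0,π]`. -/
def Prim (u u' : ℝ → ℂ) : Prop :=
  IntervalIntegrable u' volume 0 Real.pi ∧
    ∀ x ∈ Icc 0 Real.pi, u x = u 0 + ∫ t in (0:ℝ)..x, u' t

lemma ii_sub {f : ℝ → ℂ} (hf : IntervalIntegrable f volume 0 Real.pi) {x y : ℝ}
    (hx : x ∈ Icc 0 Real.pi) (hy : y ∈ Icc 0 Real.pi) : IntervalIntegrable f volume x y := by
  apply hf.mono_set
  rw [uIcc_of_le Real.pi_pos.le]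
  exact uIcc_subset_Icc hx hy

lemma Prim.ii {u u' : ℝ → ℂ} (h : Prim u u') {x : ℝ} (hx : x ∈ Icc 0 Real.pi) :
    IntervalIntegrable u' volume 0 x :=
  ii_sub h.1 (left_mem_Icc.2 Real.pi_pos.le) hx

lemma Prim.continuousOn {u u' : ℝ → ℂ} (h : Prim u u') : ContinuousOn u (Icc 0 Real.pi) := by
  have h1 : ContinuousOn (fun x => ∫ t in (0:ℝ)..x, u' t) (uIcc 0 Real.pi) :=
    intervalIntegral.continuousOn_primitive_interval' h.1 left_mem_uIcc
  rw [uIcc_of_le Real.pi_pos.le] at h1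
  exact (continuousOn_const.add h1).congr h.2

lemma ac_congr {f g : ℝ → ℂ} {a b : ℝ} (h : AbsolutelyContinuousOnInterval f a b)
    (hfg : ∀ x ∈ uIcc a b, f x = g x) : AbsolutelyContinuousOnInterval g a b := by
  rw [absolutelyContinuousOnInterval_iff] at h ⊢
  intro ε hε
  obtain ⟨δ, hδ, H⟩ := h ε hε
  refine ⟨δ, hδ, fun E hE hs => ?_⟩
  have := H E hE hs
  refine lt_of_eq_of_lt (Finset.sum_congr rfl fun i hi => ?_) this
  rw [hfg _ (hE.1 i hi).1, hfg _ (hE.1 i hi).2]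

lemma ac_const (z : ℂ) (a b : ℝ) : AbsolutelyContinuousOnInterval (fun _ : ℝ => z) a b :=
  ((LipschitzWith.const z).lipschitzOnWith (s := uIcc a b)).absolutelyContinuousOnInterval

lemma ac_prim {f : ℝ → ℂ} {a b : ℝ} (hf : IntervalIntegrable f volume a b) :
    AbsolutelyContinuousOnInterval (fun x => ∫ t in a..x, f t) a b := by
  have hre : IntervalIntegrable (fun t => (f t).re) volume a b :=
    ⟨hf.1.re, hf.2.re⟩
  have him : IntervalIntegrable (fun t => (f t).im) volume a b :=
    ⟨hf.1.im, hf.2.im⟩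
  have h1 := hre.absolutelyContinuousOnInterval_intervalIntegral (c := a) left_mem_uIcc
  have h2 := him.absolutelyContinuousOnInterval_intervalIntegral (c := a) left_mem_uIcc
  have hc : ∀ z : ℂ, AbsolutelyContinuousOnInterval (fun _ : ℝ => z) a b := fun z =>
    ac_const z a b
  have h3 := (h1.smul (hc 1)).add (h2.smul (hc I))
  refine ac_congr h3 ?_
  intro x hx
  have hfx : IntervalIntegrable f volume a x := hf.mono_set (uIcc_subset_uIcc left_mem_uIcc hx)
  have e1 : ((∫ t in a..x, f t).re) = ∫ t in a..x, (f t).re := by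
    have := Complex.reCLM.intervalIntegral_comp_comm hfx
    simpa using this.symm
  have e2 : ((∫ t in a..x, f t).im) = ∫ t in a..x, (f t).im := by
    have := Complex.imCLM.intervalIntegral_comp_comm hfx
    simpa using this.symm
  simp only [Pi.add_apply, Pi.smul_apply', ← e1, ← e2]
  simp [Complex.re_add_im]

lemma Prim.mul {u u' v v' : ℝ → ℂ} (hu : Prim u u') (hv : Prim v v') :
    Prim (fun x => u x * v x) (fun x => u' x * v x + u x * v' x) := by
  have hpi := Real.pi_pos.le
  have cu := hu.continuousOn
  have cv := hv.continuousOn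
  rw [← uIcc_of_le hpi] at cu cv
  have hi : IntervalIntegrable (fun x => u' x * v x + u x * v' x) volume 0 Real.pi :=
    (hu.1.mul_continuousOn cv).add (hv.1.continuousOn_mul cu)
  refine ⟨hi, ?_⟩
  have hc : ∀ z : ℂ, AbsolutelyContinuousOnInterval (fun _ : ℝ => z) 0 Real.pi := fun z =>
    ac_const z 0 Real.pi
  have hU := (hc (u 0)).add (ac_prim hu.1)
  have hV := (hc (v 0)).add (ac_prim hv.1)
  have hG := (hU.smul hV).sub (ac_prim hi)
  obtain ⟨C, hC⟩ := hG.const_of_ae_hasDerivAt_zero (by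
    filter_upwards [hu.1.ae_hasDerivAt_integral, hv.1.ae_hasDerivAt_integral,
      hi.ae_hasDerivAt_integral] with x h1 h2 h3 hx
    have g1 := ((hasDerivAt_const x (u 0)).add (h1 hx 0 left_mem_uIcc))
    have g2 := ((hasDerivAt_const x (v 0)).add (h2 hx 0 left_mem_uIcc))
    have g3 := (g1.mul g2).sub (h3 hx 0 left_mem_uIcc)
    refine g3.congr_deriv ?_
    rw [uIcc_of_le hpi] at hx
    simp only [Pi.add_apply, ← hu.2 x hx, ← hv.2 x hx]
    ring)
  intro x hx
  have e0 := hC 0 left_mem_uIcc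
  have e1 := hC x (by rwa [uIcc_of_le hpi])
  have e0' : u 0 * v 0 = C := by
    rw [← e0]; simp [Pi.sub_apply, Pi.smul_apply']
  have e1' : u x * v x - (∫ t in (0:ℝ)..x, (u' t * v t + u t * v' t)) = C := by
    rw [← e1, hu.2 x hx, hv.2 x hx]; simp [Pi.sub_apply, Pi.smul_apply']
  simp only []
  rw [e0', ← e1']; ring

lemma Prim.congr {u u' v v' : ℝ → ℂ} (h : Prim u u') (h1 : ∀ x ∈ Icc 0 Real.pi, u x = v x)
    (h2 : ∀ x ∈ Icc 0 Real.pi, u' x = v' x) : Prim v v' := by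
  have hpi := Real.pi_pos.le
  have h0 : (0:ℝ) ∈ Icc 0 Real.pi := left_mem_Icc.2 hpi
  refine ⟨h.1.congr ?_, fun x hx => ?_⟩
  · intro x hx
    rw [uIoc_of_le hpi] at hx
    exact h2 x (Ioc_subset_Icc_self hx)
  · rw [← h1 x hx, ← h1 0 h0, h.2 x hx]
    congr 1
    apply intervalIntegral.integral_congr
    intro t ht
    exact h2 t (uIcc_subset_Icc h0 hx ht)

lemma Prim.congr_deriv {u u' v' : ℝ → ℂ} (h : Prim u u')
    (h2 : ∀ x ∈ Icc 0 Real.pi, u' x = v' x) : Prim u v' := h.congr (fun _ _ => rfl) h2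

lemma Prim.add {u u' v v' : ℝ → ℂ} (hu : Prim u u') (hv : Prim v v') :
    Prim (fun x => u x + v x) (fun x => u' x + v' x) := by
  refine ⟨hu.1.add hv.1, fun x hx => ?_⟩
  rw [intervalIntegral.integral_add (hu.ii hx) (hv.ii hx)]
  simp only []
  rw [hu.2 x hx, hv.2 x hx]; ring

lemma Prim.const_mul {u u' : ℝ → ℂ} (hu : Prim u u') (c : ℂ) :
    Prim (fun x => c * u x) (fun x => c * u' x) := by
  refine ⟨hu.1.const_mul c, fun x hx => ?_⟩
  rw [intervalIntegral.integral_const_mul]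
  simp only []
  rw [hu.2 x hx]; ring

lemma Prim.sub {u u' v v' : ℝ → ℂ} (hu : Prim u u') (hv : Prim v v') :
    Prim (fun x => u x - v x) (fun x => u' x - v' x) :=
  (hu.add (hv.const_mul (-1))).congr (fun x _ => by ring) (fun x _ => by ring)

lemma Prim.of_hasDerivAt {u u' : ℝ → ℂ} (h : ∀ x, HasDerivAt u (u' x) x) (hc : Continuous u') :
    Prim u u' := by
  refine ⟨hc.intervalIntegrable _ _, fun x _ => ?_⟩
  rw [intervalIntegral.integral_eq_sub_of_hasDerivAt (fun t _ => h t) (hc.intervalIntegrable _ _)]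
  ring

lemma Prim.hasDerivAt {u u' : ℝ → ℂ} (h : Prim u u') (hc : ContinuousOn u' (Icc 0 Real.pi)) {x : ℝ}
    (hx : x ∈ Ioo 0 Real.pi) : HasDerivAt u (u' x) x := by
  have hn : Icc 0 Real.pi ∈ nhds x := Icc_mem_nhds hx.1 hx.2
  have h1 : HasDerivAt (fun x => ∫ t in (0:ℝ)..x, u' t) (u' x) x := by
    apply intervalIntegral.integral_hasDerivAt_right (h.ii (Ioo_subset_Icc_self hx))
    · exact hc.stronglyMeasurableAtFilter_nhdsWithin measurableSet_Icc x |>.filter_mono (by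
        rw [nhdsWithin_eq_nhds.2 hn])
    · exact hc.continuousAt hn
  have h2 := (hasDerivAt_const x (u 0)).add h1
  rw [zero_add] at h2
  apply h2.congr_of_eventuallyEq
  filter_upwards [hn] with t ht
  exact h.2 t ht

lemma Prim.ae_hasDerivAt {u u' : ℝ → ℂ} (h : Prim u u') :
    ∀ᵐ x : ℝ, x ∈ Ioo 0 Real.pi → HasDerivAt u (u' x) x := by
  filter_upwards [h.1.ae_hasDerivAt_integral] with x h1 hx
  have hn : Icc 0 Real.pi ∈ nhds x := Icc_mem_nhds hx.1 hx.2
  have h2 := (hasDerivAt_const x (u 0)).add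
    (h1 (by rw [uIcc_of_le Real.pi_pos.le]; exact Ioo_subset_Icc_self hx) 0 left_mem_uIcc)
  rw [zero_add] at h2
  apply h2.congr_of_eventuallyEq
  filter_upwards [hn] with t ht
  exact h.2 t ht

lemma Prim.sub_eq {u u' : ℝ → ℂ} (h : Prim u u') {x y : ℝ} (hx : x ∈ Icc 0 Real.pi)
    (hy : y ∈ Icc 0 Real.pi) : u y - u x = ∫ t in x..y, u' t := by
  rw [h.2 x hx, h.2 y hy, add_sub_add_left_eq_sub,
    intervalIntegral.integral_interval_sub_left (h.ii hy) (h.ii hx)]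

lemma Prim.reflect {u u' : ℝ → ℂ} (h : Prim u u') :
    Prim (fun x => u (Real.pi - x)) (fun x => - u' (Real.pi - x)) := by
  have hpi := Real.pi_pos.le
  refine ⟨?_, fun x hx => ?_⟩
  · have := (h.1.comp_sub_left Real.pi).symm
    simp only [sub_self, sub_zero] at this
    exact this.neg
  · rw [intervalIntegral.integral_neg, intervalIntegral.integral_comp_sub_left, sub_zero]
    rw [← h.sub_eq ⟨by linarith [hx.2], by linarith [hx.1]⟩ (right_mem_Icc.2 hpi)]
    ring

/-- Solutions on `[0,π]`. -/
def Sol (q : ℝ → ℂ) (lam : ℂ) (y y' : ℝ → ℂ) : Prop :=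
  Prim y y' ∧ Prim y' (fun t => (q t - lam) * y t)

lemma SLSol.sol {q : ℝ → ℂ} {lam : ℂ} {y y' : ℝ → ℂ} (h : SLSol q lam y y' (Icc 0 Real.pi)) :
    Sol q lam y y' :=
  ⟨⟨h.1 _ (right_mem_Icc.2 Real.pi_pos.le), h.2.2.1⟩,
    ⟨h.2.1 _ (right_mem_Icc.2 Real.pi_pos.le), h.2.2.2⟩⟩

lemma Sol.reflect {q : ℝ → ℂ} {lam : ℂ} {y y' : ℝ → ℂ} (h : Sol q lam y y') :
    Sol (fun t => q (Real.pi - t)) lam (fun x => y (Real.pi - x)) (fun x => - y' (Real.pi - x)) := by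
  refine ⟨h.1.reflect, ?_⟩
  exact (h.2.reflect.const_mul (-1)).congr (fun x _ => by ring) (fun x _ => by ring)

lemma Sol.const_mul {q : ℝ → ℂ} {lam : ℂ} {y y' : ℝ → ℂ} (h : Sol q lam y y') (c : ℂ) :
    Sol q lam (fun x => c * y x) (fun x => c * y' x) :=
  ⟨h.1.const_mul c, (h.2.const_mul c).congr_deriv (fun x _ => by ring)⟩

lemma Prim.conj {u u' : ℝ → ℂ} (h : Prim u u') :
    Prim (fun x => (starRingEnd ℂ) (u x)) (fun x => (starRingEnd ℂ) (u' x)) := by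
  have hL : ∀ {a b : ℝ}, IntervalIntegrable u' volume a b →
      IntervalIntegrable (fun x => (starRingEnd ℂ) (u' x)) volume a b := fun hf =>
    ⟨Complex.conjCLE.toContinuousLinearMap.integrable_comp hf.1,
      Complex.conjCLE.toContinuousLinearMap.integrable_comp hf.2⟩
  refine ⟨hL h.1, fun x hx => ?_⟩
  have := Complex.conjCLE.toContinuousLinearMap.intervalIntegral_comp_comm (h.ii hx)
  simp at this
  rw [this]
  simp only []
  rw [h.2 x hx, map_add]

lemma Sol.conj {q : ℝ → ℝ} {lam : ℂ} {y y' : ℝ → ℂ} (h : Sol (fun t => (q t : ℂ)) lam y y') :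
    Sol (fun t => (q t : ℂ)) ((starRingEnd ℂ) lam) (fun x => (starRingEnd ℂ) (y x))
      (fun x => (starRingEnd ℂ) (y' x)) :=
  ⟨h.1.conj, h.2.conj.congr_deriv (fun x _ => by simp)⟩

/-- Wronskian / Lagrange identity. -/
lemma Sol.lagrange {q : ℝ → ℂ} {l m : ℂ} {y y' z z' : ℝ → ℂ} (hy : Sol q l y y')
    (hz : Sol q m z z') :
    Prim (fun x => y x * z' x - y' x * z x) (fun x => (l - m) * (y x * z x)) :=
  ((hy.1.mul hz.2).sub (hy.2.mul hz.1)).congr_deriv (fun x _ => by ring)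

/-! ## The Volterra operator -/

abbrev EE := C(Icc (0:ℝ) Real.pi, ℂ)

/-- constant extension -/
noncomputable def extI (z : EE) : ℝ → ℂ := IccExtend Real.pi_pos.le z

lemma ext_cont (z : EE) : Continuous (extI z) := by
  unfold extI
  exact z.continuous.Icc_extend'

lemma ext_apply (z : EE) (x : Icc (0:ℝ) Real.pi) : extI z x = z x := by
  simp [extI]

lemma ext_of_mem (z : EE) {x : ℝ} (hx : x ∈ Icc (0:ℝ) Real.pi) : extI z x = z ⟨x, hx⟩ :=
  ext_apply z ⟨x, hx⟩

lemma ext_norm (z : EE) (x : ℝ) : ‖extI z x‖ ≤ ‖z‖ := z.norm_coe_le_norm _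

lemma ext_add (z w : EE) (x : ℝ) : extI (z + w) x = extI z x + extI w x := by
  simp [extI, IccExtend]

lemma ext_smul (c : ℂ) (w : EE) (x : ℝ) : extI (c • w) x = c * extI w x := by
  simp [extI, IccExtend]

lemma ii_ext {g : ℝ → ℂ} (hg : IntervalIntegrable g volume 0 Real.pi) (z : EE) {x : ℝ}
    (hx : x ∈ Icc 0 Real.pi) {h : ℝ → ℂ} (hh : Continuous h) :
    IntervalIntegrable (fun t => h t * (g t * extI z t)) volume 0 x :=
  ((ii_sub hg (left_mem_Icc.2 Real.pi_pos.le) hx).mul_continuousOn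
    (ext_cont z).continuousOn).continuousOn_mul hh.continuousOn

noncomputable def Vfun (κ : ℝ) (g : ℝ → ℂ) (z : EE) (x : ℝ) : ℂ :=
  ∫ t in (0:ℝ)..x, (((x - t) * Real.exp (-(κ * (x - t))) : ℝ) : ℂ) * (g t * extI z t)

lemma Vfun_eq {g : ℝ → ℂ} (hg : IntervalIntegrable g volume 0 Real.pi) (κ : ℝ) (z : EE) {x : ℝ}
    (hx : x ∈ Icc 0 Real.pi) :
    Vfun κ g z x = (Real.exp (-(κ * x)) : ℂ) *
      (x * (∫ t in (0:ℝ)..x, (Real.exp (κ * t) : ℂ) * (g t * extI z t)) -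
        ∫ t in (0:ℝ)..x, ((t : ℂ) * Real.exp (κ * t)) * (g t * extI z t)) := by
  rw [← intervalIntegral.integral_const_mul, ← intervalIntegral.integral_sub,
    ← intervalIntegral.integral_const_mul]
  · unfold Vfun
    congr 1
    ext t
    have : Real.exp (-(κ * (x - t))) = Real.exp (-(κ * x)) * Real.exp (κ * t) := by
      rw [← Real.exp_add]; congr 1; ring
    rw [this]; push_cast; ring
  · exact (ii_ext hg z hx (by fun_prop)).const_mul _
  · exact ii_ext hg z hx (by fun_prop)

lemma Vfun_cont {g : ℝ → ℂ} (hg : IntervalIntegrable g volume 0 Real.pi) (κ : ℝ) (z : EE) :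
    ContinuousOn (Vfun κ g z) (Icc 0 Real.pi) := by
  have hp : ∀ h : ℝ → ℂ, Continuous h →
      ContinuousOn (fun x => ∫ t in (0:ℝ)..x, h t * (g t * extI z t)) (Icc 0 Real.pi) := by
    intro h hh
    have := intervalIntegral.continuousOn_primitive_interval'
      (ii_ext hg z (right_mem_Icc.2 Real.pi_pos.le) hh) left_mem_uIcc
    rwa [uIcc_of_le Real.pi_pos.le] at this
  refine ContinuousOn.congr ?_ (fun x hx => Vfun_eq hg κ z hx)
  refine ContinuousOn.mul (by fun_prop) (ContinuousOn.sub (ContinuousOn.mul (by fun_prop)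
    (hp _ (by fun_prop))) (hp _ (by fun_prop)))

lemma ker_bound {κ s : ℝ} (hκ : 0 < κ) (hs : 0 ≤ s) : |s * Real.exp (-(κ * s))| ≤ κ⁻¹ := by
  rw [abs_of_nonneg (by positivity), Real.exp_neg]
  have h1 : κ * s ≤ Real.exp (κ * s) := by linarith [Real.add_one_le_exp (κ * s)]
  have h2 := Real.exp_pos (κ * s)
  rw [← div_eq_mul_inv, div_le_iff₀ h2, inv_mul_eq_div, le_div_iff₀ hκ]
  linarith

lemma Vfun_bound {g : ℝ → ℂ} (hg : IntervalIntegrable g volume 0 Real.pi) {κ : ℝ} (hκ : 0 < κ)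
    (z : EE) {x : ℝ} (hx : x ∈ Icc 0 Real.pi) :
    ‖Vfun κ g z x‖ ≤ (κ⁻¹ * ∫ t in (0:ℝ)..Real.pi, ‖g t‖) * ‖z‖ := by
  have hgx : IntervalIntegrable g volume 0 x := ii_sub hg (left_mem_Icc.2 Real.pi_pos.le) hx
  have h1 : ‖Vfun κ g z x‖ ≤ ∫ t in (0:ℝ)..x, (κ⁻¹ * ‖z‖) * ‖g t‖ := by
    apply intervalIntegral.norm_integral_le_of_norm_le hx.1
    · filter_upwards with t ht
      rw [norm_mul, norm_mul, Complex.norm_real, Real.norm_eq_abs]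
      have := ker_bound hκ (sub_nonneg.2 ht.2)
      have h3 := ext_norm z t
      calc _ ≤ κ⁻¹ * (‖g t‖ * ‖z‖) := by gcongr
        _ = _ := by ring
    · exact hgx.norm.const_mul _
  rw [intervalIntegral.integral_const_mul] at h1
  have h2 : ∫ t in (0:ℝ)..x, ‖g t‖ ≤ ∫ t in (0:ℝ)..Real.pi, ‖g t‖ :=
    intervalIntegral.integral_mono_interval le_rfl hx.1 hx.2
      (Filter.Eventually.of_forall fun t => norm_nonneg _) hg.norm
  calc _ ≤ κ⁻¹ * ‖z‖ * ∫ t in (0:ℝ)..x, ‖g t‖ := h1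
    _ ≤ κ⁻¹ * ‖z‖ * ∫ t in (0:ℝ)..Real.pi, ‖g t‖ := by gcongr
    _ = _ := by ring

noncomputable def VV (κ : ℝ) (hκ : 0 < κ) (g : ℝ → ℂ)
    (hg : IntervalIntegrable g volume 0 Real.pi) : EE →L[ℂ] EE :=
  LinearMap.mkContinuous
    { toFun := fun z => ⟨fun x => Vfun κ g z x, (Vfun_cont hg κ z).domRestrict⟩
      map_add' := by
        intro z w
        ext x
        change Vfun κ g (z + w) x = Vfun κ g z x + Vfun κ g w x
        unfold Vfun
        rw [← intervalIntegral.integral_add (ii_ext hg z x.2 (by fun_prop))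
          (ii_ext hg w x.2 (by fun_prop))]
        congr 1; ext t; rw [ext_add]; ring
      map_smul' := by
        intro c z
        ext x
        change Vfun κ g (c • z) x = c * Vfun κ g z x
        unfold Vfun
        rw [← intervalIntegral.integral_const_mul]
        congr 1; ext t; rw [ext_smul]; ring }
    (κ⁻¹ * ∫ t in (0:ℝ)..Real.pi, ‖g t‖) (by
      intro z
      rw [ContinuousMap.norm_le _ (by
        have : 0 ≤ ∫ t in (0:ℝ)..Real.pi, ‖g t‖ :=
          intervalIntegral.integral_nonneg Real.pi_pos.le (fun _ _ => norm_nonneg _)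
        positivity)]
      intro x
      exact Vfun_bound hg hκ z x.2)

lemma VV_apply (κ : ℝ) (hκ : 0 < κ) (g : ℝ → ℂ)
    (hg : IntervalIntegrable g volume 0 Real.pi) (z : EE) (x : Icc (0:ℝ) Real.pi) :
    VV κ hκ g hg z x = Vfun κ g z x := rfl

lemma VV_norm (κ : ℝ) (hκ : 0 < κ) (g : ℝ → ℂ)
    (hg : IntervalIntegrable g volume 0 Real.pi) :
    ‖VV κ hκ g hg‖ ≤ κ⁻¹ * ∫ t in (0:ℝ)..Real.pi, ‖g t‖ := by
  apply LinearMap.mkContinuous_norm_le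
  have : 0 ≤ ∫ t in (0:ℝ)..Real.pi, ‖g t‖ :=
          intervalIntegral.integral_nonneg Real.pi_pos.le (fun _ _ => norm_nonneg _)
  positivity

/-- the potential shifted by the spectral parameter is integrable -/
lemma ii_shift {q : ℝ → ℂ} (hq : IntervalIntegrable q volume 0 Real.pi) (lam : ℂ) :
    IntervalIntegrable (fun t => q t - lam) volume 0 Real.pi :=
  hq.sub intervalIntegrable_const

lemma VV_shift (κ : ℝ) (hκ : 0 < κ) {q : ℝ → ℂ}
    (hq : IntervalIntegrable q volume 0 Real.pi) (lam : ℂ) :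
    VV κ hκ (fun t => q t - lam) (ii_shift hq lam) =
      VV κ hκ q hq - lam • VV κ hκ (fun _ => 1) intervalIntegrable_const := by
  ext z x
  change Vfun _ _ _ _ = Vfun _ _ _ _ - lam * Vfun _ _ _ _
  unfold Vfun
  rw [← intervalIntegral.integral_const_mul, ← intervalIntegral.integral_sub
    (ii_ext hq z x.2 (by fun_prop))
    ((ii_ext intervalIntegrable_const z x.2 (by fun_prop)).const_mul _)]
  congr 1; ext t; ring

lemma exists_kappa {q : ℝ → ℂ} (hq : IntervalIntegrable q volume 0 Real.pi) (lam : ℂ) :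
    ∃ κ : ℝ, ∃ hκ : 0 < κ, IsUnit (1 - VV κ hκ (fun t => q t - lam) (ii_shift hq lam)) := by
  set M := ∫ t in (0:ℝ)..Real.pi, ‖q t - lam‖ with hM
  have hM0 : 0 ≤ M := intervalIntegral.integral_nonneg Real.pi_pos.le (fun _ _ => norm_nonneg _)
  have hκ : 0 < M + 1 := by linarith
  refine ⟨M + 1, hκ, ?_⟩
  have key : ‖VV (M + 1) hκ (fun t => q t - lam) (ii_shift hq lam)‖ < 1 → _ :=
    fun hh => isUnit_one_sub_of_norm_lt_one (R := EE →L[ℂ] EE) hh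
  refine key (lt_of_le_of_lt (VV_norm _ _ _ _) ?_)
  rw [inv_mul_eq_div, div_lt_one hκ]
  linarith

/-- Duhamel type identity -/
lemma Sol.duhamel {q : ℝ → ℂ} {lam : ℂ} {y y' w w' w'' : ℝ → ℂ} (h : Sol q lam y y')
    (h1 : ∀ x, HasDerivAt w (w' x) x) (h2 : ∀ x, HasDerivAt w' (w'' x) x) (hc : Continuous w'') :
    Prim (fun t => y' t * w t - y t * w' t) (fun t => ((q t - lam) * w t - w'' t) * y t) := by
  have c1 : Continuous w' := continuous_iff_continuousAt.2 fun x => (h2 x).continuousAt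
  exact ((h.2.mul (Prim.of_hasDerivAt h1 c1)).sub
    (h.1.mul (Prim.of_hasDerivAt h2 hc))).congr_deriv (fun x _ => by ring)

lemma Sol.volterra {q : ℝ → ℂ} {lam : ℂ} {y y' : ℝ → ℂ} (h : Sol q lam y y')
    (h0 : y 0 = 0) (h1 : y' 0 = 1) {x : ℝ} (hx : x ∈ Icc 0 Real.pi) :
    y x = x + ∫ t in (0:ℝ)..x, ((x:ℂ) - t) * ((q t - lam) * y t) := by
  have hd := h.duhamel (w := fun t => (x:ℂ) - t) (w' := fun _ => -1) (w'' := fun _ => 0)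
    (fun t => by
      simpa using ((hasDerivAt_id t).ofReal_comp.const_sub (x:ℂ)))
    (fun t => hasDerivAt_const _ _) continuous_const
  have := hd.2 x hx
  simp only [h0, h1, sub_self, mul_zero, mul_neg, mul_one, sub_neg_eq_add, zero_add, one_mul,
    ofReal_zero, sub_zero, neg_zero] at this
  rw [this]
  congr 2; ext t; ring

noncomputable def ff (κ : ℝ) : EE := ⟨fun x => (x : ℂ) * Real.exp (-(κ * x)), by fun_prop⟩

noncomputable def ee (κ : ℝ) : EE := ⟨fun x => (Real.exp (κ * x) : ℂ), by fun_prop⟩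

lemma ee_mul (κ : ℝ) : ee κ * ee (-κ) = 1 := by
  ext x
  simp only [ee, ContinuousMap.mul_apply, ContinuousMap.coe_mk, ContinuousMap.one_apply]
  rw [← ofReal_mul, ← Real.exp_add]; simp

lemma Sol.opEq {q : ℝ → ℂ} (hq : IntervalIntegrable q volume 0 Real.pi)
    {lam : ℂ} {y y' : ℝ → ℂ} (h : Sol q lam y y')
    (h0 : y 0 = 0) (h1 : y' 0 = 1) (κ : ℝ) (hκ : 0 < κ) (Y : EE) (hY : ∀ x, Y x = y x) :
    (1 - VV κ hκ (fun t => q t - lam) (ii_shift hq lam)) (ee (-κ) * Y) = ff κ := by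
  ext x
  change (ee (-κ) * Y) x - Vfun _ _ _ _ = _
  simp only [ContinuousMap.mul_apply, hY, ee, ff, ContinuousMap.coe_mk, Vfun]
  rw [h.volterra h0 h1 x.2, sub_eq_iff_eq_add, mul_add, mul_comm (x:ℂ), neg_mul]
  congr 1
  rw [← intervalIntegral.integral_const_mul]
  apply intervalIntegral.integral_congr
  intro t ht
  have ht' : t ∈ Icc 0 Real.pi := uIcc_subset_Icc (left_mem_Icc.2 Real.pi_pos.le) x.2 ht
  simp only []
  rw [ext_of_mem _ ht']
  simp only [ContinuousMap.mul_apply, hY, ContinuousMap.coe_mk]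
  have : Real.exp (-(κ * x)) = Real.exp (-(κ * (x - t))) * Real.exp (-κ * t) := by
    rw [← Real.exp_add]; congr 1; ring
  rw [this]; push_cast; ring

lemma Sol.contMap {q : ℝ → ℂ} {lam : ℂ} {y y' : ℝ → ℂ} (h : Sol q lam y y') :
    ∃ Y : EE, ∀ x, Y x = y x :=
  ⟨⟨fun x => y x, h.1.continuousOn.domRestrict⟩, fun _ => rfl⟩

lemma isUnit_inj {A : EE →L[ℂ] EE} (h : IsUnit A) {z w : EE} (hz : A z = A w) : z = w := by
  obtain ⟨u, rfl⟩ := h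
  have := congrArg (fun v => (u⁻¹).1 v) hz
  simpa only [← mul_apply_eq_comp, Units.val_inv_eq_inv_val, Units.inv_mul, one_apply_eq_self] using this

lemma isUnit_inv_apply {A : EE →L[ℂ] EE} (h : IsUnit A) {z w : EE} (hz : A z = w) :
    z = Ring.inverse A w := by
  rw [← hz, ← mul_apply_eq_comp, Ring.inverse_mul_cancel A h]; rfl

lemma isUnit_apply_inv {A : EE →L[ℂ] EE} (h : IsUnit A) (w : EE) :
    A (Ring.inverse A w) = w := by
  rw [← mul_apply_eq_comp, Ring.mul_inverse_cancel A h]; rfl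

lemma Sol.unique {q : ℝ → ℂ} (hq : IntervalIntegrable q volume 0 Real.pi)
    {lam : ℂ} {y y' z z' : ℝ → ℂ} (hy : Sol q lam y y')
    (hy0 : y 0 = 0) (hy1 : y' 0 = 1) (hz : Sol q lam z z')
    (hz0 : z 0 = 0) (hz1 : z' 0 = 1) : ∀ x ∈ Icc 0 Real.pi, y x = z x := by
  obtain ⟨Y, hY⟩ := hy.contMap
  obtain ⟨Z, hZ⟩ := hz.contMap
  obtain ⟨κ, hκ, hu⟩ := exists_kappa hq lam
  have e := isUnit_inj hu ((hy.opEq hq hy0 hy1 κ hκ Y hY).trans (hz.opEq hq hz0 hz1 κ hκ Z hZ).symm)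
  have e2 := congrArg (fun w => ee κ * w) e
  simp only [← mul_assoc, ee_mul, one_mul] at e2
  intro x hx
  rw [← hY ⟨x, hx⟩, ← hZ ⟨x, hx⟩, e2]

lemma Sol.unique' {q : ℝ → ℂ} (hq : IntervalIntegrable q volume 0 Real.pi)
    {lam : ℂ} {y y' z z' : ℝ → ℂ} (hy : Sol q lam y y')
    (hy0 : y 0 = 0) (hy1 : y' 0 = 1) (hz : Sol q lam z z')
    (hz0 : z 0 = 0) (hz1 : z' 0 = 1) : ∀ x ∈ Icc 0 Real.pi, y' x = z' x := by
  intro x hx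
  rw [hy.2.2 x hx, hz.2.2 x hx, hy1, hz1]
  congr 1
  apply intervalIntegral.integral_congr
  intro t ht
  have ht' : t ∈ Icc 0 Real.pi := uIcc_subset_Icc (left_mem_Icc.2 Real.pi_pos.le) hx ht
  simp only [Sol.unique hq hy hy0 hy1 hz hz0 hz1 t ht']

lemma Sol.exists {q : ℝ → ℂ} (hq : IntervalIntegrable q volume 0 Real.pi) (lam : ℂ) :
    ∃ y y' : ℝ → ℂ, Sol q lam y y' ∧ y 0 = 0 ∧ y' 0 = 1 := by
  obtain ⟨κ, hκ, hu⟩ := exists_kappa hq lam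
  set z := Ring.inverse (1 - VV κ hκ (fun t => q t - lam) (ii_shift hq lam)) (ff κ) with hz
  have hz1 := isUnit_apply_inv hu (ff κ)
  rw [← hz] at hz1
  have hpi : Real.pi ∈ Icc 0 Real.pi := right_mem_Icc.2 Real.pi_pos.le
  have hg := ii_shift hq lam
  let G : ℝ → ℂ := fun t => (Real.exp (κ * t) : ℂ) * ((q t - lam) * extI z t)
  have hG : IntervalIntegrable G volume 0 Real.pi := ii_ext hg z hpi (by fun_prop)
  have hG2 : IntervalIntegrable (fun t => (t : ℂ) * G t) volume 0 Real.pi :=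
    hG.continuousOn_mul (by fun_prop)
  let A : ℝ → ℂ := fun x => 1 + ∫ t in (0:ℝ)..x, G t
  have hA : Prim A G := ⟨hG, fun x _ => by simp [A]⟩
  have hB : Prim (fun x => ∫ t in (0:ℝ)..x, (t : ℂ) * G t) (fun t => (t : ℂ) * G t) :=
    ⟨hG2, fun x _ => by simp⟩
  have hid : Prim (fun x => (x : ℂ)) (fun _ => 1) :=
    Prim.of_hasDerivAt (fun x => by simpa using (hasDerivAt_id x).ofReal_comp) continuous_const
  have hy : Prim (fun x => (x : ℂ) * A x - ∫ t in (0:ℝ)..x, (t : ℂ) * G t) A :=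
    ((hid.mul hA).sub hB).congr_deriv (fun x _ => by ring)
  refine ⟨_, A, ⟨hy, hA.congr_deriv ?_⟩, by simp, by simp [A]⟩
  intro x hx
  have e := congrArg (fun w : EE => w ⟨x, hx⟩) hz1
  change z ⟨x, hx⟩ - Vfun κ _ z x = (x : ℂ) * Real.exp (-(κ * x)) at e
  rw [Vfun_eq hg κ z hx, ← ext_of_mem z hx] at e
  have e3 : (Real.exp (κ * x) : ℂ) * Real.exp (-(κ * x)) = 1 := by
    rw [← ofReal_mul, ← Real.exp_add]; simp
  have e4 : (Real.exp (κ * x) : ℂ) * extI z x = (x : ℂ) * A x - ∫ t in (0:ℝ)..x, (t : ℂ) * G t := by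
    have e5 : (∫ t in (0:ℝ)..x, ((t : ℂ) * Real.exp (κ * t)) * ((q t - lam) * extI z t)) =
      ∫ t in (0:ℝ)..x, (t : ℂ) * G t := by
      congr 1; ext t; simp only [G]; ring
    rw [e5] at e
    simp only [A]
    change extI z x - (Real.exp (-(κ * x)) : ℂ) * (x * (∫ t in (0:ℝ)..x, G t) - _) = _ at e
    linear_combination (Real.exp (κ * x) : ℂ) * e +
      (x + x * (∫ t in (0:ℝ)..x, G t) - ∫ t in (0:ℝ)..x, (t : ℂ) * G t) * e3
  rw [← e4]
  simp only [G]; ring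

lemma abstract_diff {E : Type*} [NormedAddCommGroup E] [NormedSpace ℂ E] [CompleteSpace E]
    (V W : E →L[ℂ] E) (f : E) (l : ℂ) (hAl : IsUnit (1 - (V - l • W))) (Z : ℂ → E)
    (hZ : ∀ lam : ℂ, (1 - (V - lam • W)) (Z lam) = f) : DifferentiableAt ℂ Z l := by
  let A : ℂ → (E →L[ℂ] E) := fun lam => 1 - (V - lam • W)
  have hAd : Differentiable ℂ A :=
    ((differentiable_id.smul_const W).const_sub _).const_sub _
  have hev : ∀ᶠ lam in nhds l, IsUnit (A lam) := by
    have hm : l ∈ A ⁻¹' {a | IsUnit a} := by simpa using hAl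
    filter_upwards [(Units.isOpen.preimage hAd.continuous).mem_nhds hm] with lam h
    simpa using h
  have heq : Z =ᶠ[nhds l] fun lam => Ring.inverse (A lam) f := by
    filter_upwards [hev] with lam hl
    rw [← hZ lam, ← mul_apply_eq_comp, Ring.inverse_mul_cancel (A lam) hl]; rfl
  refine DifferentiableAt.congr_of_eventuallyEq ?_ heq
  have hI : DifferentiableAt ℂ (fun lam => Ring.inverse (A lam)) l := by
    have := differentiableAt_inverse (𝕜 := ℂ) (x := A l) hAl
    exact this.comp l (hAd l)
  exact hI.clm_apply (differentiableAt_const _)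

/-- The solution depends holomorphically on the spectral parameter. -/
lemma family_differentiable {q : ℝ → ℂ} (hq : IntervalIntegrable q volume 0 Real.pi)
    {S S' : ℂ → ℝ → ℂ} (hS : ∀ lam, Sol q lam (S lam) (S' lam) ∧ S lam 0 = 0 ∧ S' lam 0 = 1)
    (Y : ℂ → EE) (hY : ∀ lam x, Y lam x = S lam x) : Differentiable ℂ Y := by
  intro l
  obtain ⟨κ, hκ, hu⟩ := exists_kappa hq l
  have h1 := fun lam => (hS lam).1.opEq hq (hS lam).2.1 (hS lam).2.2 κ hκ (Y lam) (hY lam)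
  rw [VV_shift κ hκ hq l] at hu
  have h1' := fun lam => (congrArg (fun V => (1 - V) (ee (-κ) * Y lam)) (VV_shift κ hκ hq lam)).symm.trans (h1 lam)
  have h2 := abstract_diff _ _ _ _ hu _ h1'
  have h3 : Y = fun lam => ee κ * (ee (-κ) * Y lam) := by
    ext1 lam; rw [← mul_assoc, ee_mul, one_mul]
  rw [h3]
  exact (differentiableAt_const _).mul h2

/-! ## Families of solutions -/

def Fam (q : ℝ → ℂ) (S S' : ℂ → ℝ → ℂ) : Prop :=
  ∀ lam, Sol q lam (S lam) (S' lam) ∧ S lam 0 = 0 ∧ S' lam 0 = 1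

lemma Fam.contMap {q : ℝ → ℂ} {S S' : ℂ → ℝ → ℂ} (h : Fam q S S') :
    ∃ Y : ℂ → EE, ∀ lam x, Y lam x = S lam x := by
  choose Y hY using fun lam => (h lam).1.contMap
  exact ⟨Y, hY⟩

lemma func_diff {g : ℝ → ℂ} (hg : IntervalIntegrable g volume 0 Real.pi) {Y : ℂ → EE}
    (hY : Differentiable ℂ Y) :
    Differentiable ℂ (fun lam => ∫ t in (0:ℝ)..Real.pi, g t * extI (Y lam) t) := by
  have hpi : Real.pi ∈ Icc 0 Real.pi := right_mem_Icc.2 Real.pi_pos.le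
  have hi : ∀ z : EE, IntervalIntegrable (fun t => g t * extI z t) volume 0 Real.pi := fun z => by
    simpa using ii_ext hg z hpi (h := fun _ => 1) continuous_const
  let L : EE →L[ℂ] ℂ := LinearMap.mkContinuous
    { toFun := fun z => ∫ t in (0:ℝ)..Real.pi, g t * extI z t
      map_add' := by
        intro z w
        rw [← intervalIntegral.integral_add (hi z) (hi w)]
        congr 1; ext t; rw [ext_add]; ring
      map_smul' := by
        intro c z
        rw [RingHom.id_apply, smul_eq_mul, ← intervalIntegral.integral_const_mul]
        congr 1; ext t; rw [ext_smul]; ring }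
    (∫ t in (0:ℝ)..Real.pi, ‖g t‖) (by
      intro z
      rw [← intervalIntegral.integral_mul_const]
      apply intervalIntegral.norm_integral_le_of_norm_le Real.pi_pos.le
      · filter_upwards with t ht
        rw [norm_mul]
        have := ext_norm z t
        gcongr
      · exact hg.norm.mul_const _)
  exact L.differentiable.comp hY

lemma Fam.diff {q : ℝ → ℂ} (hq : IntervalIntegrable q volume 0 Real.pi) {S S' : ℂ → ℝ → ℂ}
    (h : Fam q S S') {x : ℝ} (hx : x ∈ Icc 0 Real.pi) : Differentiable ℂ (fun lam => S lam x) := by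
  obtain ⟨Y, hY⟩ := h.contMap
  have hd := family_differentiable hq h Y hY
  have : (fun lam => S lam x) = fun lam => Y lam ⟨x, hx⟩ := by ext lam; rw [hY]
  rw [this]
  exact (ContinuousMap.evalCLM ℂ (⟨x, hx⟩ : Icc (0:ℝ) Real.pi)).differentiable.comp hd

lemma Fam.diff_int {q : ℝ → ℂ} (hq : IntervalIntegrable q volume 0 Real.pi) {S S' : ℂ → ℝ → ℂ}
    (h : Fam q S S') {g : ℝ → ℂ} (hg : IntervalIntegrable g volume 0 Real.pi) :
    Differentiable ℂ (fun lam => ∫ t in (0:ℝ)..Real.pi, g t * S lam t) := by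
  obtain ⟨Y, hY⟩ := h.contMap
  have hd := family_differentiable hq h Y hY
  have : (fun lam => ∫ t in (0:ℝ)..Real.pi, g t * S lam t) =
      (fun lam => ∫ t in (0:ℝ)..Real.pi, g t * extI (Y lam) t) := by
    ext lam
    apply intervalIntegral.integral_congr
    intro t ht
    rw [uIcc_of_le Real.pi_pos.le] at ht
    simp only [ext_of_mem (Y lam) ht, hY]
  rw [this]
  exact func_diff hg hd

lemma Fam.ii {q : ℝ → ℂ} {S S' : ℂ → ℝ → ℂ}
    (h : Fam q S S') {g : ℝ → ℂ} (hg : IntervalIntegrable g volume 0 Real.pi) (lam : ℂ) :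
    IntervalIntegrable (fun t => g t * S lam t) volume 0 Real.pi :=
  hg.mul_continuousOn (by rw [uIcc_of_le Real.pi_pos.le]; exact (h lam).1.1.continuousOn)

lemma Fam.diff' {q : ℝ → ℂ} (hq : IntervalIntegrable q volume 0 Real.pi) {S S' : ℂ → ℝ → ℂ}
    (h : Fam q S S') : Differentiable ℂ (fun lam => S' lam Real.pi) := by
  have : (fun lam => S' lam Real.pi) = fun lam => 1 + ((∫ t in (0:ℝ)..Real.pi, q t * S lam t) -
      lam * ∫ t in (0:ℝ)..Real.pi, 1 * S lam t) := by
    ext lam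
    rw [(h lam).1.2.2 _ (right_mem_Icc.2 Real.pi_pos.le), (h lam).2.2,
      ← intervalIntegral.integral_const_mul, ← intervalIntegral.integral_sub (h.ii hq lam)
      ((h.ii intervalIntegrable_const lam).const_mul _)]
    congr 2; ext t; ring
  rw [this]
  have h1 := h.diff_int hq hq
  have h2 := h.diff_int hq (g := fun _ => 1) intervalIntegrable_const
  fun_prop

lemma Fam.conj {q : ℝ → ℝ} (hq : IntervalIntegrable (fun t => (q t : ℂ)) volume 0 Real.pi)
    {S S' : ℂ → ℝ → ℂ} (h : Fam (fun t => (q t : ℂ)) S S') (lam : ℂ) {x : ℝ}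
    (hx : x ∈ Icc 0 Real.pi) :
    S ((starRingEnd ℂ) lam) x = (starRingEnd ℂ) (S lam x) ∧
    S' ((starRingEnd ℂ) lam) x = (starRingEnd ℂ) (S' lam x) := by
  have h1 := h ((starRingEnd ℂ) lam)
  have h2 := (h lam).1.conj
  have e0 : (starRingEnd ℂ) (S lam 0) = 0 := by rw [(h lam).2.1]; simp
  have e1 : (starRingEnd ℂ) (S' lam 0) = 1 := by rw [(h lam).2.2]; simp
  exact ⟨Sol.unique hq h1.1 h1.2.1 h1.2.2 h2 e0 e1 x hx,
    Sol.unique' hq h1.1 h1.2.1 h1.2.2 h2 e0 e1 x hx⟩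

lemma Fam.int_pos {q : ℝ → ℂ} {S S' : ℂ → ℝ → ℂ}
    (h : Fam q S S') (lam : ℂ) {x : ℝ} (hx : x ∈ Ioc 0 Real.pi) :
    0 < ∫ t in (0:ℝ)..x, ‖S lam t‖ ^ 2 := by
  have hsub : Icc 0 x ⊆ Icc 0 Real.pi := Icc_subset_Icc_right hx.2
  apply intervalIntegral.integral_pos hx.1
  · exact ((h lam).1.1.continuousOn.mono hsub).norm.pow 2
  · intro t _; positivity
  · by_contra hcon
    push Not at hcon
    have h0 : ∀ t ∈ Icc 0 x, S lam t = 0 := by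
      intro t ht
      have := hcon t ht
      have h3 : ‖S lam t‖ ^ 2 = 0 := le_antisymm this (by positivity)
      simpa using h3
    have h1 : ∀ t ∈ Icc 0 x, S' lam t = 1 := by
      intro t ht
      rw [(h lam).1.2.2 t (hsub ht), (h lam).2.2]
      have : ∫ s in (0:ℝ)..t, (q s - lam) * S lam s = ∫ s in (0:ℝ)..t, (0:ℂ) := by
        apply intervalIntegral.integral_congr
        intro s hs
        rw [uIcc_of_le ht.1] at hs
        simp only [h0 s ⟨hs.1, hs.2.trans ht.2⟩, mul_zero]
      rw [this]; simp
    have h2 := (h lam).1.1.2 x (hsub (right_mem_Icc.2 hx.1.le))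
    have : ∫ s in (0:ℝ)..x, S' lam s = ∫ s in (0:ℝ)..x, (1:ℂ) := by
      apply intervalIntegral.integral_congr
      intro s hs
      rw [uIcc_of_le hx.1.le] at hs
      simp only [h1 s hs]
    rw [this, h0 x (right_mem_Icc.2 hx.1.le), (h lam).2.1] at h2
    simp at h2
    have h4 : x = 0 := by exact_mod_cast h2.symm
    linarith [hx.1]

lemma Fam.lagrange {q : ℝ → ℂ} {S S' : ℂ → ℝ → ℂ}
    (h : Fam q S S') (l m : ℂ) {x : ℝ} (hx : x ∈ Icc 0 Real.pi) :
    S l x * S' m x - S' l x * S m x = (l - m) * ∫ t in (0:ℝ)..x, S l t * S m t := by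
  have := ((h l).1.lagrange (h m).1).2 x hx
  simp only [(h l).2.1, (h m).2.1, (h l).2.2, (h m).2.2] at this
  rw [this, intervalIntegral.integral_const_mul]; ring

lemma Fam.int_conj {q : ℝ → ℝ} (hq : IntervalIntegrable (fun t => (q t : ℂ)) volume 0 Real.pi)
    {S S' : ℂ → ℝ → ℂ} (h : Fam (fun t => (q t : ℂ)) S S') (lam : ℂ) {x : ℝ}
    (hx : x ∈ Ioc 0 Real.pi) :
    (∫ t in (0:ℝ)..x, S lam t * S ((starRingEnd ℂ) lam) t) ≠ 0 := by
  have e : ∫ t in (0:ℝ)..x, S lam t * S ((starRingEnd ℂ) lam) t =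
      ((∫ t in (0:ℝ)..x, ‖S lam t‖ ^ 2 : ℝ) : ℂ) := by
    rw [← intervalIntegral.integral_ofReal]
    apply intervalIntegral.integral_congr
    intro t ht
    rw [uIcc_of_le hx.1.le] at ht
    simp only []
    rw [(h.conj hq lam ⟨ht.1, ht.2.trans hx.2⟩).1, Complex.mul_conj, Complex.normSq_eq_norm_sq]
  rw [e]
  exact_mod_cast (h.int_pos lam hx).ne'

lemma Fam.real_zero {q : ℝ → ℝ} (hq : IntervalIntegrable (fun t => (q t : ℂ)) volume 0 Real.pi)
    {S S' : ℂ → ℝ → ℂ} (h : Fam (fun t => (q t : ℂ)) S S') (lam : ℂ) {x : ℝ}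
    (hx : x ∈ Ioc 0 Real.pi) (h0 : S lam x = 0 ∨ S' lam x = 0) :
    (starRingEnd ℂ) lam = lam := by
  have hx' := Ioc_subset_Icc_self hx
  have hl := h.lagrange lam ((starRingEnd ℂ) lam) hx'
  rw [(h.conj hq lam hx').1, (h.conj hq lam hx').2] at hl
  have hz : S lam x * (starRingEnd ℂ) (S' lam x) - S' lam x * (starRingEnd ℂ) (S lam x) = 0 := by
    rcases h0 with h0 | h0 <;> simp [h0]
  rw [hz] at hl
  have := (mul_eq_zero.1 hl.symm).resolve_right (h.int_conj hq lam hx)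
  exact (sub_eq_zero.1 this).symm

lemma Fam.simple_aux {q : ℝ → ℝ} (hq : IntervalIntegrable (fun t => (q t : ℂ)) volume 0 Real.pi)
    {S S' : ℂ → ℝ → ℂ} (h : Fam (fun t => (q t : ℂ)) S S') (l : ℂ)
    (h0 : S l Real.pi = 0 ∨ S' l Real.pi = 0) :
    deriv (fun lam => S lam Real.pi * S' l Real.pi - S' lam Real.pi * S l Real.pi) l ≠ 0 := by
  have hpi : Real.pi ∈ Ioc 0 Real.pi := right_mem_Ioc.2 Real.pi_pos
  have hl := h.real_zero hq l hpi h0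
  have hne := h.int_conj hq l hpi
  rw [hl] at hne
  have hc : IntervalIntegrable (S l) volume 0 Real.pi :=
    ContinuousOn.intervalIntegrable (by
      rw [uIcc_of_le Real.pi_pos.le]; exact (h l).1.1.continuousOn)
  have hG := h.diff_int hq hc
  have e : (fun lam => S lam Real.pi * S' l Real.pi - S' lam Real.pi * S l Real.pi) =
      fun lam => (lam - l) * ∫ t in (0:ℝ)..Real.pi, S l t * S lam t := by
    ext lam
    rw [h.lagrange lam l (Ioc_subset_Icc_self hpi)]
    simp only [mul_comm]
  rw [e]
  have hd := ((hasDerivAt_id l).sub_const l).mul (hG l).hasDerivAt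
  have hd2 := hd.deriv
  simp only [id, sub_self, zero_mul, add_zero, one_mul] at hd2
  change deriv (fun lam => (lam - l) * ∫ t in (0:ℝ)..Real.pi, S l t * S lam t) l = _ at hd2
  rw [hd2]
  exact hne

lemma Fam.simple {q : ℝ → ℝ} (hq : IntervalIntegrable (fun t => (q t : ℂ)) volume 0 Real.pi)
    {S S' : ℂ → ℝ → ℂ} (h : Fam (fun t => (q t : ℂ)) S S') (l : ℂ)
    (h0 : S l Real.pi = 0) : deriv (fun lam => S lam Real.pi) l ≠ 0 := by
  have := h.simple_aux hq l (Or.inl h0)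
  intro hc
  apply this
  have hd := h.diff hq (right_mem_Icc.2 Real.pi_pos.le)
  simp only [h0, mul_zero, sub_zero]
  rw [deriv_mul_const (hd l), hc, zero_mul]

lemma Fam.simple' {q : ℝ → ℝ} (hq : IntervalIntegrable (fun t => (q t : ℂ)) volume 0 Real.pi)
    {S S' : ℂ → ℝ → ℂ} (h : Fam (fun t => (q t : ℂ)) S S') (l : ℂ)
    (h0 : S' l Real.pi = 0) : deriv (fun lam => S' lam Real.pi) l ≠ 0 := by
  have := h.simple_aux hq l (Or.inr h0)
  intro hc
  apply this
  have hd := h.diff' hq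
  simp only [h0, mul_zero, zero_sub]
  rw [deriv.fun_neg, deriv_mul_const (hd l), hc, zero_mul, neg_zero]

/-! ## Asymptotics -/

lemma norm_cos_le_exp (z : ℂ) : ‖Complex.cos z‖ ≤ Real.exp |z.im| := by
  rw [Complex.cos]
  have h1 : ‖cexp (z * I)‖ ≤ Real.exp |z.im| := by
    rw [Complex.norm_exp]; simp [neg_le_abs]
  have h2 : ‖cexp (-z * I)‖ ≤ Real.exp |z.im| := by
    rw [Complex.norm_exp]; simp [le_abs_self]
  rw [norm_div, Complex.norm_two]
  have := norm_add_le (cexp (z * I)) (cexp (-z * I))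
  linarith

lemma norm_sin_le_exp (z : ℂ) : ‖Complex.sin z‖ ≤ Real.exp |z.im| := by
  rw [Complex.sin]
  have h1 : ‖cexp (z * I)‖ ≤ Real.exp |z.im| := by
    rw [Complex.norm_exp]; simp [neg_le_abs]
  have h2 : ‖cexp (-z * I)‖ ≤ Real.exp |z.im| := by
    rw [Complex.norm_exp]; simp [le_abs_self]
  rw [norm_div, Complex.norm_two, norm_mul, Complex.norm_I, mul_one]
  have := norm_sub_le (cexp (-z * I)) (cexp (z * I))
  linarith

lemma im_mul_abs (k : ℂ) {s : ℝ} (hs : 0 ≤ s) : |(k * (s:ℂ)).im| = |k.im| * s := by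
  simp [abs_mul, abs_of_nonneg hs]

lemma Sol.duhamel_sin {q : ℝ → ℂ} {k : ℂ} (hk : k ≠ 0) {y y' : ℝ → ℂ} (h : Sol q (k^2) y y')
    (h0 : y 0 = 0) (h1 : y' 0 = 1) {x : ℝ} (hx : x ∈ Icc 0 Real.pi) :
    y x = Complex.sin (k * x) / k +
      ∫ t in (0:ℝ)..x, q t * (Complex.sin (k * ((x - t : ℝ) : ℂ)) / k) * y t := by
  have hl : ∀ t : ℝ, HasDerivAt (fun t : ℝ => k * ((x - t : ℝ) : ℂ)) (-k) t := fun t => by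
    have := (((hasDerivAt_id t).const_sub x).ofReal_comp).const_mul k
    simpa using this
  have hd := h.duhamel (w := fun t : ℝ => Complex.sin (k * ((x - t : ℝ) : ℂ)) / k)
    (w' := fun t : ℝ => - Complex.cos (k * ((x - t : ℝ) : ℂ)))
    (w'' := fun t : ℝ => - k * Complex.sin (k * ((x - t : ℝ) : ℂ)))
    (fun t => by
      have := ((Complex.hasDerivAt_sin _).comp t (hl t)).div_const k
      refine HasDerivAt.congr_deriv this ?_
      field_simp)
    (fun t => by
      have := ((Complex.hasDerivAt_cos _).comp t (hl t)).neg
      refine HasDerivAt.congr_deriv this ?_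
      ring) (by fun_prop)
  have := hd.2 x hx
  simp only [h0, h1, sub_self, Complex.ofReal_zero, mul_zero, Complex.sin_zero, zero_div,
    Complex.cos_zero, sub_zero, zero_mul, one_mul, mul_neg, mul_one, zero_sub, neg_neg, neg_zero] at this
  rw [this]
  congr 1
  apply intervalIntegral.integral_congr
  intro t _
  simp only []
  field_simp
  ring

lemma Sol.duhamel_cos {q : ℝ → ℂ} {k : ℂ} {y y' : ℝ → ℂ} (h : Sol q (k^2) y y')
    (h0 : y 0 = 0) (h1 : y' 0 = 1) {x : ℝ} (hx : x ∈ Icc 0 Real.pi) :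
    y' x = Complex.cos (k * x) +
      ∫ t in (0:ℝ)..x, q t * (Complex.cos (k * ((x - t : ℝ) : ℂ))) * y t := by
  have hl : ∀ t : ℝ, HasDerivAt (fun t : ℝ => k * ((x - t : ℝ) : ℂ)) (-k) t := fun t => by
    have := (((hasDerivAt_id t).const_sub x).ofReal_comp).const_mul k
    simpa using this
  have hd := h.duhamel (w := fun t : ℝ => Complex.cos (k * ((x - t : ℝ) : ℂ)))
    (w' := fun t : ℝ => k * Complex.sin (k * ((x - t : ℝ) : ℂ)))
    (w'' := fun t : ℝ => - k^2 * Complex.cos (k * ((x - t : ℝ) : ℂ)))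
    (fun t => by
      have := ((Complex.hasDerivAt_cos _).comp t (hl t))
      refine HasDerivAt.congr_deriv this ?_
      ring)
    (fun t => by
      have := ((Complex.hasDerivAt_sin _).comp t (hl t)).const_mul k
      refine HasDerivAt.congr_deriv this ?_
      ring) (by fun_prop)
  have := hd.2 x hx
  simp only [h0, h1, sub_self, Complex.ofReal_zero, mul_zero, Complex.sin_zero,
    Complex.cos_zero, sub_zero, zero_mul, one_mul, mul_one] at this
  rw [this]
  congr 1
  apply intervalIntegral.integral_congr
  intro t _
  simp only []
  ring

/-- general kernel bound -/
lemma ker_int_bound {q : ℝ → ℂ} (hq : IntervalIntegrable q volume 0 Real.pi) {y : ℝ → ℂ}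
    {c : ℝ → ℂ} {τ C m x : ℝ} (hx : x ∈ Icc 0 Real.pi) (hC : 0 ≤ C) (hm : 0 ≤ m)
    (hc : ∀ t ∈ Icc 0 x, ‖c t‖ ≤ C * Real.exp (τ * (x - t)))
    (hy : ∀ t ∈ Icc 0 x, ‖y t‖ ≤ m * Real.exp (τ * t)) :
    ‖∫ t in (0:ℝ)..x, q t * c t * y t‖ ≤
      C * m * Real.exp (τ * x) * ∫ t in (0:ℝ)..Real.pi, ‖q t‖ := by
  have hgx : IntervalIntegrable q volume 0 x := ii_sub hq (left_mem_Icc.2 Real.pi_pos.le) hx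
  have h1 : ‖∫ t in (0:ℝ)..x, q t * c t * y t‖ ≤
      ∫ t in (0:ℝ)..x, (C * m * Real.exp (τ * x)) * ‖q t‖ := by
    apply intervalIntegral.norm_integral_le_of_norm_le hx.1
    · filter_upwards with t ht
      rw [norm_mul, norm_mul]
      have e : Real.exp (τ * x) = Real.exp (τ * (x - t)) * Real.exp (τ * t) := by
        rw [← Real.exp_add]; congr 1; ring
      have a := hc t (Ioc_subset_Icc_self ht)
      have b := hy t (Ioc_subset_Icc_self ht)
      calc _ ≤ ‖q t‖ * (C * Real.exp (τ * (x - t))) * (m * Real.exp (τ * t)) := by gcongr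
        _ = _ := by rw [e]; ring
    · exact hgx.norm.const_mul _
  rw [intervalIntegral.integral_const_mul] at h1
  have h2 : ∫ t in (0:ℝ)..x, ‖q t‖ ≤ ∫ t in (0:ℝ)..Real.pi, ‖q t‖ :=
    intervalIntegral.integral_mono_interval le_rfl hx.1 hx.2
      (Filter.Eventually.of_forall fun t => norm_nonneg _) hq.norm
  refine h1.trans ?_
  gcongr

lemma Sol.bound {q : ℝ → ℂ} (hq : IntervalIntegrable q volume 0 Real.pi) {k : ℂ} (hk : k ≠ 0)
    (hM : 2 * (∫ t in (0:ℝ)..Real.pi, ‖q t‖) ≤ ‖k‖)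
    {y y' : ℝ → ℂ} (h : Sol q (k^2) y y') (h0 : y 0 = 0) (h1 : y' 0 = 1) {x : ℝ}
    (hx : x ∈ Icc 0 Real.pi) :
    ‖y x‖ ≤ 2 / ‖k‖ * Real.exp (|k.im| * x) := by
  set M := ∫ t in (0:ℝ)..Real.pi, ‖q t‖ with hMd
  have hk' : 0 < ‖k‖ := norm_pos_iff.2 hk
  have hcont : ContinuousOn (fun x => Real.exp (-(|k.im| * x)) * ‖y x‖) (Icc 0 Real.pi) := by
    apply ContinuousOn.mul (by fun_prop) h.1.continuousOn.norm
  obtain ⟨x0, hx0, hmax⟩ := isCompact_Icc.exists_isMaxOn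
    (nonempty_Icc.2 Real.pi_pos.le) hcont
  set m := Real.exp (-(|k.im| * x0)) * ‖y x0‖ with hmd
  have hm : 0 ≤ m := by positivity
  have hy : ∀ t ∈ Icc 0 Real.pi, ‖y t‖ ≤ m * Real.exp (|k.im| * t) := by
    intro t ht
    have h2 : Real.exp (-(|k.im| * t)) * ‖y t‖ ≤ m := hmax ht
    calc ‖y t‖ = (Real.exp (-(|k.im| * t)) * ‖y t‖) * Real.exp (|k.im| * t) := by
          rw [mul_right_comm, ← Real.exp_add]; simp
      _ ≤ _ := by gcongr
  have hker := ker_int_bound hq (y := y) (c := fun t => Complex.sin (k * ((x0 - t : ℝ) : ℂ)) / k)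
    (τ := |k.im|) (C := 1 / ‖k‖) (m := m) hx0 (by positivity) hm
    (fun t ht => by
      rw [norm_div, div_eq_mul_one_div, mul_comm]
      have := norm_sin_le_exp (k * ((x0 - t : ℝ) : ℂ))
      rw [im_mul_abs k (sub_nonneg.2 ht.2)] at this
      gcongr)
    (fun t ht => hy t ⟨ht.1, ht.2.trans hx0.2⟩)
  have hd := h.duhamel_sin hk h0 h1 hx0
  have hs : ‖Complex.sin (k * x0) / k‖ ≤ 1 / ‖k‖ * Real.exp (|k.im| * x0) := by
    rw [norm_div, div_eq_mul_one_div, mul_comm]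
    have := norm_sin_le_exp (k * x0)
    rw [im_mul_abs k hx0.1] at this
    gcongr
  have hn : ‖y x0‖ ≤ (1 / ‖k‖ + 1 / ‖k‖ * m * M) * Real.exp (|k.im| * x0) := by
    rw [hd]
    refine (norm_add_le _ _).trans ?_
    calc _ ≤ _ := add_le_add hs hker
      _ = _ := by ring
  have hm2 : m ≤ 1 / ‖k‖ + 1 / ‖k‖ * m * M := by
    calc m = Real.exp (-(|k.im| * x0)) * ‖y x0‖ := hmd
      _ ≤ Real.exp (-(|k.im| * x0)) *
          ((1 / ‖k‖ + 1 / ‖k‖ * m * M) * Real.exp (|k.im| * x0)) := by gcongr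
      _ = (1 / ‖k‖ + 1 / ‖k‖ * m * M) *
          (Real.exp (-(|k.im| * x0)) * Real.exp (|k.im| * x0)) := by ring
      _ = _ := by rw [← Real.exp_add]; simp
  have hm3 : 1 / ‖k‖ * m * M ≤ m / 2 := by
    have : 1 / ‖k‖ * m * M = m * (M / ‖k‖) := by ring
    rw [this]
    have : M / ‖k‖ ≤ 1 / 2 := by
      rw [div_le_iff₀ hk']; linarith
    nlinarith
  have hm4 : m ≤ 2 / ‖k‖ := by
    have : 2 / ‖k‖ = 2 * (1 / ‖k‖) := by ring
    linarith
  refine (hy x hx).trans ?_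
  gcongr

lemma Sol.asymp {q : ℝ → ℂ} (hq : IntervalIntegrable q volume 0 Real.pi) {k : ℂ} (hk : k ≠ 0)
    (hM : 2 * (∫ t in (0:ℝ)..Real.pi, ‖q t‖) ≤ ‖k‖)
    {y y' : ℝ → ℂ} (h : Sol q (k^2) y y') (h0 : y 0 = 0) (h1 : y' 0 = 1) :
    ‖y Real.pi - Complex.sin (k * Real.pi) / k‖ ≤
      2 * (∫ t in (0:ℝ)..Real.pi, ‖q t‖) / ‖k‖^2 * Real.exp (|k.im| * Real.pi) := by
  have hx0 : Real.pi ∈ Icc 0 Real.pi := right_mem_Icc.2 Real.pi_pos.le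
  rw [h.duhamel_sin hk h0 h1 hx0, add_sub_cancel_left]
  refine (ker_int_bound hq (τ := |k.im|) (C := 1 / ‖k‖) (m := 2 / ‖k‖) hx0 (by positivity)
    (by positivity)
    (fun t ht => by
      rw [norm_div, div_eq_mul_one_div, mul_comm]
      have := norm_sin_le_exp (k * ((Real.pi - t : ℝ) : ℂ))
      rw [im_mul_abs k (sub_nonneg.2 ht.2)] at this
      gcongr)
    (fun t ht => h.bound hq hk hM h0 h1 ht)).trans (le_of_eq ?_)
  ring

lemma Sol.asymp' {q : ℝ → ℂ} (hq : IntervalIntegrable q volume 0 Real.pi) {k : ℂ} (hk : k ≠ 0)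
    (hM : 2 * (∫ t in (0:ℝ)..Real.pi, ‖q t‖) ≤ ‖k‖)
    {y y' : ℝ → ℂ} (h : Sol q (k^2) y y') (h0 : y 0 = 0) (h1 : y' 0 = 1) :
    ‖y' Real.pi - Complex.cos (k * Real.pi)‖ ≤
      2 * (∫ t in (0:ℝ)..Real.pi, ‖q t‖) / ‖k‖ * Real.exp (|k.im| * Real.pi) := by
  have hx0 : Real.pi ∈ Icc 0 Real.pi := right_mem_Icc.2 Real.pi_pos.le
  rw [h.duhamel_cos h0 h1 hx0, add_sub_cancel_left]
  refine (ker_int_bound hq (τ := |k.im|) (C := 1) (m := 2 / ‖k‖) hx0 (by positivity)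
    (by positivity)
    (fun t ht => by
      have := norm_cos_le_exp (k * ((Real.pi - t : ℝ) : ℂ))
      rw [im_mul_abs k (sub_nonneg.2 ht.2)] at this
      simpa using this)
    (fun t ht => h.bound hq hk hM h0 h1 ht)).trans (le_of_eq ?_)
  ring

/-! ## Division and contour lemma -/

lemma exists_quot {N D : ℂ → ℂ} (hN : Differentiable ℂ N) (hD : Differentiable ℂ D)
    (hs : ∀ z, D z = 0 → deriv D z ≠ 0) (h0 : ∀ z, D z = 0 → N z = 0) :
    ∃ Q : ℂ → ℂ, Differentiable ℂ Q ∧ ∀ z, N z = Q z * D z := by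
  classical
  refine ⟨fun z => if D z = 0 then deriv N z / deriv D z else N z / D z, ?_, ?_⟩
  · intro z
    by_cases hz : D z = 0
    · have dN : Differentiable ℂ (dslope N z) := differentiableOn_univ.1
        ((Complex.differentiableOn_dslope Filter.univ_mem).2 hN.differentiableOn)
      have dD : Differentiable ℂ (dslope D z) := differentiableOn_univ.1
        ((Complex.differentiableOn_dslope Filter.univ_mem).2 hD.differentiableOn)
      have hne : dslope D z z ≠ 0 := by rw [dslope_same]; exact hs z hz
      have hdd : DifferentiableAt ℂ (fun w => dslope N z w / dslope D z w) z :=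
        (dN z).div (dD z) hne
      apply hdd.congr_of_eventuallyEq
      filter_upwards [(dD z).continuousAt.eventually_ne hne] with w hw
      by_cases hwz : w = z
      · subst hwz; simp [hz, dslope_same]
      · have e1 : D w = (w - z) * dslope D z w := by
          have := sub_smul_dslope D z w
          simp [hz] at this; exact this.symm
        have e2 : N w = (w - z) * dslope N z w := by
          have := sub_smul_dslope N z w
          simp [h0 z hz] at this; exact this.symm
        have h3 : w - z ≠ 0 := sub_ne_zero.2 hwz
        have h4 : D w ≠ 0 := by rw [e1]; exact mul_ne_zero h3 hw
        rw [if_neg h4, e1, e2, mul_div_mul_left _ _ h3]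
    · have hdd : DifferentiableAt ℂ (fun w => N w / D w) z := (hN z).div (hD z) hz
      apply hdd.congr_of_eventuallyEq
      filter_upwards [(hD z).continuousAt.eventually_ne hz] with w hw
      rw [if_neg hw]
  · intro z
    by_cases hz : D z = 0
    · simp [hz, h0 z hz]
    · simp [hz]

def GoodK (k : ℂ) : Prop :=
  Real.exp (|k.im| * Real.pi) / 4 ≤ ‖Complex.sin (k * Real.pi)‖ ∧
  Real.exp (|k.im| * Real.pi) / 4 ≤ ‖Complex.cos (k * Real.pi)‖

lemma norm_sq_sin (w : ℂ) : ‖Complex.sin w‖^2 = Real.sin w.re ^ 2 + Real.sinh w.im ^ 2 := by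
  have h : Complex.sin w = ((Real.sin w.re * Real.cosh w.im : ℝ) : ℂ) +
      ((Real.cos w.re * Real.sinh w.im : ℝ) : ℂ) * I := by
    rw [Complex.sin_eq]; push_cast; ring
  rw [← Complex.normSq_eq_norm_sq, h, Complex.normSq_add_mul_I]
  have h1 := Real.cosh_sq w.im
  have h2 := Real.sin_sq_add_cos_sq w.re
  rw [mul_pow, mul_pow, h1]
  linear_combination (Real.sinh w.im ^ 2) * h2

lemma norm_sq_cos (w : ℂ) : ‖Complex.cos w‖^2 = Real.cos w.re ^ 2 + Real.sinh w.im ^ 2 := by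
  have h : Complex.cos w = ((Real.cos w.re * Real.cosh w.im : ℝ) : ℂ) +
      ((-(Real.sin w.re * Real.sinh w.im) : ℝ) : ℂ) * I := by
    rw [Complex.cos_eq]; push_cast; ring
  rw [← Complex.normSq_eq_norm_sq, h, Complex.normSq_add_mul_I]
  have h1 := Real.cosh_sq w.im
  have h2 := Real.sin_sq_add_cos_sq w.re
  rw [neg_sq, mul_pow, mul_pow, h1]
  linear_combination (Real.sinh w.im ^ 2) * h2

lemma sinh_sq_abs (b : ℝ) :
    Real.sinh b ^ 2 = (Real.exp |b| ^ 2 - 2 + Real.exp (-|b|) ^ 2) / 4 := by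
  have h1 : Real.sinh b ^ 2 = Real.sinh |b| ^ 2 := by
    rcases abs_choice b with h | h <;> rw [h]
    rw [Real.sinh_neg, neg_sq]
  have h2 : Real.exp |b| * Real.exp (-|b|) = 1 := by rw [← Real.exp_add]; simp
  rw [h1, Real.sinh_eq]
  linear_combination (-1/2) * h2

lemma good_aux {u v b : ℝ} (hv : 0 ≤ v) (h : v ^ 2 = u + Real.sinh b ^ 2)
    (hu : u = 1 / 2 ∨ (0 ≤ u ∧ 1 ≤ |b|)) : Real.exp |b| / 4 ≤ v := by
  rw [sinh_sq_abs] at h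
  refine le_of_sq_le_sq ?_ hv
  rw [h]
  have p1 : 0 < Real.exp (-|b|) := Real.exp_pos _
  have p2 : 0 < Real.exp |b| := Real.exp_pos _
  rcases hu with hu | ⟨hu, hb⟩
  · rw [hu]; nlinarith
  · have : 2 ≤ Real.exp |b| := by
      have := Real.add_one_le_exp |b|
      linarith
    nlinarith

lemma good_frontier {n : ℕ} (hn : 1 ≤ n) {k : ℂ}
    (hk : |k.re| = n + 1 / 4 ∨ |k.im| = n) : GoodK k := by
  have hb : |(k * (Real.pi : ℂ)).im| = |k.im| * Real.pi := im_mul_abs k Real.pi_pos.le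
  have hre : (k * (Real.pi : ℂ)).re = k.re * Real.pi := by simp
  have hn' : (1:ℝ) ≤ n := by exact_mod_cast hn
  have hpi := Real.pi_gt_three
  have key : (Real.cos (k.re * Real.pi) ^ 2 = 1 / 2 ∧ Real.sin (k.re * Real.pi) ^ 2 = 1/2) ∨
      1 ≤ |(k * (Real.pi : ℂ)).im| := by
    rcases hk with hk | hk
    · left
      have hc : Real.cos (2 * (k.re * Real.pi)) = 0 := by
        have : Real.cos (2 * (|k.re| * Real.pi)) = 0 := by
          rw [hk, show 2 * (((n:ℝ) + 1 / 4) * Real.pi) = Real.pi / 2 + n * (2 * Real.pi) by ring,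
            Real.cos_add_nat_mul_two_pi, Real.cos_pi_div_two]
        rw [← Real.cos_abs] at this ⊢
        rw [abs_mul, abs_mul, abs_abs] at this
        rw [abs_mul, abs_mul]; exact this
      have h1 := Real.cos_sq (k.re * Real.pi)
      have h2 := Real.sin_sq_add_cos_sq (k.re * Real.pi)
      rw [hc] at h1
      constructor <;> linarith
    · right
      rw [hb, hk]; nlinarith
  constructor
  · rw [← hb]
    apply good_aux (norm_nonneg _) (norm_sq_sin _)
    rw [hre]
    rcases key with key | key
    · exact Or.inl key.2
    · exact Or.inr ⟨sq_nonneg _, key⟩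
  · rw [← hb]
    apply good_aux (norm_nonneg _) (norm_sq_cos _)
    rw [hre]
    rcases key with key | key
    · exact Or.inl key.1
    · exact Or.inr ⟨sq_nonneg _, key⟩

lemma contour_zero {G : ℂ → ℂ} (hG : Differentiable ℂ G) {A K0 : ℝ}
    (hb : ∀ k, GoodK k → K0 ≤ ‖k‖ → ‖G k‖ ≤ A / ‖k‖) (k : ℂ) : G k = 0 := by
  have hA : ∀ n : ℕ, max 1 (max K0 (‖k‖)) + 1 ≤ n → ‖G k‖ ≤ |A| / n := by
    intro n hn
    have hn1 : (1:ℝ) < n := by linarith [le_max_left 1 (max K0 ‖k‖)]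
    have hnK : K0 ≤ n := by
      linarith [(le_max_left K0 ‖k‖).trans (le_max_right 1 (max K0 ‖k‖))]
    have hnk : ‖k‖ < n := by
      linarith [(le_max_right K0 ‖k‖).trans (le_max_right 1 (max K0 ‖k‖))]
    have hn1' : 1 ≤ n := by exact_mod_cast hn1.le
    set U : Set ℂ := Ioo (-((n:ℝ) + 1/4)) ((n:ℝ) + 1/4) ×ℂ Ioo (-(n:ℝ)) n with hU
    have hbd : Bornology.IsBounded U := (Metric.isBounded_Ioo _ _).reProdIm (Metric.isBounded_Ioo _ _)
    have hkU : k ∈ closure U := by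
      apply subset_closure
      have h1 := abs_lt.1 ((Complex.abs_re_le_norm k).trans_lt hnk)
      have h2 := abs_lt.1 ((Complex.abs_im_le_norm k).trans_lt hnk)
      exact ⟨⟨by linarith [h1.1], by linarith [h1.2]⟩, ⟨h2.1, h2.2⟩⟩
    refine Complex.norm_le_of_forall_mem_frontier_norm_le hbd hG.diffContOnCl ?_ hkU
    intro z hz
    have hz' : |z.re| = n + 1 / 4 ∨ |z.im| = n := by
      rw [hU, Complex.frontier_reProdIm, frontier_Ioo (by linarith), frontier_Ioo (by linarith)] at hz
      rcases hz with hz | hz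
      · right
        rcases hz.2 with h | h
        · rw [h, abs_neg, abs_of_nonneg (by positivity)]
        · rw [h, abs_of_nonneg (by positivity)]
      · left
        rcases hz.1 with h | h
        · rw [h, abs_neg, abs_of_nonneg (by positivity)]
        · rw [h, abs_of_nonneg (by positivity)]
    have hzn : (n:ℝ) ≤ ‖z‖ := by
      rcases hz' with h | h
      · linarith [Complex.abs_re_le_norm z]
      · linarith [Complex.abs_im_le_norm z]
    refine (hb z (good_frontier hn1' hz') (hnK.trans hzn)).trans ?_
    calc A / ‖z‖ ≤ |A| / ‖z‖ := by gcongr; exact le_abs_self A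
      _ ≤ |A| / n := by gcongr
  have hlim : Filter.Tendsto (fun n : ℕ => |A| / (n:ℝ)) Filter.atTop (nhds 0) :=
    tendsto_const_div_atTop_nhds_zero_nat _
  have : ‖G k‖ ≤ 0 := by
    apply ge_of_tendsto hlim
    obtain ⟨m, hm⟩ := exists_nat_ge (max 1 (max K0 (‖k‖)) + 1)
    filter_upwards [Filter.eventually_ge_atTop m] with n hn
    exact hA n (hm.trans (by exact_mod_cast hn))
  simpa using this

lemma lemmaZ {N D : ℂ → ℂ} (hN : Differentiable ℂ N) (hD : Differentiable ℂ D)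
    (hs : ∀ z, D z = 0 → deriv D z ≠ 0) (h0 : ∀ z, D z = 0 → N z = 0) {A K0 : ℝ}
    (hb : ∀ k, GoodK k → K0 ≤ ‖k‖ → D (k^2) ≠ 0 ∧ ‖N (k^2)‖ ≤ A / ‖k‖ * ‖D (k^2)‖) (z : ℂ) :
    N z = 0 := by
  obtain ⟨Q, hQ, hQD⟩ := exists_quot hN hD hs h0
  obtain ⟨k, hk⟩ := IsAlgClosed.exists_pow_nat_eq z (n := 2) (by norm_num)
  have := contour_zero (G := fun k => Q (k^2)) (hQ.comp (by fun_prop)) (A := A) (K0 := K0)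
    (fun k hg hK => by
      obtain ⟨h1, h2⟩ := hb k hg hK
      rw [hQD, norm_mul] at h2
      exact le_of_mul_le_mul_right h2 (norm_pos_iff.2 h1)) k
  simp only [hk] at this
  rw [hQD, this, zero_mul]

/-! ## Conclusion -/

lemma Sol.add {q : ℝ → ℂ} {lam : ℂ} {y y' z z' : ℝ → ℂ} (h : Sol q lam y y') (h2 : Sol q lam z z') :
    Sol q lam (fun x => y x + z x) (fun x => y' x + z' x) :=
  ⟨h.1.add h2.1, (h.2.add h2.2).congr_deriv (fun x _ => by ring)⟩

lemma hasDerivAt_eq_of_eqOn {f g : ℝ → ℂ} {a b : ℂ} {x : ℝ} (hx : x ∈ Ioo 0 Real.pi)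
    (h : ∀ t ∈ Ioo 0 Real.pi, f t = g t) (hf : HasDerivAt f a x) (hg : HasDerivAt g b x) :
    a = b := by
  have : HasDerivAt f b x := hg.congr_of_eventuallyEq (by
    filter_upwards [Ioo_mem_nhds hx.1 hx.2] with t ht using h t ht)
  exact hf.unique this

lemma pot_eq_of_sq_eq {q qt : ℝ → ℂ} {lam : ℂ} {y y' z z' : ℝ → ℂ} (hy : Sol q lam y y')
    (hz : Sol qt lam z z') (hsq : ∀ x ∈ Ioo 0 Real.pi, y x * y x = z x * z x)
    (hne : ∀ x ∈ Ioo 0 Real.pi, y x ≠ 0) :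
    ∀ᵐ x : ℝ, x ∈ Ioo 0 Real.pi → q x = qt x := by
  have dy : ∀ x ∈ Ioo 0 Real.pi, HasDerivAt y (y' x) x :=
    fun x hx => hy.1.hasDerivAt hy.2.continuousOn hx
  have dz : ∀ x ∈ Ioo 0 Real.pi, HasDerivAt z (z' x) x :=
    fun x hx => hz.1.hasDerivAt hz.2.continuousOn hx
  have h1 : ∀ x ∈ Ioo 0 Real.pi, y x * y' x = z x * z' x := by
    intro x hx
    have := hasDerivAt_eq_of_eqOn hx hsq ((dy x hx).mul (dy x hx)) ((dz x hx).mul (dz x hx))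
    linear_combination this / 2
  filter_upwards [hy.2.ae_hasDerivAt, hz.2.ae_hasDerivAt] with x hx1 hx2 hx
  have h2 := hasDerivAt_eq_of_eqOn hx h1 ((dy x hx).mul (hx1 hx)) ((dz x hx).mul (hx2 hx))
  have e1 := h1 x hx
  have e0 := hsq x hx
  have hy0 : y x * y x ≠ 0 := mul_ne_zero (hne x hx) (hne x hx)
  have e2 : y' x * y' x = z' x * z' x := by
    apply mul_left_cancel₀ hy0
    linear_combination (y x * y' x + z x * z' x) * e1 - (z' x * z' x) * e0
  apply mul_left_cancel₀ hy0
  linear_combination h2 - e2 + (lam - qt x) * e0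

lemma sin_lower {q : ℝ → ℂ} (hq : IntervalIntegrable q volume 0 Real.pi) {k : ℂ} (hk : 1 ≤ ‖k‖)
    (hM : 16 * (∫ t in (0:ℝ)..Real.pi, ‖q t‖) ≤ ‖k‖) (hg : GoodK k)
    {y y' : ℝ → ℂ} (h : Sol q (k^2) y y') (h0 : y 0 = 0) (h1 : y' 0 = 1) :
    Real.exp (|k.im| * Real.pi) / (8 * ‖k‖) ≤ ‖y Real.pi‖ ∧
    Real.exp (|k.im| * Real.pi) / 8 ≤ ‖y' Real.pi‖ := by
  have hk0 : k ≠ 0 := by rintro rfl; simp at hk; linarith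
  have hkp : 0 < ‖k‖ := by linarith
  have hM0 : 0 ≤ ∫ t in (0:ℝ)..Real.pi, ‖q t‖ :=
    intervalIntegral.integral_nonneg Real.pi_pos.le fun t _ => norm_nonneg _
  have a1 := h.asymp hq hk0 (by linarith) h0 h1
  have a2 := h.asymp' hq hk0 (by linarith) h0 h1
  set M := ∫ t in (0:ℝ)..Real.pi, ‖q t‖
  set E := Real.exp (|k.im| * Real.pi) with hE
  have hEp : 0 < E := Real.exp_pos _
  have hMk : 2 * M / ‖k‖ ≤ 1 / 8 := by rw [div_le_iff₀ hkp]; linarith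
  constructor
  · have b1 : E / 4 / ‖k‖ ≤ ‖Complex.sin (k * Real.pi) / k‖ := by
      rw [norm_div]; gcongr; exact hg.1
    have b2 := norm_sub_norm_le (Complex.sin (k * Real.pi) / k) (y Real.pi)
    rw [norm_sub_rev] at b2
    have b3 : 2 * M / ‖k‖ ^ 2 * E ≤ 1 / 8 / ‖k‖ * E := by
      have : 2 * M / ‖k‖ ^ 2 = 2 * M / ‖k‖ / ‖k‖ := by rw [div_div, sq]
      rw [this]; gcongr
    have e : E / (8 * ‖k‖) = E / 4 / ‖k‖ - 1 / 8 / ‖k‖ * E := by field_simp; norm_num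
    linarith
  · have b2 := norm_sub_norm_le (Complex.cos (k * Real.pi)) (y' Real.pi)
    rw [norm_sub_rev] at b2
    have b3 : 2 * M / ‖k‖ * E ≤ 1 / 8 * E := by gcongr
    linarith [hg.2]

lemma char_eq {q qt : ℝ → ℝ} (hq : IntervalIntegrable (fun t => (q t : ℂ)) volume 0 Real.pi)
    (hqt : IntervalIntegrable (fun t => (qt t : ℂ)) volume 0 Real.pi)
    {S S' St St' : ℂ → ℝ → ℂ} (h : Fam (fun t => (q t : ℂ)) S S')
    (ht : Fam (fun t => (qt t : ℂ)) St St')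
    (h0 : ∀ l, S l Real.pi = 0 → St l Real.pi = 0)
    (h0' : ∀ l, S' l Real.pi = 0 → St' l Real.pi = 0) (l : ℂ) :
    S l Real.pi = St l Real.pi ∧ S' l Real.pi = St' l Real.pi := by
  have hpi : Real.pi ∈ Icc 0 Real.pi := right_mem_Icc.2 Real.pi_pos.le
  set M := ∫ t in (0:ℝ)..Real.pi, ‖(q t : ℂ)‖ with hMd
  set Mt := ∫ t in (0:ℝ)..Real.pi, ‖(qt t : ℂ)‖ with hMtd
  have hM0 : 0 ≤ M := intervalIntegral.integral_nonneg Real.pi_pos.le fun t _ => norm_nonneg _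
  have hMt0 : 0 ≤ Mt := intervalIntegral.integral_nonneg Real.pi_pos.le fun t _ => norm_nonneg _
  have hb : ∀ k, GoodK k → 1 + 16 * M + 16 * Mt ≤ ‖k‖ →
      (S (k^2) Real.pi ≠ 0 ∧ ‖S (k^2) Real.pi - St (k^2) Real.pi‖ ≤
        16 * (M + Mt) / ‖k‖ * ‖S (k^2) Real.pi‖) ∧
      (S' (k^2) Real.pi ≠ 0 ∧ ‖S' (k^2) Real.pi - St' (k^2) Real.pi‖ ≤
        16 * (M + Mt) / ‖k‖ * ‖S' (k^2) Real.pi‖) := by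
    intro k hg hK
    have hkp : 0 < ‖k‖ := by linarith
    have hk0 : k ≠ 0 := norm_pos_iff.1 hkp
    obtain ⟨l1, l2⟩ := sin_lower hq (k := k) (by linarith) (by linarith) hg (h _).1 (h _).2.1 (h _).2.2
    have a1 := (h (k^2)).1.asymp hq hk0 (by linarith) (h _).2.1 (h _).2.2
    have a2 := (h (k^2)).1.asymp' hq hk0 (by linarith) (h _).2.1 (h _).2.2
    have b1 := (ht (k^2)).1.asymp hqt hk0 (by linarith) (ht _).2.1 (ht _).2.2
    have b2 := (ht (k^2)).1.asymp' hqt hk0 (by linarith) (ht _).2.1 (ht _).2.2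
    rw [← hMd] at a1 a2
    rw [← hMtd] at b1 b2
    set E := Real.exp (|k.im| * Real.pi) with hE
    have hEp : 0 < E := Real.exp_pos _
    refine ⟨⟨?_, ?_⟩, ⟨?_, ?_⟩⟩
    · apply norm_pos_iff.1
      exact lt_of_lt_of_le (by positivity) l1
    · have := norm_sub_le (S (k^2) Real.pi - Complex.sin (k * Real.pi) / k)
        (St (k^2) Real.pi - Complex.sin (k * Real.pi) / k)
      rw [sub_sub_sub_cancel_right] at this
      calc _ ≤ 2 * M / ‖k‖ ^ 2 * E + 2 * Mt / ‖k‖ ^ 2 * E := this.trans (add_le_add a1 b1)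
        _ = 16 * (M + Mt) / ‖k‖ * (E / (8 * ‖k‖)) := by field_simp; ring
        _ ≤ _ := by gcongr
    · apply norm_pos_iff.1
      exact lt_of_lt_of_le (by positivity) l2
    · have := norm_sub_le (S' (k^2) Real.pi - Complex.cos (k * Real.pi))
        (St' (k^2) Real.pi - Complex.cos (k * Real.pi))
      rw [sub_sub_sub_cancel_right] at this
      calc _ ≤ 2 * M / ‖k‖ * E + 2 * Mt / ‖k‖ * E := this.trans (add_le_add a2 b2)
        _ = 16 * (M + Mt) / ‖k‖ * (E / 8) := by field_simp; ring
        _ ≤ _ := by gcongr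
  constructor
  · exact sub_eq_zero.1 (lemmaZ (N := fun l => S l Real.pi - St l Real.pi)
      (D := fun l => S l Real.pi) ((h.diff hq hpi).sub (ht.diff hqt hpi)) (h.diff hq hpi)
      (fun z hz => h.simple hq z hz) (fun z hz => by
        have hz' : S z Real.pi = 0 := hz
        simp only [hz', h0 z hz', sub_zero]) (fun k hg hK => (hb k hg hK).1) l)
  · exact sub_eq_zero.1 (lemmaZ (N := fun l => S' l Real.pi - St' l Real.pi)
      (D := fun l => S' l Real.pi) ((h.diff' hq).sub (ht.diff' hqt)) (h.diff' hq)
      (fun z hz => h.simple' hq z hz) (fun z hz => by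
        have hz' : S' z Real.pi = 0 := hz
        simp only [hz', h0' z hz', sub_zero]) (fun k hg hK => (hb k hg hK).2) l)

lemma ii_reflect {f : ℝ → ℂ} (hf : IntervalIntegrable f volume 0 Real.pi) :
    IntervalIntegrable (fun t => f (Real.pi - t)) volume 0 Real.pi := by
  have := (hf.comp_sub_left Real.pi).symm
  simpa only [sub_self, sub_zero] using this

lemma Fam.exists {q : ℝ → ℂ} (hq : IntervalIntegrable q volume 0 Real.pi) :
    ∃ R R' : ℂ → ℝ → ℂ, Fam q R R' := by
  choose R R' h using fun lam => Sol.exists hq lam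
  exact ⟨R, R', h⟩

lemma reflect_multiple {q : ℝ → ℂ} (hq : IntervalIntegrable q volume 0 Real.pi) {l : ℂ}
    {y y' r r' : ℝ → ℂ} (hy : Sol q l y y') (hyp : y Real.pi = 0)
    (hr : Sol (fun t => q (Real.pi - t)) l r r') (hr0 : r 0 = 0) (hr1 : r' 0 = 1) {x : ℝ}
    (hx : x ∈ Icc 0 Real.pi) : y (Real.pi - x) = - y' Real.pi * r x := by
  have hs := hy.reflect.add (hr.const_mul (1 + y' Real.pi))
  have := Sol.unique (ii_reflect hq) hs (by simp [hyp, hr0]) (by simp [hr1]) hr hr0 hr1 x hx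
  linear_combination this

lemma cross_zero {q qt : ℝ → ℝ} (hq : IntervalIntegrable (fun t => (q t : ℂ)) volume 0 Real.pi)
    (hqt : IntervalIntegrable (fun t => (qt t : ℂ)) volume 0 Real.pi)
    {S S' St St' R R' Rt Rt' : ℂ → ℝ → ℂ} (h : Fam (fun t => (q t : ℂ)) S S')
    (ht : Fam (fun t => (qt t : ℂ)) St St')
    (hR : Fam (fun t => (q (Real.pi - t) : ℂ)) R R')
    (hRt : Fam (fun t => (qt (Real.pi - t) : ℂ)) Rt Rt')
    (he : ∀ l, S l Real.pi = St l Real.pi ∧ S' l Real.pi = St' l Real.pi) {x : ℝ}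
    (hx : x ∈ Icc 0 Real.pi) (l : ℂ) :
    Rt l x * S l (Real.pi - x) - R l x * St l (Real.pi - x) = 0 := by
  have hpi : Real.pi ∈ Icc 0 Real.pi := right_mem_Icc.2 Real.pi_pos.le
  have hx' : Real.pi - x ∈ Icc 0 Real.pi := ⟨by linarith [hx.2], by linarith [hx.1]⟩
  have hqr := ii_reflect hq
  have hqtr := ii_reflect hqt
  have iM : ∫ t in (0:ℝ)..Real.pi, ‖(q (Real.pi - t) : ℂ)‖ = ∫ t in (0:ℝ)..Real.pi, ‖(q t : ℂ)‖ := by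
    rw [intervalIntegral.integral_comp_sub_left (fun t => ‖(q t : ℂ)‖)]; simp
  have iMt : ∫ t in (0:ℝ)..Real.pi, ‖(qt (Real.pi - t) : ℂ)‖ =
      ∫ t in (0:ℝ)..Real.pi, ‖(qt t : ℂ)‖ := by
    rw [intervalIntegral.integral_comp_sub_left (fun t => ‖(qt t : ℂ)‖)]; simp
  set M := ∫ t in (0:ℝ)..Real.pi, ‖(q t : ℂ)‖ with hMd
  set Mt := ∫ t in (0:ℝ)..Real.pi, ‖(qt t : ℂ)‖ with hMtd
  have hM0 : 0 ≤ M := intervalIntegral.integral_nonneg Real.pi_pos.le fun t _ => norm_nonneg _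
  have hMt0 : 0 ≤ Mt := intervalIntegral.integral_nonneg Real.pi_pos.le fun t _ => norm_nonneg _
  refine lemmaZ (N := fun l => Rt l x * S l (Real.pi - x) - R l x * St l (Real.pi - x))
    (D := fun l => S l Real.pi)
    (((hRt.diff hqtr hx).mul (h.diff hq hx')).sub ((hR.diff hqr hx).mul (ht.diff hqt hx')))
    (h.diff hq hpi) (fun z hz => h.simple hq z hz) ?_ (A := 64) (K0 := 1 + 16 * M + 16 * Mt) ?_ l
  · intro z hz
    have hz' : S z Real.pi = 0 := hz
    have hzt : St z Real.pi = 0 := by rw [← (he z).1]; exact hz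
    have e1 := reflect_multiple hq (h z).1 hz' (hR z).1 (hR z).2.1 (hR z).2.2 hx
    have e2 := reflect_multiple hqt (ht z).1 hzt (hRt z).1 (hRt z).2.1 (hRt z).2.2 hx
    simp only [e1, e2, (he z).2]
    ring
  · intro k hg hK
    have hkp : 0 < ‖k‖ := by linarith
    have hk0 : k ≠ 0 := norm_pos_iff.1 hkp
    obtain ⟨l1, -⟩ := sin_lower hq (k := k) (by linarith) (by linarith) hg (h _).1 (h _).2.1 (h _).2.2
    have a1 := (h (k^2)).1.bound hq hk0 (by linarith) (h _).2.1 (h _).2.2 hx'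
    have a2 := (ht (k^2)).1.bound hqt hk0 (by linarith) (ht _).2.1 (ht _).2.2 hx'
    have a3 := (hR (k^2)).1.bound hqr hk0 (by rw [iM]; linarith) (hR _).2.1 (hR _).2.2 hx
    have a4 := (hRt (k^2)).1.bound hqtr hk0 (by rw [iMt]; linarith) (hRt _).2.1 (hRt _).2.2 hx
    have eE : Real.exp (|k.im| * Real.pi) =
        Real.exp (|k.im| * x) * Real.exp (|k.im| * (Real.pi - x)) := by
      rw [← Real.exp_add]; congr 1; ring
    refine ⟨norm_pos_iff.1 (lt_of_lt_of_le (by positivity) l1), ?_⟩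
    refine (norm_sub_le _ _).trans ?_
    rw [norm_mul, norm_mul]
    calc _ ≤ (2 / ‖k‖ * Real.exp (|k.im| * x)) * (2 / ‖k‖ * Real.exp (|k.im| * (Real.pi - x))) +
          (2 / ‖k‖ * Real.exp (|k.im| * x)) * (2 / ‖k‖ * Real.exp (|k.im| * (Real.pi - x))) := by
          gcongr
      _ = 64 / ‖k‖ * (Real.exp (|k.im| * Real.pi) / (8 * ‖k‖)) := by
          rw [eE]; field_simp; ring
      _ ≤ _ := by gcongr

lemma wronskian_reflect {q : ℝ → ℂ} {l : ℂ}
    {y y' r r' : ℝ → ℂ} (hy : Sol q l y y')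
    (hr : Sol (fun t => q (Real.pi - t)) l r r') (hr0 : r 0 = 0) (hr1 : r' 0 = 1) {x : ℝ}
    (hx : x ∈ Icc 0 Real.pi) :
    y (Real.pi - x) * r' x + y' (Real.pi - x) * r x = y Real.pi := by
  have := (hy.reflect.lagrange hr).2 x hx
  simp [hr0, hr1] at this
  exact this

lemma final_thm {q qt : ℝ → ℝ} (hq : IntervalIntegrable (fun t => (q t : ℂ)) volume 0 Real.pi)
    (hqt : IntervalIntegrable (fun t => (qt t : ℂ)) volume 0 Real.pi)
    {S S' St St' : ℂ → ℝ → ℂ} (h : Fam (fun t => (q t : ℂ)) S S')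
    (ht : Fam (fun t => (qt t : ℂ)) St St')
    (h0 : ∀ l, S l Real.pi = 0 → St l Real.pi = 0)
    (h0' : ∀ l, S' l Real.pi = 0 → St' l Real.pi = 0) :
    ∀ᵐ x : ℝ, x ∈ Ioo 0 Real.pi → (q x : ℂ) = qt x := by
  have he := char_eq hq hqt h ht h0 h0'
  obtain ⟨R, R', hR⟩ := Fam.exists (ii_reflect hq)
  obtain ⟨Rt, Rt', hRt⟩ := Fam.exists (ii_reflect hqt)
  have hnr : (starRingEnd ℂ) I ≠ I := by
    rw [Complex.conj_I]; intro hc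
    have := congrArg Complex.im hc
    simp at this; linarith
  have hne : ∀ x ∈ Ioc 0 Real.pi, S I x ≠ 0 := fun x hx hc =>
    hnr (h.real_zero hq I hx (Or.inl hc))
  have hw : S I Real.pi ≠ 0 := hne _ (right_mem_Ioc.2 Real.pi_pos)
  have hP := (h I).1.reflect
  have hPt := (ht I).1.reflect
  have hH : ∀ x ∈ Ioo 0 Real.pi, Rt I x * S I (Real.pi - x) = R I x * St I (Real.pi - x) :=
    fun x hx => sub_eq_zero.1 (cross_zero hq hqt h ht hR hRt he (Ioo_subset_Icc_self hx) I)
  have hsq : ∀ x ∈ Ioo 0 Real.pi, S I (Real.pi - x) * S I (Real.pi - x) =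
      St I (Real.pi - x) * St I (Real.pi - x) := by
    intro x hx
    have hx' := Ioo_subset_Icc_self hx
    have w1 := wronskian_reflect (h I).1 (hR I).1 (hR I).2.1 (hR I).2.2 hx'
    have w2 := wronskian_reflect (ht I).1 (hRt I).1 (hRt I).2.1 (hRt I).2.2 hx'
    rw [← (he I).1] at w2
    have d1 := hP.1.hasDerivAt hP.2.continuousOn hx
    have d2 := hPt.1.hasDerivAt hPt.2.continuousOn hx
    have d3 := (hR I).1.1.hasDerivAt (hR I).1.2.continuousOn hx
    have d4 := (hRt I).1.1.hasDerivAt (hRt I).1.2.continuousOn hx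
    have hd := hasDerivAt_eq_of_eqOn hx hH (d4.mul d1) (d3.mul d2)
    have hh := hH x hx
    apply mul_left_cancel₀ hw
    generalize S I (Real.pi - x) = P at *
    generalize St I (Real.pi - x) = Pt at *
    generalize S' I (Real.pi - x) = P' at *
    generalize St' I (Real.pi - x) = Pt' at *
    generalize S I Real.pi = w at *
    linear_combination (P * Pt) * hd - (P * P) * w2 + (Pt * Pt) * w1 +
      (P * Pt' + Pt * P') * hh
  refine pot_eq_of_sq_eq (h I).1 (ht I).1 ?_ (fun x hx => hne x (Ioo_subset_Ioc_self hx))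
  intro x hx
  have := hsq (Real.pi - x) ⟨by linarith [hx.2], by linarith [hx.1]⟩
  rwa [sub_sub_cancel] at this

/-- classical two-spectra uniqueness on `(0,π)`: if the zeros of
`S(π,·)` (Dirichlet–Dirichlet eigenvalues) and of `S'(π,·)`
(Dirichlet–Neumann eigenvalues) coincide for `q` and `q̃`, then `q = q̃`
almost everywhere on `(0,π)`. -/
theorem statement11
    (q qt : ℝ → ℝ)
    (hq : IntervalIntegrable (fun t => q t) volume 0 Real.pi)
    (hqt : IntervalIntegrable (fun t => qt t) volume 0 Real.pi)
    (S S' St St' : ℂ → ℝ → ℂ)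
    (hS : ∀ lam : ℂ, SLSol (fun t => (q t : ℂ)) lam (S lam) (S' lam)
      (Icc 0 Real.pi) ∧ S lam 0 = 0 ∧ S' lam 0 = 1)
    (hSt : ∀ lam : ℂ, SLSol (fun t => (qt t : ℂ)) lam (St lam) (St' lam)
      (Icc 0 Real.pi) ∧ St lam 0 = 0 ∧ St' lam 0 = 1)
    (hDD : {lam : ℂ | S lam Real.pi = 0} = {lam : ℂ | St lam Real.pi = 0})
    (hDN : {lam : ℂ | S' lam Real.pi = 0} = {lam : ℂ | St' lam Real.pi = 0}) :
    ∀ᵐ x : ℝ, x ∈ Ioo 0 Real.pi → q x = qt x := by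
  have cast : ∀ {f : ℝ → ℝ}, IntervalIntegrable (fun t => f t) volume 0 Real.pi →
      IntervalIntegrable (fun t => (f t : ℂ)) volume 0 Real.pi := fun hf =>
    ⟨hf.1.ofReal, hf.2.ofReal⟩
  have h0 : ∀ l, S l Real.pi = 0 → St l Real.pi = 0 := fun l hl => by
    have : l ∈ {lam : ℂ | S lam Real.pi = 0} := by simpa using hl
    rw [hDD] at this
    simpa using this
  have h0' : ∀ l, S' l Real.pi = 0 → St' l Real.pi = 0 := fun l hl => by
    have : l ∈ {lam : ℂ | S' lam Real.pi = 0} := by simpa using hl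
    rw [hDN] at this
    simpa using this
  have := final_thm (cast hq) (cast hqt) (S := S) (S' := S') (St := St) (St' := St')
    (fun lam => ⟨(hS lam).1.sol, (hS lam).2⟩) (fun lam => ⟨(hSt lam).1.sol, (hSt lam).2⟩) h0 h0'
  filter_upwards [this] with x hx hxI
  exact_mod_cast hx hxI
end
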